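/- arXiv:2007.02740 — 2 statements merged into one kernel-verified Lean document; each statement's English description precedes it below -/
import Mathlib

section
/- Monotone composition theorem: For every η > 0 there exist c ∈ ℕ and κ > 0 such that the following holds. Let f : {0,1}^m → {0,1} and g : {0,1}^n → {0,1} be non-constant monotone functions. Suppose there exist a search problem S ⊆ {0,1}^ℓ × 𝒪 and a gadget gd : {0,1}^t × {0,1}^t → {0,1} with t ≥ c·log₂(m·ℓ) and disc(gd) ≤ 2^{−η·t}, such that the lifted search problem S◇gd reduces to mKW_g. Then log₂ L(mKW_f ◇ mKW_g) ≥ log₂ L(mKW_f) + κ·Q(S)·t. -/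
open Classical

noncomputable section

/-! ### Deterministic communication protocols -/

/-- A deterministic communication protocol: a finite binary protocol tree whose
leaves are labeled by outputs in `O`.  At a `nodeA` vertex Alice sends a bit
(computed from her input), at a `nodeB` vertex Bob sends a bit. -/
inductive Protocol (X Y O : Type) : Type where
  | leaf : O → Protocol X Y O
  | nodeA : (X → Bool) → Protocol X Y O → Protocol X Y O → Protocol X Y O
  | nodeB : (Y → Bool) → Protocol X Y O → Protocol X Y O → Protocol X Y O

namespace Protocol

variable {X Y O : Type}

/-- The output of the protocol on an input pair. -/
def run : Protocol X Y O → X → Y → O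
  | leaf o, _, _ => o
  | nodeA h p0 p1, x, y => if h x then run p1 x y else run p0 x y
  | nodeB h p0 p1, x, y => if h y then run p1 x y else run p0 x y

/-- Depth (communication complexity) of a protocol tree. -/
def depth : Protocol X Y O → ℕ
  | leaf _ => 0
  | nodeA _ p0 p1 => max (depth p0) (depth p1) + 1
  | nodeB _ p0 p1 => max (depth p0) (depth p1) + 1

/-- Number of leaves (protocol size). -/
def leaves : Protocol X Y O → ℕ
  | leaf _ => 1
  | nodeA _ p0 p1 => leaves p0 + leaves p1
  | nodeB _ p0 p1 => leaves p0 + leaves p1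

/-- `followsA p π x` : Alice's input `x` is consistent with the partial transcript `π`,
i.e. `x` belongs to the Alice-side `𝒳_π` of the rectangle associated with the vertex `π`. -/
def followsA : Protocol X Y O → List Bool → X → Prop
  | _, [], _ => True
  | leaf _, _ :: _, _ => False
  | nodeA h p0 p1, b :: rest, x =>
      h x = b ∧ (if b then followsA p1 rest x else followsA p0 rest x)
  | nodeB _ p0 p1, b :: rest, x =>
      if b then followsA p1 rest x else followsA p0 rest x

/-- `followsB p π y` : Bob's input `y` is consistent with the partial transcript `π`,
i.e. `y` belongs to the Bob-side `𝒴_π` of the rectangle associated with the vertex `π`. -/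
def followsB : Protocol X Y O → List Bool → Y → Prop
  | _, [], _ => True
  | leaf _, _ :: _, _ => False
  | nodeA _ p0 p1, b :: rest, y =>
      if b then followsB p1 rest y else followsB p0 rest y
  | nodeB h p0 p1, b :: rest, y =>
      h y = b ∧ (if b then followsB p1 rest y else followsB p0 rest y)

/-- The subtree of the protocol reached by following a partial transcript. -/
def subtree : Protocol X Y O → List Bool → Option (Protocol X Y O)
  | p, [] => some p
  | leaf _, _ :: _ => none
  | nodeA _ p0 p1, b :: rest => if b then subtree p1 rest else subtree p0 rest
  | nodeB _ p0 p1, b :: rest => if b then subtree p1 rest else subtree p0 rest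

/-- `π` is a (partial or full) transcript of the protocol, i.e. a vertex of the protocol tree. -/
def IsTranscript (p : Protocol X Y O) (π : List Bool) : Prop :=
  (subtree p π).isSome = true

/-- `π` is a full transcript of the protocol, i.e. a root-to-leaf path. -/
def IsFullTranscript (p : Protocol X Y O) (π : List Bool) : Prop :=
  ∃ o : O, subtree p π = some (leaf o)

end Protocol

/-- A protocol solves a communication problem `S` if on every input pair it
outputs a valid output. -/
def Solves {X Y O : Type} (p : Protocol X Y O) (S : X → Y → O → Prop) : Prop :=
  ∀ x y, S x y (p.run x y)

/-- `L(S)`: minimal number of leaves of a protocol solving `S`. -/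
def Lsize {X Y O : Type} (S : X → Y → O → Prop) : ℕ :=
  sInf {k | ∃ p : Protocol X Y O, Solves p S ∧ p.leaves = k}

/-- `CC(S)`: the deterministic communication complexity (minimal depth) of `S`. -/
def CC {X Y O : Type} (S : X → Y → O → Prop) : ℕ :=
  sInf {k | ∃ p : Protocol X Y O, Solves p S ∧ p.depth = k}

/-! ### Decision trees and query complexity -/

inductive DTree (ι O : Type) : Type where
  | leaf : O → DTree ι O
  | node : ι → DTree ι O → DTree ι O → DTree ι O

namespace DTree

variable {ι O : Type}

def run : DTree ι O → (ι → Bool) → O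
  | leaf o, _ => o
  | node i t0 t1, z => if z i then run t1 z else run t0 z

def depth : DTree ι O → ℕ
  | leaf _ => 0
  | node _ t0 t1 => max (depth t0) (depth t1) + 1

end DTree

def DSolves {ι O : Type} (T : DTree ι O) (S : (ι → Bool) → O → Prop) : Prop :=
  ∀ z, S z (T.run z)

/-- `Q(S)`: the deterministic query complexity of the search problem `S`. -/
def Qcomplexity {ι O : Type} (S : (ι → Bool) → O → Prop) : ℕ :=
  sInf {k | ∃ T : DTree ι O, DSolves T S ∧ T.depth = k}

/-! ### Monotone Karchmer–Wigderson relations -/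

/-- The monotone KW relation of a rectangle `A × B`: find `i` with `x i > y i`. -/
def mKWrect {ι : Type} (A B : Set (ι → Bool)) : ↥A → ↥B → ι → Prop :=
  fun x y i => x.val i = true ∧ y.val i = false

/-- `mL(A × B)`: the monotone formula complexity of the rectangle `A × B`. -/
def mL {ι : Type} (A B : Set (ι → Bool)) : ℕ := Lsize (mKWrect A B)

/-- The monotone KW relation of a monotone function `f`. -/
def mKW {ι : Type} (f : (ι → Bool) → Bool) :
    {x : ι → Bool // f x = true} → {y : ι → Bool // f y = false} → ι → Prop :=
  fun x y i => x.val i = true ∧ y.val i = false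

/-! ### Lifted search problems, discrepancy, reductions -/

/-- The lifted search problem `S ◇ gd`. -/
def liftSP {ι Λ O : Type} (S : (ι → Bool) → O → Prop) (gd : Λ → Λ → Bool) :
    (ι → Λ) → (ι → Λ) → O → Prop :=
  fun x y o => S (fun i => gd (x i) (y i)) o

/-- The discrepancy of a gadget `gd : {0,1}^t × {0,1}^t → {0,1}`. -/
def disc {t : ℕ} (gd : (Fin t → Bool) → (Fin t → Bool) → Bool) : ℝ :=
  sSup {r : ℝ | ∃ A B : Finset (Fin t → Bool),
    r = |((((A ×ˢ B).filter fun uv => gd uv.1 uv.2 = false).card : ℝ) -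
          (((A ×ˢ B).filter fun uv => gd uv.1 uv.2 = true).card : ℝ))| /
        ((2 ^ t : ℝ) * (2 ^ t : ℝ))}

/-- A (rectangular) reduction between communication problems. -/
def Reduces {X Y O X' Y' O' : Type}
    (S : X → Y → O → Prop) (S' : X' → Y' → O' → Prop) : Prop :=
  ∃ (RA : X → X') (RB : Y → Y') (Rout : O' → O),
    ∀ x y o', S' (RA x) (RB y) o' → S x y (Rout o')

/-- An injective reduction between communication problems. -/
def ReducesInj {X Y O X' Y' O' : Type}
    (S : X → Y → O → Prop) (S' : X' → Y' → O' → Prop) : Prop :=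
  ∃ (RA : X → X') (RB : Y → Y') (Rout : O' → O),
    Function.Injective RA ∧ Function.Injective RB ∧
    ∀ x y o', S' (RA x) (RB y) o' → S x y (Rout o')

/-! ### Compositions -/

/-- `mKW_f ◇ mKW_g := mKW_{f ◇ g}` : Alice gets `X ∈ (f◇g)⁻¹(1)`, Bob gets
`Y ∈ (f◇g)⁻¹(0)`, and they must find an entry `(i,j)` with `X i j > Y i j`. -/
def diamondKW {m : ℕ} {ι : Type} (f : (Fin m → Bool) → Bool) (g : (ι → Bool) → Bool) :
    {X : Fin m → ι → Bool // f (fun i => g (X i)) = true} →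
    {Y : Fin m → ι → Bool // f (fun i => g (Y i)) = false} →
    (Fin m × ι) → Prop :=
  fun X Y e => X.val e.1 e.2 = true ∧ Y.val e.1 e.2 = false

/-- `mKW_f ⊛ mKW_g` : same inputs as `mKW_f ◇ mKW_g`, but valid outputs are entries
`(i,j)` with `a_i > b_i` and `X i j > Y i j`, where `a_i = g(X_i)`, `b_i = g(Y_i)`. -/
def starKW {m : ℕ} {ι : Type} (f : (Fin m → Bool) → Bool) (g : (ι → Bool) → Bool) :
    {X : Fin m → ι → Bool // f (fun i => g (X i)) = true} →
    {Y : Fin m → ι → Bool // f (fun i => g (Y i)) = false} →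
    (Fin m × ι) → Prop :=
  fun X Y e => g (X.val e.1) = true ∧ g (Y.val e.1) = false ∧
    X.val e.1 e.2 = true ∧ Y.val e.1 e.2 = false

/-- `mKW_f ⊛ (S ◇ gd)` : Alice gets `X ∈ Λ^{m×ℓ}` and `a ∈ f⁻¹(1)`, Bob gets
`Y ∈ Λ^{m×ℓ}` and `b ∈ f⁻¹(0)`; valid outputs are pairs `(i,o)` with `a_i > b_i`
and `o` a valid output of `S ◇ gd` on the rows `(X_i, Y_i)`. -/
def starLift {m ℓ : ℕ} {Λ O : Type} (f : (Fin m → Bool) → Bool)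
    (S : (Fin ℓ → Bool) → O → Prop) (gd : Λ → Λ → Bool) :
    ((Fin m → Fin ℓ → Λ) × {a : Fin m → Bool // f a = true}) →
    ((Fin m → Fin ℓ → Λ) × {b : Fin m → Bool // f b = false}) →
    (Fin m × O) → Prop :=
  fun Xa Yb io =>
    Xa.2.val io.1 = true ∧ Yb.2.val io.1 = false ∧
      liftSP S gd (Xa.1 io.1) (Yb.1 io.1) io.2

/-! ### Live transcripts -/

/-- `𝒜_{π,W}` : the vectors `a ∈ f⁻¹(1)` such that `(W,a)` is consistent with `π`. -/
def Aset {m ℓ : ℕ} {Λ O : Type} (f : (Fin m → Bool) → Bool)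
    (Pr : Protocol ((Fin m → Fin ℓ → Λ) × {a : Fin m → Bool // f a = true})
                   ((Fin m → Fin ℓ → Λ) × {b : Fin m → Bool // f b = false}) (Fin m × O))
    (π : List Bool) (W : Fin m → Fin ℓ → Λ) : Set (Fin m → Bool) :=
  {a | ∃ h : f a = true, Protocol.followsA Pr π (W, ⟨a, h⟩)}

/-- `ℬ_{π,W}` : the vectors `b ∈ f⁻¹(0)` such that `(W,b)` is consistent with `π`. -/
def Bset {m ℓ : ℕ} {Λ O : Type} (f : (Fin m → Bool) → Bool)
    (Pr : Protocol ((Fin m → Fin ℓ → Λ) × {a : Fin m → Bool // f a = true})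
                   ((Fin m → Fin ℓ → Λ) × {b : Fin m → Bool // f b = false}) (Fin m × O))
    (π : List Bool) (W : Fin m → Fin ℓ → Λ) : Set (Fin m → Bool) :=
  {b | ∃ h : f b = false, Protocol.followsB Pr π (W, ⟨b, h⟩)}

/-- `γ(π)` : the average over uniform `W ∈ Λ^{m×ℓ}` of `mL(𝒜_{π,W} × ℬ_{π,W})`. -/
def gammaM {m ℓ : ℕ} {Λ O : Type} [Fintype Λ] [DecidableEq Λ] (f : (Fin m → Bool) → Bool)
    (Pr : Protocol ((Fin m → Fin ℓ → Λ) × {a : Fin m → Bool // f a = true})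
                   ((Fin m → Fin ℓ → Λ) × {b : Fin m → Bool // f b = false}) (Fin m × O))
    (π : List Bool) : ℝ :=
  (∑ W : Fin m → Fin ℓ → Λ, (mL (Aset f Pr π W) (Bset f Pr π W) : ℝ)) /
    (Fintype.card (Fin m → Fin ℓ → Λ) : ℝ)

/-- A transcript is live (alive) if it is a vertex of the protocol tree and `γ(π) ≥ 4m²`. -/
def LiveT {m ℓ : ℕ} {Λ O : Type} [Fintype Λ] [DecidableEq Λ] (f : (Fin m → Bool) → Bool)
    (Pr : Protocol ((Fin m → Fin ℓ → Λ) × {a : Fin m → Bool // f a = true})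
                   ((Fin m → Fin ℓ → Λ) × {b : Fin m → Bool // f b = false}) (Fin m × O))
    (π : List Bool) : Prop :=
  Protocol.IsTranscript Pr π ∧ 4 * (m : ℝ) ^ 2 ≤ gammaM f Pr π

/-! ### Average degree -/

/-- Projection of a set of strings to the coordinates in `J`. -/
def projSet {N Λ : Type} (W : Set (N → Λ)) (J : Set N) : Set (↥J → Λ) :=
  (fun w (j : ↥J) => w j.val) '' W

/-- Relative average degree: `rAvgDeg_I(W) = (|W| / |W|_{N−I}|) / |Λ|^{|I|}`. -/
def rAvgDeg {N Λ : Type} [Fintype Λ] (W : Set (N → Λ)) (I : Set N) : ℝ :=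
  ((W.ncard : ℝ) / ((projSet W Iᶜ).ncard : ℝ)) / ((Fintype.card Λ : ℝ) ^ I.ncard)

/-- View a set of `m × ℓ` matrices as a set of strings indexed by `Fin m × Fin ℓ`. -/
def matSet {m ℓ : ℕ} {Λ : Type} (WW : Set (Fin m → Fin ℓ → Λ)) : Set (Fin m × Fin ℓ → Λ) :=
  (fun W p => W p.1 p.2) '' WW

/-! ### Hard collections -/

/-- A transcript `π` supports the collection `(𝒲, a^W, b^W)` if for every `W ∈ 𝒲`,
`(W, a^W) ∈ 𝒳_π` and `(W, b^W) ∈ 𝒴_π`. -/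
def SupportsCollection {m ℓ : ℕ} {Λ O : Type} (f : (Fin m → Bool) → Bool)
    (Pr : Protocol ((Fin m → Fin ℓ → Λ) × {a : Fin m → Bool // f a = true})
                   ((Fin m → Fin ℓ → Λ) × {b : Fin m → Bool // f b = false}) (Fin m × O))
    (π : List Bool) (WW : Set (Fin m → Fin ℓ → Λ))
    (aW bW : (Fin m → Fin ℓ → Λ) → (Fin m → Bool)) : Prop :=
  ∀ W ∈ WW, aW W ∈ Aset f Pr π W ∧ bW W ∈ Bset f Pr π W

/-- The collection `(𝒲, a^W, b^W)` is hard: there is a set `R` of revealed rows such that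
(i) every set `I` of unrevealed rows has relative average degree at least `4^{-|I|}` in the
restriction of `𝒲` to the unrevealed rows, and (ii) `a^W|_R ≤ b^{W'}|_R` for all `W, W' ∈ 𝒲`. -/
def HardCollection {m ℓ : ℕ} {Λ : Type} [Fintype Λ] (f : (Fin m → Bool) → Bool)
    (WW : Set (Fin m → Fin ℓ → Λ))
    (aW bW : (Fin m → Fin ℓ → Λ) → (Fin m → Bool)) : Prop :=
  ∃ R : Set (Fin m),
    (∀ I : Set (Fin m), I ⊆ Rᶜ →
      ((1 : ℝ) / 4) ^ I.ncard ≤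
        rAvgDeg (projSet (matSet WW) {p : Fin m × Fin ℓ | p.1 ∉ R})
          {q : ↥{p : Fin m × Fin ℓ | p.1 ∉ R} | q.val.1 ∈ I}) ∧
    (∀ W ∈ WW, ∀ W' ∈ WW, ∀ i ∈ R, aW W i ≤ bW W' i)

/-! ### CNF formulas, Nullstellensatz degree -/

/-- A clause over `ℓ` variables: a set of literals; `(i, true)` is the positive
literal `x_i`, `(i, false)` is the negative literal `¬x_i`. -/
abbrev CnfClause (ℓ : ℕ) := Finset (Fin ℓ × Bool)

/-- An assignment satisfies a clause if some literal is satisfied. -/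
def clauseSat {ℓ : ℕ} (z : Fin ℓ → Bool) (C : CnfClause ℓ) : Prop :=
  ∃ lit ∈ C, z lit.1 = lit.2

/-- The search problem `S_φ` : given an assignment, find a violated clause of `φ`. -/
def searchCNF {ℓ : ℕ} (φ : Finset (CnfClause ℓ)) :
    (Fin ℓ → Bool) → CnfClause ℓ → Prop :=
  fun z C => C ∈ φ ∧ ¬ clauseSat z C

/-- The standard polynomial encoding of a clause. -/
def clausePoly {ℓ : ℕ} (C : CnfClause ℓ) : MvPolynomial (Fin ℓ) (ZMod 2) :=
  ∏ lit ∈ C, (if lit.2 then 1 - MvPolynomial.X lit.1 else MvPolynomial.X lit.1)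

/-- The Nullstellensatz degree of a CNF contradiction `φ` over `F₂`. -/
def NSdeg {ℓ : ℕ} (φ : Finset (CnfClause ℓ)) : ℕ :=
  sInf {d : ℕ | ∃ (q : CnfClause ℓ → MvPolynomial (Fin ℓ) (ZMod 2))
      (r : Fin ℓ → MvPolynomial (Fin ℓ) (ZMod 2)),
      ((∑ C ∈ φ, clausePoly C * q C) +
        ∑ i : Fin ℓ, (MvPolynomial.X i ^ 2 - MvPolynomial.X i) * r i) = 1 ∧
      (∀ C ∈ φ, (clausePoly C * q C).totalDegree ≤ d) ∧
      (∀ i : Fin ℓ, ((MvPolynomial.X i ^ 2 - MvPolynomial.X i) * r i).totalDegree ≤ d)}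

/-- The equality gadget. -/
def eqGadget {Λ : Type} [DecidableEq Λ] : Λ → Λ → Bool := fun u v => decide (u = v)

/-! ### Semi-monotone composition -/

/-- `U_m ◇ mKW_g` : Alice gets `X`, Bob gets `Y`; with `a_i = g(X_i)`, `b_i = g(Y_i)`,
valid outputs are entries `(i,j)` with (`a_i > b_i` and `X i j > Y i j`), or
(`a_i < b_i` and `X i j < Y i j`), or (`a_i = b_i` and `X i j ≠ Y i j`); if `a = b`
the players may output the failure symbol `⊥` (here `none`). -/
def semiU {m : ℕ} {ι : Type} (g : (ι → Bool) → Bool) :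
    (Fin m → ι → Bool) → (Fin m → ι → Bool) → Option (Fin m × ι) → Prop :=
  fun X Y o =>
    match o with
    | none => ∀ i, g (X i) = g (Y i)
    | some e =>
        (g (X e.1) = true ∧ g (Y e.1) = false ∧ X e.1 e.2 = true ∧ Y e.1 e.2 = false) ∨
        (g (X e.1) = false ∧ g (Y e.1) = true ∧ X e.1 e.2 = false ∧ Y e.1 e.2 = true) ∨
        (g (X e.1) = g (Y e.1) ∧ X e.1 e.2 ≠ Y e.1 e.2)

/-! ### Razborov rank measure over F₂ -/

/-- The maximal `F₂`-rank of the restriction of `A` to an `S`-monochromatic rectangle. -/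
def monoMaxRank {X Y O : Type} [Fintype X] [Fintype Y]
    (S : X → Y → O → Prop) (A : Matrix X Y (ZMod 2)) : ℕ :=
  sSup {r : ℕ | ∃ (U : Finset X) (V : Finset Y) (o : O),
    (∀ x ∈ U, ∀ y ∈ V, S x y o) ∧
    r = (A.submatrix (Subtype.val : {x // x ∈ U} → X)
          (Subtype.val : {y // y ∈ V} → Y)).rank}

/-- The Razborov rank measure `μ_{F₂}(S, A)`. -/
def muF2 {X Y O : Type} [Fintype X] [Fintype Y]
    (S : X → Y → O → Prop) (A : Matrix X Y (ZMod 2)) : ℝ :=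
  (A.rank : ℝ) / (monoMaxRank S A : ℝ)

/-! ### Kronecker powers, pattern matrices -/

/-- The `m`-fold Kronecker power of a square matrix `B`, with index type `Fin m → ι`. -/
def kronPow {ι R : Type} [CommMonoid R] (m : ℕ) (B : Matrix ι ι R) :
    Matrix (Fin m → ι) (Fin m → ι) R :=
  Matrix.of fun x y => ∏ i, B (x i) (y i)

/-- The pattern matrix `A_{x,y} = p(eq(x₁,y₁),…,eq(x_ℓ,y_ℓ))` of a multilinear
polynomial `p` with coefficients `phat` over `F₂`. -/
def patternMatrix {Λ : Type} [DecidableEq Λ] (ℓ : ℕ)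
    (phat : Finset (Fin ℓ) → ZMod 2) : Matrix (Fin ℓ → Λ) (Fin ℓ → Λ) (ZMod 2) :=
  Matrix.of fun x y =>
    ∑ T : Finset (Fin ℓ), phat T * ∏ i ∈ T, (if x i = y i then (1 : ZMod 2) else 0)

/-! ### s-t-connectivity -/

/-- The `s`-`t`-connectivity function: the input is the adjacency matrix of a directed
graph on `n` vertices, `s = 0`, `t = n-1`; output is whether `t` is reachable from `s`. -/
def stConn (n : ℕ) : ((Fin n × Fin n) → Bool) → Bool :=
  fun E =>
    if ∀ h : 0 < n,
        Relation.ReflTransGen (fun u v : Fin n => E (u, v) = true)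
          ⟨0, h⟩ ⟨n - 1, Nat.sub_lt h Nat.one_pos⟩
      then true else false

/-! ### The matrix M of the semi-monotone composition theorem -/

/-- The matrix `M` used in the semi-monotone composition theorem, built from a matrix
`A ∈ F₂^{𝒳×𝒴}` (with `𝒳 = range xs`, `𝒴 = range ys` identified with `Fin K` via the
left inverses `ix`, `iy`). -/
def semiM {m n K : ℕ} (g : (Fin n → Bool) → Bool) (xs ys : Fin K → (Fin n → Bool))
    (ix iy : (Fin n → Bool) → Fin K) (A : Matrix (Fin K) (Fin K) (ZMod 2)) :
    Matrix (Fin m → Fin n → Bool) (Fin m → Fin n → Bool) (ZMod 2) :=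
  Matrix.of fun X Y =>
    if (fun i => g (X i)) = (fun i => g (Y i)) then 0
    else ∏ i : Fin m,
      (if g (X i) = true ∧ g (Y i) = false then A (ix (X i)) (iy (Y i))
       else if g (X i) = false ∧ g (Y i) = true then A (ix (Y i)) (iy (X i))
       else if X i = Y i then 1 else 0)

end

namespace MCT

/-! ### Rectangle version of protocols -/

/-- `Sol rel A B k`: the rectangle `A × B` can be solved with `k` leaves. -/
inductive Sol {X Y O : Type} (rel : X → Y → O → Prop) : Set X → Set Y → ℕ → Prop
  | empA {A : Set X} {B : Set Y} {k : ℕ} : A = ∅ → Sol rel A B k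
  | empB {A : Set X} {B : Set Y} {k : ℕ} : B = ∅ → Sol rel A B k
  | leaf {A : Set X} {B : Set Y} {k : ℕ} (o : O) : (∀ x ∈ A, ∀ y ∈ B, rel x y o) → Sol rel A B (k+1)
  | splitA {A A0 A1 : Set X} {B : Set Y} {k l : ℕ} : A ⊆ A0 ∪ A1 →
      Sol rel A0 B k → Sol rel A1 B l → Sol rel A B (k + l)
  | splitB {A : Set X} {B B0 B1 : Set Y} {k l : ℕ} : B ⊆ B0 ∪ B1 →
      Sol rel A B0 k → Sol rel A B1 l → Sol rel A B (k + l)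

/-- Depth version. -/
inductive SolD {X Y O : Type} (rel : X → Y → O → Prop) : Set X → Set Y → ℕ → Prop
  | empA {A : Set X} {B : Set Y} {k : ℕ} : A = ∅ → SolD rel A B k
  | empB {A : Set X} {B : Set Y} {k : ℕ} : B = ∅ → SolD rel A B k
  | leaf {A : Set X} {B : Set Y} {k : ℕ} (o : O) : (∀ x ∈ A, ∀ y ∈ B, rel x y o) → SolD rel A B k
  | splitA {A A0 A1 : Set X} {B : Set Y} {k : ℕ} : A ⊆ A0 ∪ A1 →
      SolD rel A0 B k → SolD rel A1 B k → SolD rel A B (k + 1)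
  | splitB {A : Set X} {B B0 B1 : Set Y} {k : ℕ} : B ⊆ B0 ∪ B1 →
      SolD rel A B0 k → SolD rel A B1 k → SolD rel A B (k + 1)

def Mono {X Y O : Type} (rel : X → Y → O → Prop) (A : Set X) (B : Set Y) : Prop :=
  A = ∅ ∨ B = ∅ ∨ ∃ o, ∀ x ∈ A, ∀ y ∈ B, rel x y o

section
variable {X Y O : Type} {rel : X → Y → O → Prop}

theorem Sol.mono {A : Set X} {B : Set Y} {k : ℕ} (h : Sol rel A B k) :
    ∀ {A' : Set X} {B' : Set Y} {k' : ℕ}, A' ⊆ A → B' ⊆ B → k ≤ k' → Sol rel A' B' k' := by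
  induction h with
  | empA h => intro A' B' k' hA hB hk; exact Sol.empA (Set.subset_eq_empty hA h)
  | empB h => intro A' B' k' hA hB hk; exact Sol.empB (Set.subset_eq_empty hB h)
  | leaf o h =>
    intro A' B' k' hA hB hk
    obtain ⟨j, rfl⟩ : ∃ j, k' = j + 1 := ⟨k' - 1, by omega⟩
    exact Sol.leaf o fun x hx y hy => h x (hA hx) y (hB hy)
  | @splitA A A0 A1 B k l h _ _ ih1 ih2 =>
    intro A' B' k' hA hB hk
    obtain ⟨j, rfl⟩ : ∃ j, k' = k + j := ⟨k' - k, by omega⟩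
    exact Sol.splitA (hA.trans h) (ih1 subset_rfl hB le_rfl) (ih2 subset_rfl hB (by omega))
  | @splitB A B B0 B1 k l h _ _ ih1 ih2 =>
    intro A' B' k' hA hB hk
    obtain ⟨j, rfl⟩ : ∃ j, k' = k + j := ⟨k' - k, by omega⟩
    exact Sol.splitB (hB.trans h) (ih1 hA subset_rfl le_rfl) (ih2 hA subset_rfl (by omega))

theorem SolD.mono {A : Set X} {B : Set Y} {k : ℕ} (h : SolD rel A B k) :
    ∀ {A' : Set X} {B' : Set Y} {k' : ℕ}, A' ⊆ A → B' ⊆ B → k ≤ k' → SolD rel A' B' k' := by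
  induction h with
  | empA h => intro A' B' k' hA hB hk; exact SolD.empA (Set.subset_eq_empty hA h)
  | empB h => intro A' B' k' hA hB hk; exact SolD.empB (Set.subset_eq_empty hB h)
  | leaf o h =>
    intro A' B' k' hA hB hk
    exact SolD.leaf o fun x hx y hy => h x (hA hx) y (hB hy)
  | @splitA A A0 A1 B k h _ _ ih1 ih2 =>
    intro A' B' k' hA hB hk
    obtain ⟨j, rfl⟩ : ∃ j, k' = j + 1 := ⟨k' - 1, by omega⟩
    exact SolD.splitA (hA.trans h) (ih1 subset_rfl hB (by omega)) (ih2 subset_rfl hB (by omega))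
  | @splitB A B B0 B1 k h _ _ ih1 ih2 =>
    intro A' B' k' hA hB hk
    obtain ⟨j, rfl⟩ : ∃ j, k' = j + 1 := ⟨k' - 1, by omega⟩
    exact SolD.splitB (hB.trans h) (ih1 hA subset_rfl (by omega)) (ih2 hA subset_rfl (by omega))

theorem Mono.solD {A : Set X} {B : Set Y} (h : Mono rel A B) (k : ℕ) : SolD rel A B k := by
  rcases h with h | h | ⟨o, h⟩
  · exact .empA h
  · exact .empB h
  · exact .leaf o h

theorem Mono.sol {A : Set X} {B : Set Y} (h : Mono rel A B) (k : ℕ) : Sol rel A B (k+1) := by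
  rcases h with h | h | ⟨o, h⟩
  · exact .empA h
  · exact .empB h
  · exact .leaf o h

/-- `A' × B'` is a descendant of `A × B`, with what is left. -/
def Compl (rel : X → Y → O → Prop) (A : Set X) (B : Set Y) (k : ℕ) (A' : Set X) (B' : Set Y)
    (k' : ℕ) : Prop :=
  Sol rel A' B' k' ∧ ∃ r, k' + r = k ∧ Sol rel (A \ A') B r ∧ Sol rel A (B \ B') r

theorem Compl.refl {A : Set X} {B : Set Y} {k : ℕ} (h : Sol rel A B k) : Compl rel A B k A B k :=
  ⟨h, 0, rfl, .empA (by simp), .empB (by simp)⟩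

theorem Compl.liftA {A A0 A1 : Set X} {B : Set Y} {k l : ℕ} {A' : Set X} {B' : Set Y} {k' : ℕ}
    (h : A ⊆ A0 ∪ A1) (h1 : Compl rel A0 B k A' B' k') (h2 : Sol rel A1 B l) :
    Compl rel A B (k + l) A' B' k' := by
  obtain ⟨hs, r, hr, ha, hb⟩ := h1
  refine ⟨hs, r + l, by omega, ?_, ?_⟩
  · refine Sol.splitA ?_ ha h2
    intro x hx
    rcases h hx.1 with h' | h'
    · exact Or.inl ⟨h', hx.2⟩
    · exact Or.inr h'
  · exact Sol.splitA h hb (h2.mono subset_rfl Set.sdiff_subset le_rfl)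

theorem Compl.liftB {A : Set X} {B B0 B1 : Set Y} {k l : ℕ} {A' : Set X} {B' : Set Y} {k' : ℕ}
    (h : B ⊆ B0 ∪ B1) (h1 : Compl rel A B0 k A' B' k') (h2 : Sol rel A B1 l) :
    Compl rel A B (k + l) A' B' k' := by
  obtain ⟨hs, r, hr, ha, hb⟩ := h1
  refine ⟨hs, r + l, by omega, ?_, ?_⟩
  · exact Sol.splitB h ha (h2.mono Set.sdiff_subset subset_rfl le_rfl)
  · refine Sol.splitB ?_ hb h2
    intro x hx
    rcases h hx.1 with h' | h'
    · exact Or.inl ⟨h', hx.2⟩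
    · exact Or.inr h'

def Split (A : Set X) (B : Set Y) (A0 : Set X) (B0 : Set Y) (A1 : Set X) (B1 : Set Y) : Prop :=
  (B0 = B ∧ B1 = B ∧ A ⊆ A0 ∪ A1) ∨ (A0 = A ∧ A1 = A ∧ B ⊆ B0 ∪ B1)

theorem Sol.desc {A : Set X} {B : Set Y} {k : ℕ} (h : Sol rel A B k)
    (Big : Set X → Set Y → ℕ → Prop) : Big A B k →
    ∃ Au Bu ku, Big Au Bu ku ∧ ((Mono rel Au Bu ∧ Compl rel A B k Au Bu ku) ∨
      ∃ Ac Bc kc Ad Bd kd, ¬ Big Ac Bc kc ∧ ¬ Big Ad Bd kd ∧ Compl rel A B k Ac Bc kc ∧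
        Compl rel A B k Ad Bd kd ∧ kc + kd = ku ∧ ku ≤ k ∧ Split Au Bu Ac Bc Ad Bd) := by
  induction h with
  | @empA A B k h => exact fun hb => ⟨A, B, k, hb, .inl ⟨.inl h, .refl (.empA h)⟩⟩
  | @empB A B k h => exact fun hb => ⟨A, B, k, hb, .inl ⟨.inr (.inl h), .refl (.empB h)⟩⟩
  | @leaf A B k o h => exact fun hb => ⟨A, B, k+1, hb, .inl ⟨.inr (.inr ⟨o, h⟩), .refl (.leaf o h)⟩⟩
  | @splitA A A0 A1 B k l h h1 h2 ih1 ih2 =>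
    intro hb
    by_cases b1 : Big A0 B k
    · obtain ⟨Au, Bu, ku, hB, ⟨hm, hc⟩ | ⟨Ac, Bc, kc, Ad, Bd, kd, n1, n2, c1, c2, e, e', hs⟩⟩ := ih1 b1
      · exact ⟨Au, Bu, ku, hB, .inl ⟨hm, hc.liftA h h2⟩⟩
      · exact ⟨Au, Bu, ku, hB, .inr ⟨Ac, Bc, kc, Ad, Bd, kd, n1, n2, c1.liftA h h2, c2.liftA h h2, e,
          by omega, hs⟩⟩
    by_cases b2 : Big A1 B l
    · rw [Set.union_comm] at h
      obtain ⟨Au, Bu, ku, hB, ⟨hm, hc⟩ | ⟨Ac, Bc, kc, Ad, Bd, kd, n1, n2, c1, c2, e, e', hs⟩⟩ := ih2 b2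
      · exact ⟨Au, Bu, ku, hB, .inl ⟨hm, by rw [add_comm]; exact hc.liftA h h1⟩⟩
      · rw [add_comm k l]
        exact ⟨Au, Bu, ku, hB, .inr ⟨Ac, Bc, kc, Ad, Bd, kd, n1, n2, c1.liftA h h1, c2.liftA h h1, e,
          by omega, hs⟩⟩
    refine ⟨A, B, k + l, hb, .inr ⟨A0, B, k, A1, B, l, b1, b2, (Compl.refl h1).liftA h h2, ?_, rfl,
      le_rfl, .inl ⟨rfl, rfl, h⟩⟩⟩
    rw [Set.union_comm] at h; rw [add_comm]
    exact (Compl.refl h2).liftA h h1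
  | @splitB A B A0 A1 k l h h1 h2 ih1 ih2 =>
    intro hb
    by_cases b1 : Big A A0 k
    · obtain ⟨Au, Bu, ku, hB, ⟨hm, hc⟩ | ⟨Ac, Bc, kc, Ad, Bd, kd, n1, n2, c1, c2, e, e', hs⟩⟩ := ih1 b1
      · exact ⟨Au, Bu, ku, hB, .inl ⟨hm, hc.liftB h h2⟩⟩
      · exact ⟨Au, Bu, ku, hB, .inr ⟨Ac, Bc, kc, Ad, Bd, kd, n1, n2, c1.liftB h h2, c2.liftB h h2, e,
          by omega, hs⟩⟩
    by_cases b2 : Big A A1 l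
    · rw [Set.union_comm] at h
      obtain ⟨Au, Bu, ku, hB, ⟨hm, hc⟩ | ⟨Ac, Bc, kc, Ad, Bd, kd, n1, n2, c1, c2, e, e', hs⟩⟩ := ih2 b2
      · exact ⟨Au, Bu, ku, hB, .inl ⟨hm, by rw [add_comm]; exact hc.liftB h h1⟩⟩
      · rw [add_comm k l]
        exact ⟨Au, Bu, ku, hB, .inr ⟨Ac, Bc, kc, Ad, Bd, kd, n1, n2, c1.liftB h h1, c2.liftB h h1, e,
          by omega, hs⟩⟩
    refine ⟨A, B, k + l, hb, .inr ⟨A, A0, k, A, A1, l, b1, b2, (Compl.refl h1).liftB h h2, ?_, rfl,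
      le_rfl, .inr ⟨rfl, rfl, h⟩⟩⟩
    rw [Set.union_comm] at h; rw [add_comm]
    exact (Compl.refl h2).liftB h h1

theorem Sol.zero {A : Set X} {B : Set Y} {k : ℕ} (h : Sol rel A B k) : k = 0 → A = ∅ ∨ B = ∅ := by
  induction h with
  | empA h => exact fun _ => .inl h
  | empB h => exact fun _ => .inr h
  | leaf o h => intro h; omega
  | splitA h _ _ ih1 ih2 =>
    intro hk
    rcases ih1 (by omega) with e1 | e1
    · rcases ih2 (by omega) with e2 | e2
      · left; subst e1 e2; simpa using h
      · exact .inr e2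
    · exact .inr e1
  | splitB h _ _ ih1 ih2 =>
    intro hk
    rcases ih1 (by omega) with e1 | e1
    · exact .inl e1
    · rcases ih2 (by omega) with e2 | e2
      · exact .inl e2
      · right; subst e1 e2; simpa using h

theorem Mono.sub {A A' : Set X} {B B' : Set Y} (h : Mono rel A B) (hA : A' ⊆ A) (hB : B' ⊆ B) :
    Mono rel A' B' := by
  rcases h with h | h | ⟨o, h⟩
  · exact .inl (Set.subset_eq_empty hA h)
  · exact .inr (.inl (Set.subset_eq_empty hB h))
  · exact .inr (.inr ⟨o, fun x hx y hy => h x (hA hx) y (hB hy)⟩)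

theorem Sol.one {A : Set X} {B : Set Y} {k : ℕ} (h : Sol rel A B k) : k ≤ 1 → Mono rel A B := by
  induction h with
  | empA h => exact fun _ => .inl h
  | empB h => exact fun _ => .inr (.inl h)
  | leaf o h => exact fun _ => .inr (.inr ⟨o, h⟩)
  | @splitA A A0 A1 B k l h h1 h2 ih1 ih2 =>
    intro hk
    rcases Nat.eq_zero_or_pos k with e | e
    · rcases h1.zero e with e1 | e1
      · exact (ih2 (by omega)).sub (by simpa [e1] using h) subset_rfl
      · exact .inr (.inl e1)
    · rcases h2.zero (by omega) with e1 | e1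
      · exact (ih1 (by omega)).sub (by simpa [e1] using h) subset_rfl
      · exact .inr (.inl e1)
  | @splitB A B A0 A1 k l h h1 h2 ih1 ih2 =>
    intro hk
    rcases Nat.eq_zero_or_pos k with e | e
    · rcases h1.zero e with e1 | e1
      · exact .inl e1
      · exact (ih2 (by omega)).sub subset_rfl (by simpa [e1] using h)
    · rcases h2.zero (by omega) with e1 | e1
      · exact .inl e1
      · exact (ih1 (by omega)).sub subset_rfl (by simpa [e1] using h)

/-- Balancing. -/
theorem Sol.balance (j : ℕ) : ∀ {A : Set X} {B : Set Y} {k : ℕ}, Sol rel A B k → k * 2 ^ j ≤ 3 ^ j →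
    SolD rel A B (2 * j) := by
  induction j with
  | zero =>
    intro A B k h hk
    exact (h.one (by simpa using hk)).solD _
  | succ j ih =>
    intro A B k h hk
    by_cases hk1 : k ≤ 1
    · exact (h.one hk1).solD _
    -- combine
    have key : ∀ A' B' k', Compl rel A B k A' B' k' → SolD rel A' B' (2 * j) → k ≤ 3 * k' →
        SolD rel A B (2 * (j + 1)) := by
      rintro A' B' k' ⟨hs, r, hr, ha, hb⟩ hd hk'
      have hr2 : r * 2 ^ j ≤ 3 ^ j := by
        have : 3 * r ≤ 2 * k := by omega
        have h3 : 3 * r * 2 ^ j ≤ 2 * k * 2 ^ j := Nat.mul_le_mul_right _ this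
        rw [pow_succ, pow_succ] at hk
        nlinarith
      have d1 := ih ha hr2
      have d2 := ih hb hr2
      show SolD rel A B ((2 * j + 1) + 1)
      refine SolD.splitA (A0 := A \ A') (A1 := A ∩ A') (by simp) (d1.mono subset_rfl subset_rfl (by omega)) ?_
      refine SolD.splitB (B0 := B \ B') (B1 := B') (by simp) (d2.mono Set.inter_subset_left subset_rfl le_rfl) ?_
      exact hd.mono Set.inter_subset_right subset_rfl le_rfl
    obtain ⟨Au, Bu, ku, hB, ⟨hm, hc⟩ | ⟨Ac, Bc, kc, Ad, Bd, kd, n1, n2, c1, c2, e, e', hs⟩⟩ :=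
      h.desc (fun _ _ k' => 2 * k < 3 * k') (by omega)
    · exact key _ _ _ hc (hm.solD _) (by omega)
    · have sm : ∀ k', ¬ 2 * k < 3 * k' → k' * 2 ^ j ≤ 3 ^ j := by
        intro k' hk'
        have h3 : 3 * k' * 2 ^ j ≤ 2 * k * 2 ^ j := Nat.mul_le_mul_right _ (by omega)
        rw [pow_succ, pow_succ] at hk
        nlinarith
      rcases le_total kd kc with hle | hle
      · exact key _ _ _ c1 (ih c1.1 (sm _ n1)) (by omega)
      · exact key _ _ _ c2 (ih c2.1 (sm _ n2)) (by omega)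

/-- The caterpillar argument. -/
theorem Sol.caterpillar (μ : Set X → Set Y → ℝ) (G K : ℝ) (hG : 1 ≤ G) (hK : 0 < K)
    (hsm : ∀ A A' B, A ⊆ A' → μ A B ≤ μ A' B)
    (hsubA : ∀ A A0 A1 B, A ⊆ A0 ∪ A1 → μ A B ≤ μ A0 B + μ A1 B)
    (hsubB : ∀ A B B0 B1, B ⊆ B0 ∪ B1 → μ A B ≤ μ A B0 + μ A B1)
    (hmono : ∀ A B, Mono rel A B → μ A B ≤ 1)
    (hbase : ∀ A B k, Sol rel A B k → G ≤ μ A B → K ≤ k) :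
    ∀ (k : ℕ) (A : Set X) (B : Set Y), Sol rel A B k → G ≤ μ A B → K * (μ A B + 2 * G) ≤ 6 * G * k := by
  intro k
  induction k using Nat.strong_induction_on with
  | _ k ih =>
    intro A B h hx
    have hb := hbase A B k h hx
    by_cases hD : μ A B ≤ 4 * G
    · nlinarith [mul_le_mul_of_nonneg_left hD hK.le]
    push Not at hD
    obtain ⟨Au, Bu, ku, hB, ⟨hm, hc⟩ | ⟨Ac, Bc, kc, Ad, Bd, kd, n1, n2, c1, c2, e, e', hs⟩⟩ :=
      h.desc (fun A' B' _ => μ A B - 2 * G < μ A' B') (by linarith)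
    · have := hmono _ _ hm
      linarith
    push Not at n1 n2
    have hsum : μ A B - 2 * G < μ Ac Bc + μ Ad Bd := by
      rcases hs with ⟨h1, h2, h3⟩ | ⟨h1, h2, h3⟩
      · subst h1; subst h2; exact hB.trans_le (hsubA _ _ _ _ h3)
      · subst h1; subst h2; exact hB.trans_le (hsubB _ _ _ _ h3)
    have key : ∀ Ac Bc kc Ad Bd kd, μ Ac Bc ≤ μ A B - 2 * G → μ A B - 2 * G < μ Ac Bc + μ Ad Bd →
        μ Ad Bd ≤ μ Ac Bc → Compl rel A B k Ac Bc kc → Compl rel A B k Ad Bd kd → kc + kd ≤ k →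
        K * (μ A B + 2 * G) ≤ 6 * G * k := by
      clear n1 n2 hsum hs e c1 c2 e'
      intro Ac Bc kc Ad Bd kd n1 hsum hle c1 c2 hk
      obtain ⟨s1, r, hr, ra, rb⟩ := c1
      have hc1 : G ≤ μ Ac Bc := by linarith
      -- the remainder
      have hrem : K ≤ r := by
        have t1 : μ A B ≤ μ (A \ Ac) B + μ (A ∩ Ac) B := hsubA _ _ _ _ (by simp)
        have t2 : μ (A ∩ Ac) B ≤ μ (A ∩ Ac) (B \ Bc) + μ (A ∩ Ac) Bc := hsubB _ _ _ _ (by simp)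
        have t3 : μ (A ∩ Ac) Bc ≤ μ Ac Bc := hsm _ _ _ Set.inter_subset_right
        by_contra hcon
        have t5 : μ (A \ Ac) B < G := by
          by_contra h'; exact hcon (hbase _ _ _ ra (not_lt.1 h'))
        have t6 : μ (A ∩ Ac) (B \ Bc) < G := by
          by_contra h'
          exact hcon (hbase _ _ _ (rb.mono Set.inter_subset_left subset_rfl le_rfl) (not_lt.1 h'))
        linarith
      by_cases hd : G ≤ μ Ad Bd
      · have hkd : K ≤ kd := hbase _ _ _ c2.1 hd
        have p1 : 0 < kd := by exact_mod_cast hK.trans_le hkd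
        have p2 : 0 < kc := by exact_mod_cast hK.trans_le (hbase _ _ _ s1 hc1)
        have i1 := ih kc (by omega) _ _ s1 hc1
        have i2 := ih kd (by omega) _ _ c2.1 hd
        have hk' : (kc : ℝ) + kd ≤ k := by exact_mod_cast hk
        have : K * (μ A B - 2 * G) ≤ K * (μ Ac Bc + μ Ad Bd) :=
          mul_le_mul_of_nonneg_left hsum.le hK.le
        have : 6 * G * ((kc : ℝ) + kd) ≤ 6 * G * k := mul_le_mul_of_nonneg_left hk' (by linarith)
        nlinarith
      · push Not at hd
        have p1 : 0 < r := by exact_mod_cast hK.trans_le hrem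
        have i1 := ih kc (by omega) _ _ s1 hc1
        have hk' : (kc : ℝ) + r = k := by exact_mod_cast hr
        have : K * (μ A B - 3 * G) ≤ K * (μ Ac Bc) :=
          mul_le_mul_of_nonneg_left (by linarith) hK.le
        have : G * K ≤ G * r := mul_le_mul_of_nonneg_left hrem (by linarith)
        rw [← hk']
        nlinarith [mul_pos hK (lt_of_lt_of_le one_pos hG)]
    rcases le_total (μ Ad Bd) (μ Ac Bc) with hle | hle
    · exact key _ _ _ _ _ _ n1 hsum hle c1 c2 (by omega)
    · exact key _ _ _ _ _ _ n2 (by linarith) hle c2 c1 (by omega)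
end
end MCT

set_option linter.unusedSectionVars false
namespace MCT

/-! ### Spectral bounds -/

noncomputable def sg (b : Bool) : ℝ := if b then -1 else 1

theorem sg_sq (b : Bool) : sg b * sg b = 1 := by cases b <;> simp [sg]
theorem sg_abs (b : Bool) : |sg b| = 1 := by cases b <;> simp [sg]
theorem sg_cases (b : Bool) : sg b = 1 ∨ sg b = -1 := by cases b <;> simp [sg]

section
variable {Λ : Type} [Fintype Λ]

noncomputable def Box (gd : Λ → Λ → Bool) : ℝ := ∑ a, ∑ a', (∑ u, sg (gd u a) * sg (gd u a')) ^ 2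

def Cut (gd : Λ → Λ → Bool) (C : ℝ) : Prop :=
  ∀ P Q : Finset Λ, |∑ u ∈ P, ∑ v ∈ Q, sg (gd u v)| ≤ C

theorem Cut.flip {gd : Λ → Λ → Bool} {C : ℝ} (h : Cut gd C) : Cut (fun u v => gd v u) C := by
  intro P Q
  rw [Finset.sum_comm]
  exact h Q P

theorem Cut.signs {gd : Λ → Λ → Bool} {C : ℝ} (h : Cut gd C) (p q : Λ → ℝ)
    (hp : ∀ u, p u = 1 ∨ p u = -1) (hq : ∀ u, q u = 1 ∨ q u = -1) :
    ∑ u, ∑ v, sg (gd u v) * (p u * q v) ≤ 4 * C := by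
  have e : ∀ (r : Λ → ℝ) (_ : ∀ u, r u = 1 ∨ r u = -1) (F : Λ → ℝ), ∑ u, F u * r u =
      (∑ u ∈ Finset.univ.filter (fun u => r u = 1), F u) -
      ∑ u ∈ Finset.univ.filter (fun u => ¬ r u = 1), F u := by
    intro r hr F
    rw [← Finset.sum_filter_add_sum_filter_not Finset.univ (fun u => r u = 1), sub_eq_add_neg,
      ← Finset.sum_neg_distrib]
    congr 1
    · refine Finset.sum_congr rfl fun u hu => ?_
      rw [(Finset.mem_filter.1 hu).2]; ring
    · refine Finset.sum_congr rfl fun u hu => ?_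
      rcases hr u with h' | h'
      · exact absurd h' (Finset.mem_filter.1 hu).2
      · rw [h']; ring
  have e1 : ∑ u, ∑ v, sg (gd u v) * (p u * q v) = ∑ u, (∑ v, sg (gd u v) * q v) * p u := by
    refine Finset.sum_congr rfl fun u _ => ?_
    rw [Finset.sum_mul]; refine Finset.sum_congr rfl fun v _ => by ring
  rw [e1, e p hp]
  simp_rw [e q hq, Finset.sum_sub_distrib]
  have h1 := h (Finset.univ.filter (fun u => p u = 1)) (Finset.univ.filter (fun u => q u = 1))
  have h2 := h (Finset.univ.filter (fun u => p u = 1)) (Finset.univ.filter (fun u => ¬ q u = 1))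
  have h3 := h (Finset.univ.filter (fun u => ¬ p u = 1)) (Finset.univ.filter (fun u => q u = 1))
  have h4 := h (Finset.univ.filter (fun u => ¬ p u = 1)) (Finset.univ.filter (fun u => ¬ q u = 1))
  rw [abs_le] at h1 h2 h3 h4
  linarith [h1.1, h1.2, h2.1, h2.2, h3.1, h3.2, h4.1, h4.2]

theorem Cut.box {gd : Λ → Λ → Bool} {C : ℝ} (h : Cut gd C) :
    Box gd ≤ 4 * C * (Fintype.card Λ : ℝ) ^ 2 := by
  have e : Box gd = ∑ a', ∑ u', ∑ u, ∑ a, sg (gd u a) *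
      ((sg (gd u a') * sg (gd u' a')) * sg (gd u' a)) := by
    unfold Box
    rw [Finset.sum_comm]
    refine Finset.sum_congr rfl fun a' _ => ?_
    have : ∀ a, (∑ u, sg (gd u a) * sg (gd u a')) ^ 2 = ∑ u', ∑ u, sg (gd u a) *
      ((sg (gd u a') * sg (gd u' a')) * sg (gd u' a)) := by
      intro a
      rw [sq, Finset.sum_mul_sum, Finset.sum_comm]
      exact Finset.sum_congr rfl fun u _ => Finset.sum_congr rfl fun u' _ => by ring
    simp_rw [this]
    rw [Finset.sum_comm]
    exact Finset.sum_congr rfl fun u' _ => Finset.sum_comm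
  rw [e]
  have : ∀ a' u' : Λ, ∑ u, ∑ a, sg (gd u a) *
      ((sg (gd u a') * sg (gd u' a')) * sg (gd u' a)) ≤ 4 * C := by
    intro a' u'
    refine h.signs (fun u => sg (gd u a') * sg (gd u' a')) (fun a => sg (gd u' a)) ?_
      (fun _ => sg_cases _)
    intro u
    rcases sg_cases (gd u a') with h1 | h1 <;> rcases sg_cases (gd u' a') with h2 | h2 <;>
      simp [h1, h2]
  calc _ ≤ ∑ a' : Λ, ∑ u' : Λ, 4 * C :=
        Finset.sum_le_sum fun a' _ => Finset.sum_le_sum fun u' _ => this a' u'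
    _ = _ := by simp; ring

variable {κ : Type} [Fintype κ] [DecidableEq κ]

theorem sum_pi_prod (F : κ → Λ → ℝ) : ∑ u : κ → Λ, ∏ i, F i (u i) = ∏ i, ∑ a, F i a := by
  rw [Finset.prod_univ_sum, Fintype.piFinset_univ]

theorem op_bound (gd : Λ → Λ → Bool) (D : ℝ) (hD : 0 ≤ D) (hB : Box gd ≤ D ^ 2) (c : (κ → Λ) → ℝ) :
    ∑ u : κ → Λ, (∑ v, (∏ i, sg (gd (u i) (v i))) * c v) ^ 2 ≤
      D ^ (Fintype.card κ) * ∑ v, c v ^ 2 := by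
  set g : Λ → Λ → ℝ := fun a a' => ∑ u, sg (gd u a) * sg (gd u a') with hg
  have e1 : ∑ u : κ → Λ, (∑ v, (∏ i, sg (gd (u i) (v i))) * c v) ^ 2 =
      ∑ v, ∑ v', (c v * c v') * ∏ i, g (v i) (v' i) := by
    have : ∀ u : κ → Λ, (∑ v, (∏ i, sg (gd (u i) (v i))) * c v) ^ 2 =
        ∑ v, ∑ v', (c v * c v') * ∏ i, (sg (gd (u i) (v i)) * sg (gd (u i) (v' i))) := by
      intro u
      rw [sq, Finset.sum_mul_sum]
      refine Finset.sum_congr rfl fun v _ => Finset.sum_congr rfl fun v' _ => ?_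
      rw [Finset.prod_mul_distrib]; ring
    simp_rw [this]
    rw [Finset.sum_comm]
    refine Finset.sum_congr rfl fun v _ => ?_
    rw [Finset.sum_comm]
    refine Finset.sum_congr rfl fun v' _ => ?_
    rw [← Finset.mul_sum, sum_pi_prod (fun i a => sg (gd a (v i)) * sg (gd a (v' i)))]
  have e2 : ∑ v : κ → Λ, ∑ v' : κ → Λ, (∏ i, g (v i) (v' i)) ^ 2 = Box gd ^ Fintype.card κ := by
    simp_rw [← Finset.prod_pow]
    have : ∀ v : κ → Λ, ∑ v' : κ → Λ, ∏ i, g (v i) (v' i) ^ 2 = ∏ i, ∑ a', g (v i) a' ^ 2 :=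
      fun v => sum_pi_prod (fun i a' => g (v i) a' ^ 2)
    simp_rw [this]
    rw [sum_pi_prod (fun _ a => ∑ a', g a a' ^ 2), Finset.prod_const, Finset.card_univ]
    rfl
  have hB0 : 0 ≤ Box gd := Finset.sum_nonneg fun a _ => Finset.sum_nonneg fun a' _ => sq_nonneg _
  have cs : (∑ v, ∑ v', (c v * c v') * ∏ i, g (v i) (v' i)) ^ 2 ≤
      (∑ v, c v ^ 2) ^ 2 * Box gd ^ Fintype.card κ := by
    rw [← e2]
    have := Finset.sum_mul_sq_le_sq_mul_sq (Finset.univ : Finset ((κ → Λ) × (κ → Λ)))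
      (fun p => c p.1 * c p.2) (fun p => ∏ i, g (p.1 i) (p.2 i))
    rw [Fintype.sum_prod_type, Fintype.sum_prod_type, Fintype.sum_prod_type] at this
    refine this.trans (le_of_eq ?_)
    congr 1
    rw [sq (∑ v, c v ^ 2), Finset.sum_mul_sum]
    exact Finset.sum_congr rfl fun _ _ => Finset.sum_congr rfl fun _ _ => by ring
  rw [e1]
  have hn : 0 ≤ ∑ v, c v ^ 2 := Finset.sum_nonneg fun _ _ => sq_nonneg _
  refine abs_le_of_sq_le_sq' (b := D ^ (Fintype.card κ) * ∑ v, c v ^ 2) ?_ (by positivity) |>.2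
  refine cs.trans ?_
  rw [mul_pow, mul_comm, ← pow_mul, mul_comm _ 2, pow_mul]
  gcongr

end

section
variable {Λ ι : Type} [Fintype Λ] [Fintype ι] [DecidableEq ι]

noncomputable def chi (gd : Λ → Λ → Bool) (K : Finset ι) (x y : ι → Λ) : ℝ := ∏ i ∈ K, sg (gd (x i) (y i))

/-- the fiber of `X` over the values `w` on `K` -/
noncomputable def fib (X : Finset (ι → Λ)) (K : Finset ι) (w : ι → Λ) : Finset (ι → Λ) :=
  X.filter (fun x => ∀ i ∈ K, x i = w i)

noncomputable def rfib (X : Finset (ι → Λ)) (K : Finset ι) (w : K → Λ) : Finset (ι → Λ) :=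
  X.filter (fun x => K.restrict x = w)

theorem rfib_restrict (X : Finset (ι → Λ)) (K : Finset ι) (w : ι → Λ) :
    rfib X K (K.restrict w) = fib X K w := by
  ext x; simp [rfib, fib, funext_iff]

theorem rfib_bound {X : Finset (ι → Λ)} {K : Finset ι} {f : ℝ} (h0 : 0 ≤ f)
    (h : ∀ w, ((fib X K w).card : ℝ) ≤ f) (w : K → Λ) : ((rfib X K w).card : ℝ) ≤ f := by
  rcases (rfib X K w).eq_empty_or_nonempty with e | ⟨x, hx⟩
  · simp [e, h0]
  · have : w = K.restrict x := ((Finset.mem_filter.1 hx).2).symm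
    rw [this, rfib_restrict]; exact h x

theorem chi_restrict (gd : Λ → Λ → Bool) (K : Finset ι) (x y : ι → Λ) :
    chi gd K x y = ∏ i, sg (gd (K.restrict x i) (K.restrict y i)) := by
  unfold chi
  rw [← Finset.prod_coe_sort]; rfl

theorem second_moment (gd : Λ → Λ → Bool) (D : ℝ) (hD : 0 ≤ D) (hB : Box gd ≤ D ^ 2)
    (X Y : Finset (ι → Λ)) (K1 K2 : Finset ι) (fX fY : ℝ) (hfX0 : 0 ≤ fX) (hfY0 : 0 ≤ fY)
    (hX : ∀ w, ((fib X K1 w).card : ℝ) ≤ fX)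
    (hY : ∀ w, ((fib Y (K1 ∪ K2) w).card : ℝ) ≤ fY) :
    ∑ x ∈ X, ∑ γ : K2 → Λ, (∑ y ∈ rfib Y K2 γ, chi gd K1 x y) ^ 2 ≤
      fX * D ^ K1.card * (Y.card * fY) := by
  -- counts
  set c : (K2 → Λ) → (K1 → Λ) → ℝ := fun γ v => ((rfib (rfib Y K2 γ) K1 v).card : ℝ) with hc
  have inner : ∀ γ (x : ι → Λ), ∑ y ∈ rfib Y K2 γ, chi gd K1 x y =
      ∑ v, (∏ i, sg (gd (K1.restrict x i) (v i))) * c γ v := by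
    intro γ x
    rw [← Finset.sum_fiberwise (rfib Y K2 γ) (fun y => K1.restrict y)]
    refine Finset.sum_congr rfl fun v _ => ?_
    have : ∀ y ∈ (rfib Y K2 γ).filter (fun y => K1.restrict y = v), chi gd K1 x y =
        ∏ i, sg (gd (K1.restrict x i) (v i)) := by
      intro y hy
      rw [chi_restrict, (Finset.mem_filter.1 hy).2]
    rw [Finset.sum_congr rfl this, Finset.sum_const, nsmul_eq_mul, mul_comm]
    rfl
  have s1 : ∀ γ, ∑ x ∈ X, (∑ y ∈ rfib Y K2 γ, chi gd K1 x y) ^ 2 ≤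
      fX * (D ^ K1.card * ∑ v, c γ v ^ 2) := by
    intro γ
    simp_rw [inner]
    rw [← Finset.sum_fiberwise X (fun y => K1.restrict y)]
    have := op_bound gd D hD hB (c γ)
    rw [Fintype.card_coe] at this
    refine le_trans ?_ (mul_le_mul_of_nonneg_left this hfX0)
    rw [Finset.mul_sum]
    refine Finset.sum_le_sum fun u _ => ?_
    have e : ∀ x ∈ X.filter (fun y => K1.restrict y = u),
        (∑ v, (∏ i, sg (gd (K1.restrict x i) (v i))) * c γ v) ^ 2 =
        (∑ v, (∏ i, sg (gd (u i) (v i))) * c γ v) ^ 2 := by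
      intro x hx
      rw [(Finset.mem_filter.1 hx).2]
    rw [Finset.sum_congr rfl e, Finset.sum_const, nsmul_eq_mul]
    exact mul_le_mul_of_nonneg_right (rfib_bound hfX0 hX u) (sq_nonneg _)
  have s2 : ∑ γ, ∑ v, c γ v ^ 2 ≤ Y.card * fY := by
    have cle : ∀ γ v, c γ v ≤ fY := by
      intro γ v
      rcases (rfib (rfib Y K2 γ) K1 v).eq_empty_or_nonempty with e | ⟨x, hx⟩
      · simp [hc, e, hfY0]
      · refine le_trans ?_ (hY x)
        have h1 := (Finset.mem_filter.1 hx).2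
        have h2 := (Finset.mem_filter.1 (Finset.mem_filter.1 hx).1).2
        simp only [hc]
        norm_cast
        refine Finset.card_le_card ?_
        intro y hy
        have h3 := (Finset.mem_filter.1 hy).2
        have h4 := (Finset.mem_filter.1 (Finset.mem_filter.1 hy).1)
        refine Finset.mem_filter.2 ⟨h4.1, fun i hi => ?_⟩
        rcases Finset.mem_union.1 hi with hi | hi
        · exact congrFun (h3.trans h1.symm) ⟨i, hi⟩
        · exact congrFun (h4.2.trans h2.symm) ⟨i, hi⟩
    have tot : ∑ γ, ∑ v, c γ v = Y.card := by
      have : ∀ γ, ∑ v, c γ v = ((rfib Y K2 γ).card : ℝ) := by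
        intro γ
        simp only [hc]
        rw [Finset.card_eq_sum_card_fiberwise (f := fun y => K1.restrict y) (t := Finset.univ)
          (fun _ _ => Finset.mem_coe.2 (Finset.mem_univ _))]
        push_cast
        rfl
      simp_rw [this]
      rw [Finset.card_eq_sum_card_fiberwise (s := Y) (f := fun y => K2.restrict y) (t := Finset.univ)
          (fun _ _ => Finset.mem_coe.2 (Finset.mem_univ _))]
      push_cast
      rfl
    rw [← tot, Finset.sum_mul]
    refine Finset.sum_le_sum fun γ _ => ?_
    rw [Finset.sum_mul]
    refine Finset.sum_le_sum fun v _ => ?_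
    rw [sq]
    exact mul_le_mul_of_nonneg_left (cle γ v) (by positivity)
  rw [Finset.sum_comm]
  calc _ ≤ ∑ γ, fX * (D ^ K1.card * ∑ v, c γ v ^ 2) := Finset.sum_le_sum fun γ _ => s1 γ
    _ = fX * D ^ K1.card * ∑ γ, ∑ v, c γ v ^ 2 := by
        rw [Finset.mul_sum]; exact Finset.sum_congr rfl fun _ _ => by ring
    _ ≤ _ := mul_le_mul_of_nonneg_left s2 (by positivity)
end
end MCT

set_option linter.unusedSectionVars false
namespace MCT

section
variable {Λ ι : Type} [Fintype Λ] [Fintype ι] [DecidableEq ι]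

/-- density of a set on the coordinates in `J` -/
def Dense (b : ℝ) (X : Finset (ι → Λ)) (J : Finset ι) (p : ℕ) : Prop :=
  ∀ K ⊆ J, ∀ w, ((fib X K w).card : ℝ) * b ^ (p * K.card) ≤ X.card

/-- the parameters -/
structure Par (ι : Type) [Fintype ι] (b N D : ℝ) (r : ℕ) (gd : Λ → Λ → Bool) : Prop where
  hN : 4 * (Fintype.card ι : ℝ) ≤ N
  hN4 : 4 ≤ N
  hb : 2 * N ^ (r + 4) ≤ b
  hb64 : 64 ≤ b
  hD : 0 ≤ D
  hDb : D * b ^ 2 ≤ 2 * (b ^ r) ^ 2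
  box : Box gd ≤ D ^ 2
  box' : Box (fun u v => gd v u) ≤ D ^ 2

theorem Par.flip {b N D : ℝ} {r : ℕ} {gd : Λ → Λ → Bool} (h : Par ι b N D r gd) :
    Par ι b N D r (fun u v => gd v u) :=
  ⟨h.hN, h.hN4, h.hb, h.hb64, h.hD, h.hDb, h.box', h.box⟩

def Good (b N : ℝ) (r : ℕ) (gd : Λ → Λ → Bool) (Y : Finset (ι → Λ)) (J : Finset ι)
    (x : ι → Λ) : Prop :=
  ∀ K1 ⊆ J, K1.Nonempty → ∀ K2 ⊆ J, Disjoint K1 K2 → ∀ w,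
    |∑ y ∈ fib Y K2 w, chi gd K1 x y| * (b ^ ((r + 1) * K2.card) * N ^ K1.card) ≤ Y.card

theorem pow_bd {n : ℕ} {q : ℝ} (h0 : 0 ≤ q) (h : 4 * n * q ≤ 1) : (1 + q) ^ n ≤ 4 / 3 := by
  rcases Nat.eq_zero_or_pos n with rfl | hn
  · norm_num
  have hn1 : (1 : ℝ) ≤ n := by exact_mod_cast hn
  have hq : q ≤ 1 / 4 := by nlinarith
  have h1 : 1 + (n : ℝ) * (-q) ≤ (1 + (-q)) ^ n := one_add_mul_le_pow (by linarith) n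
  have h2 : (1 + q) ^ n * (1 + -q) ^ n ≤ 1 := by
    rw [← mul_pow]
    apply pow_le_one₀
    · nlinarith
    · nlinarith
  have h3 : (0 : ℝ) ≤ (1 + q) ^ n := by positivity
  nlinarith

theorem sum_subsets {q : ℝ} (h0 : 0 ≤ q) (h : 4 * (Fintype.card ι : ℝ) * q ≤ 1) (J : Finset ι) :
    ∑ K ∈ J.powerset, q ^ K.card ≤ 4 / 3 := by
  have := Finset.sum_pow_mul_eq_add_pow q 1 J
  simp only [one_pow, mul_one] at this
  rw [this, add_comm]
  refine pow_bd h0 (le_trans ?_ h)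
  have : (J.card : ℝ) ≤ Fintype.card ι := by exact_mod_cast J.card_le_univ
  gcongr

theorem sum_subsets' {q : ℝ} (h0 : 0 ≤ q) (h : 4 * (Fintype.card ι : ℝ) * q ≤ 1) (J : Finset ι) :
    ∑ K ∈ J.powerset.filter (fun K => K.Nonempty), q ^ K.card ≤ 1 / 3 := by
  have h1 := sum_subsets h0 h J
  rw [← Finset.sum_filter_add_sum_filter_not _ (fun K => K.Nonempty)] at h1
  have : ∑ K ∈ J.powerset.filter (fun K => ¬ K.Nonempty), q ^ K.card = 1 := by
    have : J.powerset.filter (fun K => ¬ K.Nonempty) = {∅} := by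
      ext K
      simp only [Finset.mem_filter, Finset.mem_powerset, Finset.not_nonempty_iff_eq_empty,
        Finset.mem_singleton]
      constructor
      · exact fun h => h.2
      · rintro rfl; simp
    rw [this]; simp
  linarith

theorem chi_abs (gd : Λ → Λ → Bool) (K : Finset ι) (x y : ι → Λ) : |chi gd K x y| = 1 := by
  unfold chi; rw [Finset.abs_prod]; simp [sg_abs]

theorem bad_pair {b N D : ℝ} {r : ℕ} {gd : Λ → Λ → Bool} (hP : Par ι b N D r gd)
    {X Y : Finset (ι → Λ)} {J : Finset ι} (hX : Dense b X J r) (hY : Dense b Y J (r + 2))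
    {K1 K2 : Finset ι} (h1 : K1 ⊆ J) (h2 : K2 ⊆ J) (hd : Disjoint K1 K2) :
    ((X.filter (fun x => ∃ w, (Y.card : ℝ) < |∑ y ∈ fib Y K2 w, chi gd K1 x y| *
      (b ^ ((r + 1) * K2.card) * N ^ K1.card))).card : ℝ) ≤
    X.card * ((2 * N ^ (r + 3) / b ^ 4) ^ K1.card * (1 / b) ^ K2.card) := by
  have hb0 : 0 < b := by linarith [hP.hb64]
  have hN0 : 0 < N := by linarith [hP.hN4]
  set u := b ^ K1.card with hu
  set v := b ^ K2.card with hv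
  set M := N ^ K1.card with hM
  have hu0 : 0 < u := by positivity
  have hv0 : 0 < v := by positivity
  have hM0 : 0 < M := by positivity
  have ev : ∀ p : ℕ, b ^ (p * K2.card) = v ^ p := fun p => by rw [hv, mul_comm, pow_mul]
  have eu : ∀ p : ℕ, b ^ (p * K1.card) = u ^ p := fun p => by rw [hu, mul_comm, pow_mul]
  rw [ev]
  set B := X.filter (fun x => ∃ w, (Y.card : ℝ) < |∑ y ∈ fib Y K2 w, chi gd K1 x y| *
      (v ^ (r + 1) * M)) with hB
  have target : X.card * ((2 * N ^ (r + 3) / b ^ 4) ^ K1.card * (1 / b) ^ K2.card) =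
      X.card * (2 ^ K1.card * M ^ (r + 3)) / (u ^ 4 * v) := by
    rw [div_pow, mul_pow, div_pow, one_pow, hM, hu, hv, ← pow_mul, ← pow_mul, ← pow_mul, ← pow_mul,
      mul_comm (r+3), mul_comm 4]
    field_simp
  rw [target]
  rcases le_or_gt M v with hMv | hMv
  · have : B = ∅ := by
      rw [hB, Finset.filter_eq_empty_iff]
      rintro x _ ⟨w, hw⟩
      have h3 : |∑ y ∈ fib Y K2 w, chi gd K1 x y| ≤ (fib Y K2 w).card := by
        refine (Finset.abs_sum_le_sum_abs _ _).trans ?_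
        simp [chi_abs]
      have h4 := hY K2 h2 w
      rw [ev] at h4
      have : |∑ y ∈ fib Y K2 w, chi gd K1 x y| * (v ^ (r + 1) * M) ≤
          (fib Y K2 w).card * v ^ (r + 2) := by
        rw [pow_succ v (r+1)]
        gcongr
      linarith
    rw [this]; simp; positivity
  · rw [le_div_iff₀ (by positivity)]
    rcases B.eq_empty_or_nonempty with hBe | ⟨x0, hx0⟩
    · rw [hBe]; simp; positivity
    have hY0 : (0 : ℝ) < Y.card := by
      rcases Y.eq_empty_or_nonempty with e | e
      · obtain ⟨w, hw⟩ := (Finset.mem_filter.1 hx0).2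
        rw [e] at hw
        simp [fib] at hw
      · exact_mod_cast e.card_pos
    have sm := second_moment gd D hP.hD hP.box X Y K1 K2 (X.card / u ^ r)
      (Y.card / (u * v) ^ (r + 2)) (by positivity) (by positivity)
      (by
        intro w
        rw [le_div_iff₀ (by positivity), ← eu]
        exact hX K1 h1 w)
      (by
        intro w
        rw [le_div_iff₀ (by positivity)]
        have := hY (K1 ∪ K2) (Finset.union_subset h1 h2) w
        rwa [Finset.card_union_of_disjoint hd, mul_add, pow_add, eu, ev, ← mul_pow] at this)
    have low : (B.card : ℝ) * (Y.card / (v ^ (r + 1) * M)) ^ 2 ≤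
        ∑ x ∈ X, ∑ γ : K2 → Λ, (∑ y ∈ rfib Y K2 γ, chi gd K1 x y) ^ 2 := by
      refine le_trans ?_ (Finset.sum_le_sum_of_subset_of_nonneg (Finset.filter_subset _ X :  B ⊆ X)
        (fun _ _ _ => Finset.sum_nonneg fun _ _ => sq_nonneg _))
      rw [← nsmul_eq_mul, ← Finset.sum_const]
      refine Finset.sum_le_sum fun x hx => ?_
      obtain ⟨w, hw⟩ := (Finset.mem_filter.1 hx).2
      refine le_trans ?_ (Finset.single_le_sum (f := fun γ => (∑ y ∈ rfib Y K2 γ, chi gd K1 x y) ^ 2)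
        (fun _ _ => sq_nonneg _) (Finset.mem_univ (K2.restrict w)))
      simp only [rfib_restrict]
      rw [← sq_abs (∑ y ∈ fib Y K2 w, chi gd K1 x y)]
      have : Y.card / (v ^ (r + 1) * M) ≤ |∑ y ∈ fib Y K2 w, chi gd K1 x y| := by
        rw [div_le_iff₀ (by positivity)]; exact hw.le
      gcongr
    have a1 := low.trans sm
    have a2 : (B.card : ℝ) * (u ^ (2 * r + 2) * v ^ (r + 2)) ≤
        X.card * D ^ K1.card * (v ^ (r + 1) * M) ^ 2 := by
      have e1 : (B.card : ℝ) * (Y.card / (v ^ (r + 1) * M)) ^ 2 * (u ^ (2 * r + 2) * v ^ (r + 2)) *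
          (v ^ (r + 1) * M) ^ 2 = (B.card : ℝ) * (u ^ (2 * r + 2) * v ^ (r + 2)) * Y.card ^ 2 := by
        rw [div_pow]; field_simp
      have e2 : (X.card / u ^ r * D ^ K1.card * (Y.card * (Y.card / (u * v) ^ (r + 2)))) *
          (u ^ (2 * r + 2) * v ^ (r + 2)) * (v ^ (r + 1) * M) ^ 2 =
          X.card * D ^ K1.card * (v ^ (r + 1) * M) ^ 2 * Y.card ^ 2 := by
        have : u ^ (2 * r + 2) = u ^ r * u ^ (r + 2) := by rw [← pow_add]; congr 1; ring
        rw [mul_pow u v, this]; field_simp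
      have : (B.card : ℝ) * (u ^ (2 * r + 2) * v ^ (r + 2)) * Y.card ^ 2 ≤
          X.card * D ^ K1.card * (v ^ (r + 1) * M) ^ 2 * Y.card ^ 2 := by
        rw [← e1, ← e2]; gcongr
      exact le_of_mul_le_mul_right this (by positivity)
    have hDp : D ^ K1.card * u ^ 2 ≤ 2 ^ K1.card * u ^ (2 * r) := by
      have := pow_le_pow_left₀ (by have := hP.hD; positivity) hP.hDb K1.card
      have e1 : (D * b ^ 2) ^ K1.card = D ^ K1.card * u ^ 2 := by
        rw [mul_pow, hu, ← pow_mul, ← pow_mul, mul_comm 2]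
      have e2 : (2 * (b ^ r) ^ 2) ^ K1.card = 2 ^ K1.card * u ^ (2 * r) := by
        rw [mul_pow, hu, ← pow_mul, ← pow_mul, ← pow_mul]; congr 2; ring
      rwa [e1, e2] at this
    have hvM : v ^ (r + 1) ≤ M ^ (r + 1) := pow_le_pow_left₀ hv0.le hMv.le _
    have a3 : (B.card : ℝ) * (u ^ 4 * v) * (u ^ (2 * r) * v ^ (r + 1)) ≤
        X.card * (2 ^ K1.card * M ^ (r + 3)) * (u ^ (2 * r) * v ^ (r + 1)) := by
      calc _ = (B.card : ℝ) * (u ^ (2 * r + 2) * v ^ (r + 2)) * u ^ 2 := by ring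
        _ ≤ X.card * D ^ K1.card * (v ^ (r + 1) * M) ^ 2 * u ^ 2 := by gcongr
        _ = X.card * (D ^ K1.card * u ^ 2) * (v ^ (r + 1) * M) ^ 2 := by ring
        _ ≤ X.card * (2 ^ K1.card * u ^ (2 * r)) * (v ^ (r + 1) * M) ^ 2 := by gcongr
        _ = X.card * (2 ^ K1.card * u ^ (2 * r)) * (v ^ (r + 1) * M ^ 2) * v ^ (r + 1) := by ring
        _ ≤ X.card * (2 ^ K1.card * u ^ (2 * r)) * (M ^ (r + 1) * M ^ 2) * v ^ (r + 1) := by gcongr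
        _ = _ := by ring
    exact le_of_mul_le_mul_right a3 (by positivity)

theorem prune {b N D : ℝ} {r : ℕ} {gd : Λ → Λ → Bool} (hP : Par ι b N D r gd)
    {X Y : Finset (ι → Λ)} {J : Finset ι} (hX : Dense b X J r) (hY : Dense b Y J (r + 2)) :
    (X.card : ℝ) ≤ 2 * (X.filter (fun x => Good b N r gd Y J x)).card := by
  have hb0 : 0 < b := by linarith [hP.hb64]
  have hN0 : 0 < N := by linarith [hP.hN4]
  have hN1 : 1 ≤ N := by linarith [hP.hN4]
  set q1 := 2 * N ^ (r + 3) / b ^ 4 with hq1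
  set q2 := 1 / b with hq2
  have hq10 : 0 ≤ q1 := by positivity
  have hq20 : 0 ≤ q2 := by positivity
  have hNb : N ≤ b := by
    have : N ^ 1 ≤ N ^ (r + 4) := pow_le_pow_right₀ hN1 (by omega)
    have h3 : 0 < N ^ (r+4) := by positivity
    linarith [hP.hb]
  have b1 : 4 * (Fintype.card ι : ℝ) * q1 ≤ 1 := by
    calc _ ≤ N * q1 := mul_le_mul_of_nonneg_right hP.hN hq10
      _ = 2 * N ^ (r + 4) / b ^ 4 := by rw [hq1]; ring
      _ ≤ b ^ 1 / b ^ 4 := by gcongr; simpa using hP.hb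
      _ ≤ 1 := by
        rw [div_le_one (by positivity)]
        exact pow_le_pow_right₀ (by linarith [hP.hb64]) (by omega)
  have b2 : 4 * (Fintype.card ι : ℝ) * q2 ≤ 1 := by
    calc _ ≤ N * q2 := mul_le_mul_of_nonneg_right hP.hN hq20
      _ ≤ 1 := by rw [hq2, mul_one_div, div_le_one hb0]; exact hNb
  set P := (J.powerset.filter (fun K => K.Nonempty)) ×ˢ J.powerset with hPdef
  let Bad : Finset ι × Finset ι → Finset (ι → Λ) := fun K => if Disjoint K.1 K.2 then
    X.filter (fun x => ∃ w, (Y.card : ℝ) < |∑ y ∈ fib Y K.2 w, chi gd K.1 x y| *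
      (b ^ ((r + 1) * K.2.card) * N ^ K.1.card)) else ∅
  have cov : X.filter (fun x => ¬ Good b N r gd Y J x) ⊆ P.biUnion Bad := by
    intro x hx
    obtain ⟨hxX, hx⟩ := Finset.mem_filter.1 hx
    unfold Good at hx
    push Not at hx
    obtain ⟨K1, h1, h1n, K2, h2, hd, w, hw⟩ := hx
    rw [Finset.mem_biUnion]
    refine ⟨(K1, K2), ?_, ?_⟩
    · simp [hPdef, h1, h1n, h2]
    · simp only [Bad, hd, if_true]
      exact Finset.mem_filter.2 ⟨hxX, w, hw⟩
  have cnt : ((X.filter (fun x => ¬ Good b N r gd Y J x)).card : ℝ) ≤ X.card * (1 / 3 * (4 / 3)) := by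
    calc _ ≤ ((P.biUnion Bad).card : ℝ) := by exact_mod_cast Finset.card_le_card cov
      _ ≤ ∑ K ∈ P, ((Bad K).card : ℝ) := by exact_mod_cast Finset.card_biUnion_le
      _ ≤ ∑ K ∈ P, X.card * (q1 ^ K.1.card * q2 ^ K.2.card) := by
        refine Finset.sum_le_sum fun K hK => ?_
        obtain ⟨hK1, hK2⟩ := Finset.mem_product.1 hK
        simp only [Finset.mem_filter, Finset.mem_powerset] at hK1 hK2
        by_cases hd : Disjoint K.1 K.2
        · simp only [Bad, hd, if_true]
          exact bad_pair hP hX hY hK1.1 hK2 hd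
        · simp only [Bad, hd, if_false]; simp; positivity
      _ = X.card * ((∑ K ∈ J.powerset.filter (fun K => K.Nonempty), q1 ^ K.card) *
            (∑ K ∈ J.powerset, q2 ^ K.card)) := by
        rw [← Finset.mul_sum, hPdef, Finset.sum_product, Finset.sum_mul_sum]
      _ ≤ _ := by
        have := sum_subsets' hq10 b1 J
        have := sum_subsets hq20 b2 J
        gcongr
  have tot := Finset.card_filter_add_card_filter_not (s := X) (fun x => Good b N r gd Y J x)
  have tot' : ((X.filter (fun x => Good b N r gd Y J x)).card : ℝ) +
    (X.filter (fun x => ¬ Good b N r gd Y J x)).card = X.card := by exact_mod_cast tot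
  have : (0 : ℝ) ≤ X.card := by positivity
  linarith

/-- elements of `Y` which are consistent with `z` on `K` -/
noncomputable def cons (gd : Λ → Λ → Bool) (Y : Finset (ι → Λ)) (K : Finset ι) (x : ι → Λ)
    (z : ι → Bool) : Finset (ι → Λ) := Y.filter (fun y => ∀ i ∈ K, gd (x i) (y i) = z i)

theorem cons_card (gd : Λ → Λ → Bool) (Y : Finset (ι → Λ)) (K : Finset ι) (x : ι → Λ)
    (z : ι → Bool) : (2 : ℝ) ^ K.card * (cons gd Y K x z).card =
      ∑ K1 ∈ K.powerset, (∏ i ∈ K1, sg (z i)) * ∑ y ∈ Y, chi gd K1 x y := by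
  have h1 : ((cons gd Y K x z).card : ℝ) = ∑ y ∈ Y, if (∀ i ∈ K, gd (x i) (y i) = z i) then 1 else 0 := by
    rw [cons, Finset.card_filter]; push_cast; rfl
  rw [h1, Finset.mul_sum]
  simp_rw [Finset.mul_sum (s := Y)]
  rw [Finset.sum_comm]
  refine Finset.sum_congr rfl fun y _ => ?_
  have h2 : ∀ i, (1 + sg (z i) * sg (gd (x i) (y i))) = if gd (x i) (y i) = z i then 2 else 0 := by
    intro i
    cases gd (x i) (y i) <;> cases z i <;> norm_num [sg]
  have h3 : ∑ K1 ∈ K.powerset, (∏ i ∈ K1, sg (z i)) * chi gd K1 x y =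
      ∏ i ∈ K, (1 + sg (z i) * sg (gd (x i) (y i))) := by
    rw [Finset.prod_one_add]
    refine Finset.sum_congr rfl fun K1 _ => ?_
    rw [chi, Finset.prod_mul_distrib]
  rw [h3]
  simp_rw [h2]
  split_ifs with h
  · rw [Finset.prod_congr rfl (fun i hi => if_pos (h i hi))]; simp
  · push Not at h
    obtain ⟨i, hi, hne⟩ := h
    rw [Finset.prod_eq_zero hi (if_neg hne)]; simp

theorem Good.est {b N D : ℝ} {r : ℕ} {gd : Λ → Λ → Bool} (hP : Par ι b N D r gd)
    {Y : Finset (ι → Λ)} {J : Finset ι} {x : ι → Λ} (hx : Good b N r gd Y J x)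
    {K K2 : Finset ι} (hK : K ⊆ J) (hK2 : K2 ⊆ J) (hd : Disjoint K K2) (z : ι → Bool) (w : ι → Λ) :
    |(2 : ℝ) ^ K.card * (cons gd (fib Y K2 w) K x z).card - (fib Y K2 w).card| *
      b ^ ((r + 1) * K2.card) ≤ 1 / 3 * Y.card := by
  have hb0 : 0 < b := by linarith [hP.hb64]
  have hN0 : 0 < N := by linarith [hP.hN4]
  rw [cons_card, ← Finset.sum_filter_add_sum_filter_not _ (fun K => K.Nonempty)]
  have : ∑ K1 ∈ K.powerset.filter (fun K => ¬ K.Nonempty),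
      (∏ i ∈ K1, sg (z i)) * ∑ y ∈ fib Y K2 w, chi gd K1 x y = (fib Y K2 w).card := by
    have : K.powerset.filter (fun K => ¬ K.Nonempty) = {∅} := by
      ext K
      simp only [Finset.mem_filter, Finset.mem_powerset, Finset.not_nonempty_iff_eq_empty,
        Finset.mem_singleton]
      constructor
      · exact fun h => h.2
      · rintro rfl; simp
    rw [this]; simp [chi]
  rw [this, add_sub_cancel_right]
  have key : ∑ K1 ∈ K.powerset.filter (fun K => K.Nonempty), (1 / N) ^ K1.card ≤ 1 / 3 :=
    sum_subsets' (by positivity) (by rw [mul_one_div, div_le_one hN0]; exact hP.hN) K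
  calc _ ≤ (∑ K1 ∈ K.powerset.filter (fun K => K.Nonempty),
        |∑ y ∈ fib Y K2 w, chi gd K1 x y|) * b ^ ((r + 1) * K2.card) := by
        gcongr
        refine (Finset.abs_sum_le_sum_abs _ _).trans (le_of_eq ?_)
        refine Finset.sum_congr rfl fun K1 _ => ?_
        rw [abs_mul, Finset.abs_prod]; simp [sg_abs]
    _ ≤ ∑ K1 ∈ K.powerset.filter (fun K => K.Nonempty), (1 / N) ^ K1.card * Y.card := by
        rw [Finset.sum_mul]
        refine Finset.sum_le_sum fun K1 hK1 => ?_
        simp only [Finset.mem_filter, Finset.mem_powerset] at hK1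
        have := hx K1 (hK1.1.trans hK) hK1.2 K2 hK2 (Finset.disjoint_of_subset_left hK1.1 hd) w
        rw [one_div, inv_pow, inv_mul_eq_div, le_div_iff₀ (by positivity), mul_assoc]
        exact this
    _ ≤ _ := by rw [← Finset.sum_mul]; gcongr

theorem fib_empty (Y : Finset (ι → Λ)) (w : ι → Λ) : fib Y ∅ w = Y := by
  simp [fib]

theorem Good.lower {b N D : ℝ} {r : ℕ} {gd : Λ → Λ → Bool} (hP : Par ι b N D r gd)
    {Y : Finset (ι → Λ)} {J : Finset ι} {x : ι → Λ} (hx : Good b N r gd Y J x)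
    {K : Finset ι} (hK : K ⊆ J) (z : ι → Bool) :
    (Y.card : ℝ) ≤ 2 ^ (K.card + 1) * (cons gd Y K x z).card := by
  have := hx.est hP hK (Finset.empty_subset J) (Finset.disjoint_empty_right K) z x
  rw [fib_empty] at this
  simp only [Finset.card_empty, mul_zero, pow_zero, mul_one] at this
  have h1 := (abs_le.1 this).1
  have : (0 : ℝ) ≤ Y.card := by positivity
  rw [pow_succ]
  linarith

theorem Good.dense {b N D : ℝ} {r : ℕ} {gd : Λ → Λ → Bool} (hP : Par ι b N D r gd)
    {Y : Finset (ι → Λ)} {J : Finset ι} {x : ι → Λ} (hY : Dense b Y J (r + 2))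
    (hx : Good b N r gd Y J x)
    {K : Finset ι} (hK : K ⊆ J) (z : ι → Bool) :
    Dense b (cons gd Y K x z) (J \ K) r := by
  intro K2 hK2 w
  have hb0 : 0 < b := by linarith [hP.hb64]
  rcases K2.eq_empty_or_nonempty with rfl | hne
  · rw [fib_empty]; simp
  have hK2J : K2 ⊆ J := hK2.trans Finset.sdiff_subset
  have hd : Disjoint K K2 := by
    rw [Finset.disjoint_left]; intro i hi hi2; exact (Finset.mem_sdiff.1 (hK2 hi2)).2 hi
  have e := hx.est hP hK hK2J hd z w
  have e2 : cons gd (fib Y K2 w) K x z = fib (cons gd Y K x z) K2 w := by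
    ext y; simp only [cons, fib, Finset.mem_filter]; tauto
  rw [e2] at e
  set F := ((fib (cons gd Y K x z) K2 w).card : ℝ) with hF
  have l := hx.lower hP hK z
  have h1 := hY K2 hK2J w
  set v := b ^ K2.card with hv
  have ev : ∀ p : ℕ, b ^ (p * K2.card) = v ^ p := fun p => by rw [hv, mul_comm, pow_mul]
  rw [ev] at e h1 ⊢
  have hvb : 64 ≤ v := by
    calc (64 : ℝ) ≤ b := hP.hb64
      _ = b ^ 1 := (pow_one b).symm
      _ ≤ b ^ K2.card := pow_le_pow_right₀ (by linarith [hP.hb64]) hne.card_pos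
  have hv0 : 0 < v := by positivity
  have e3 : (2 ^ K.card * F - (fib Y K2 w).card) * v ^ (r + 1) ≤ 1 / 3 * Y.card :=
    le_trans (mul_le_mul_of_nonneg_right (le_abs_self _) (by positivity)) e
  have e4 : ((fib Y K2 w).card : ℝ) * v ^ (r + 1) ≤ 1 / 3 * Y.card := by
    have : ((fib Y K2 w).card : ℝ) * v ^ (r + 1) * 64 ≤ (fib Y K2 w).card * v ^ (r + 1) * v := by
      gcongr
    have e5 : ((fib Y K2 w).card : ℝ) * v ^ (r + 1) * v = (fib Y K2 w).card * v ^ (r + 2) := by ring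
    have : (0 : ℝ) ≤ Y.card := by positivity
    linarith
  have e6 : 2 ^ K.card * F * v ^ (r + 1) ≤ 2 / 3 * Y.card := by linarith
  have e7 : 2 ^ K.card * F * v ^ r * 64 ≤ 2 ^ K.card * F * v ^ r * v := by gcongr
  have e8 : 2 ^ K.card * F * v ^ r * v = 2 ^ K.card * F * v ^ (r + 1) := by ring
  have e9 : 2 ^ K.card * (F * v ^ r) ≤ 2 ^ K.card * (cons gd Y K x z).card := by
    rw [pow_succ] at l
    have : (0 : ℝ) ≤ 2 ^ K.card * (cons gd Y K x z).card := by positivity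
    linarith
  exact le_of_mul_le_mul_left e9 (by positivity)

end
end MCT

set_option linter.unusedSectionVars false
namespace MCT

section
variable {Λ ι : Type} [Fintype Λ] [Fintype ι] [DecidableEq ι]

theorem Dense.le {b : ℝ} (hb : 1 ≤ b) {X : Finset (ι → Λ)} {J : Finset ι} {p q : ℕ} (hpq : p ≤ q)
    (h : Dense b X J q) : Dense b X J p := by
  intro K hK w
  refine le_trans ?_ (h K hK w)
  have : b ^ (p * K.card) ≤ b ^ (q * K.card) := pow_le_pow_right₀ hb (Nat.mul_le_mul_right _ hpq)
  gcongr

theorem fib_fib {X : Finset (ι → Λ)} {K K' : Finset ι} (α w : ι → Λ) :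
    ∃ w', fib (fib X K α) K' w ⊆ fib X (K ∪ K') w' := by
  rcases (fib (fib X K α) K' w).eq_empty_or_nonempty with e | ⟨x, hx⟩
  · exact ⟨w, by rw [e]; simp⟩
  · refine ⟨x, fun y hy => ?_⟩
    simp only [fib, Finset.mem_filter, Finset.mem_union] at hx hy ⊢
    refine ⟨hy.1.1, ?_⟩
    rintro i (hi | hi)
    · rw [hy.1.2 i hi, hx.1.2 i hi]
    · rw [hy.2 i hi, hx.2 i hi]

/-- taking a maximal violating fiber -/
theorem max_fib {b : ℝ} (hb : 1 ≤ b) {X : Finset (ι → Λ)} (hne : X.Nonempty) (J : Finset ι) (p : ℕ) :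
    ∃ K ⊆ J, ∃ α, (fib X K α).Nonempty ∧ (X.card : ℝ) ≤ (fib X K α).card * b ^ (p * K.card) ∧
      Dense b (fib X K α) (J \ K) p := by
  have hb0 : 0 < b := by linarith
  obtain ⟨x0, hx0⟩ := hne
  set F := J.powerset.filter (fun K => ∃ α, (X.card : ℝ) ≤ (fib X K α).card * b ^ (p * K.card)) with hF
  have hFne : F.Nonempty := ⟨∅, by
    rw [hF, Finset.mem_filter]
    exact ⟨Finset.empty_mem_powerset _, x0, by rw [fib_empty]; simp⟩⟩
  obtain ⟨K, hK, hmax⟩ := Finset.exists_max_image F Finset.card hFne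
  obtain ⟨hKJ, α, hα⟩ := Finset.mem_filter.1 hK
  rw [Finset.mem_powerset] at hKJ
  have hX0 : (0 : ℝ) < X.card := by exact_mod_cast Finset.card_pos.2 ⟨x0, hx0⟩
  have hpos : (0:ℝ) < (fib X K α).card := by
    by_contra hc
    have : ((fib X K α).card : ℝ) = 0 := le_antisymm (not_lt.1 hc) (by positivity)
    rw [this] at hα; linarith
  refine ⟨K, hKJ, α, Finset.card_pos.1 (by exact_mod_cast hpos), hα, ?_⟩
  intro K' hK' w
  by_contra hc
  push Not at hc
  rcases K'.eq_empty_or_nonempty with rfl | hne'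
  · rw [fib_empty] at hc; simp at hc
  have hd : Disjoint K K' := by
    rw [Finset.disjoint_left]; intro i hi hi2; exact (Finset.mem_sdiff.1 (hK' hi2)).2 hi
  obtain ⟨w', hw'⟩ := fib_fib (X := X) (K := K) (K' := K') α w
  have hcard := Finset.card_union_of_disjoint hd
  have hcl : ((fib (fib X K α) K' w).card : ℝ) ≤ (fib X (K ∪ K') w').card := by
    exact_mod_cast Finset.card_le_card hw'
  have hmem : K ∪ K' ∈ F := by
    rw [hF, Finset.mem_filter, Finset.mem_powerset]
    refine ⟨Finset.union_subset hKJ (hK'.trans Finset.sdiff_subset), w', ?_⟩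
    rw [hcard, mul_add, pow_add]
    calc (X.card : ℝ) ≤ (fib X K α).card * b ^ (p * K.card) := hα
      _ ≤ ((fib (fib X K α) K' w).card * b ^ (p * K'.card)) * b ^ (p * K.card) := by gcongr
      _ ≤ ((fib X (K ∪ K') w').card * b ^ (p * K'.card)) * b ^ (p * K.card) := by gcongr
      _ = _ := by ring
  have := hmax _ hmem
  rw [hcard] at this
  have := hne'.card_pos
  omega

structure Inv (b : ℝ) (r : ℕ) (gd : Λ → Λ → Bool) (𝒲 : Finset (ι → Λ)) (J0 : Finset ι)
    (Adv : Finset ι → (ι → Bool) → Prop) (X Y : Finset (ι → Λ)) (IA IB : Finset ι)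
    (z : ι → Bool) (e : ℕ) : Prop where
  hX : X ⊆ 𝒲
  hY : Y ⊆ 𝒲
  neX : X.Nonempty
  neY : Y.Nonempty
  cX : ∀ x ∈ X, ∀ x' ∈ X, ∀ i ∈ IA, x i = x' i
  cY : ∀ x ∈ Y, ∀ x' ∈ Y, ∀ i ∈ IB, x i = x' i
  hIA : IA ⊆ J0
  hIB : IB ⊆ J0
  disj : Disjoint IA IB
  hz : ∀ x ∈ X, ∀ y ∈ Y, ∀ i ∈ IA ∪ IB, gd (x i) (y i) = z i
  adv : Adv (IA ∪ IB) z
  cnt : (𝒲.card : ℝ) ^ 2 ≤ X.card * Y.card * ((2 * b ^ (r + 2)) ^ (IA.card + IB.card) * 2 ^ e)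

variable {b N D : ℝ} {r : ℕ} {gd : Λ → Λ → Bool} {𝒲 : Finset (ι → Λ)} {J0 : Finset ι}
    {Adv : Finset ι → (ι → Bool) → Prop}

theorem Inv.flip {X Y : Finset (ι → Λ)} {IA IB : Finset ι} {z : ι → Bool} {e : ℕ}
    (h : Inv b r gd 𝒲 J0 Adv X Y IA IB z e) :
    Inv b r (fun u v => gd v u) 𝒲 J0 Adv Y X IB IA z e where
  hX := h.hY
  hY := h.hX
  neX := h.neY
  neY := h.neX
  cX := h.cY
  cY := h.cX
  hIA := h.hIB
  hIB := h.hIA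
  disj := h.disj.symm
  hz := by intro x hx y hy i hi; exact h.hz y hy x hx i (by rwa [Finset.union_comm])
  adv := by rw [Finset.union_comm]; exact h.adv
  cnt := by rw [mul_comm (Y.card : ℝ), add_comm IB.card]; exact h.cnt

def AdvExt (J0 : Finset ι) (Adv : Finset ι → (ι → Bool) → Prop) : Prop :=
  ∀ I z, Adv I z → ∀ j ∈ J0, j ∉ I → ∃ z', (∀ i ∈ I, z' i = z i) ∧ Adv (insert j I) z'

theorem AdvExt.set (h : AdvExt J0 Adv) {I : Finset ι} {z : ι → Bool} (ha : Adv I z)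
    (K : Finset ι) (hK : K ⊆ J0) : ∃ z', (∀ i ∈ I, z' i = z i) ∧ Adv (I ∪ K) z' := by
  induction K using Finset.induction_on with
  | empty => exact ⟨z, fun _ _ => rfl, by rwa [Finset.union_empty]⟩
  | insert j K hj ih =>
    obtain ⟨z1, h1, h2⟩ := ih ((Finset.subset_insert _ _).trans hK)
    by_cases hjI : j ∈ I ∪ K
    · refine ⟨z1, h1, ?_⟩
      rw [Finset.union_insert, Finset.insert_eq_of_mem hjI]; exact h2
    · obtain ⟨z2, h3, h4⟩ := h _ _ h2 j (hK (Finset.mem_insert_self _ _)) hjI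
      refine ⟨z2, fun i hi => ?_, ?_⟩
      · rw [h3 i (Finset.mem_union_left _ hi), h1 i hi]
      · rw [Finset.union_insert]; exact h4

theorem restore (hP : Par ι b N D r gd) (hAE : AdvExt J0 Adv)
    {X Y : Finset (ι → Λ)} {IA IB : Finset ι} {z : ι → Bool} {e : ℕ}
    (h : Inv b r gd 𝒲 J0 Adv X Y IA IB z e)
    (dX : Dense b X (J0 \ (IA ∪ IB)) r) (dY : Dense b Y (J0 \ (IA ∪ IB)) (r + 2))
    (A0 A1 : Set (ι → Λ)) (hA : (X : Set (ι → Λ)) ⊆ A0 ∪ A1) :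
    ∃ X' Y' IA' z', Inv b r gd 𝒲 J0 Adv X' Y' IA' IB z' (e + 3) ∧ X' ⊆ X ∧ Y' ⊆ Y ∧
      ((X' : Set (ι → Λ)) ⊆ A0 ∨ (X' : Set (ι → Λ)) ⊆ A1) ∧
      Dense b X' (J0 \ (IA' ∪ IB)) (r + 2) ∧ Dense b Y' (J0 \ (IA' ∪ IB)) r := by
  have hb1 : 1 ≤ b := by linarith [hP.hb64]
  have hb0 : 0 < b := by linarith
  set J := J0 \ (IA ∪ IB) with hJ
  have hpr := prune hP dX dY
  set X1 := X.filter (fun x => Good b N r gd Y J x) with hX1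
  -- majority part
  obtain ⟨X2, hX2, hX2A, hX2c⟩ : ∃ X2 ⊆ X1, ((X2 : Set (ι → Λ)) ⊆ A0 ∨ (X2 : Set (ι → Λ)) ⊆ A1) ∧
      (X1.card : ℝ) ≤ 2 * X2.card := by
    have hs := Finset.card_filter_add_card_filter_not (s := X1) (fun x => x ∈ A0)
    have hs' : ((X1.filter (fun x => x ∈ A0)).card : ℝ) + (X1.filter (fun x => ¬ x ∈ A0)).card
      = X1.card := by exact_mod_cast hs
    rcases le_total ((X1.filter (fun x => x ∈ A0)).card : ℝ) (X1.filter (fun x => ¬ x ∈ A0)).card with hl | hl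
    · refine ⟨X1.filter (fun x => ¬ x ∈ A0), Finset.filter_subset _ _, Or.inr ?_, by linarith⟩
      intro x hx
      have hx := Finset.mem_filter.1 (Finset.mem_coe.1 hx)
      exact (hA (Finset.mem_coe.2 (Finset.mem_filter.1 hx.1).1)).resolve_left hx.2
    · refine ⟨X1.filter (fun x => x ∈ A0), Finset.filter_subset _ _, Or.inl ?_, by linarith⟩
      intro x hx
      exact (Finset.mem_filter.1 (Finset.mem_coe.1 hx)).2
  have hXpos : (0 : ℝ) < X.card := by exact_mod_cast h.neX.card_pos
  have hX2ne : X2.Nonempty := by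
    rw [← Finset.card_pos]
    have : (0 : ℝ) < X2.card := by linarith
    exact_mod_cast this
  obtain ⟨K, hKJ, α, hfne, hfc, hfd⟩ := max_fib hb1 hX2ne J (r + 2)
  set X3 := fib X2 K α with hX3
  have hX32 : X3 ⊆ X2 := Finset.filter_subset _ _
  have hX31 : X3 ⊆ X1 := hX32.trans hX2
  have hX3X : X3 ⊆ X := hX31.trans (Finset.filter_subset _ _)
  obtain ⟨x0, hx0⟩ := hfne
  have hgood : Good b N r gd Y J x0 := (Finset.mem_filter.1 (hX31 hx0)).2
  have hKJ0 : K ⊆ J0 := hKJ.trans Finset.sdiff_subset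
  have hKI : ∀ i ∈ K, i ∉ IA ∪ IB := fun i hi => (Finset.mem_sdiff.1 (hKJ hi)).2
  obtain ⟨z', hz', hadv'⟩ := hAE.set h.adv K hKJ0
  have hJeq : J \ K = J0 \ (IA ∪ K ∪ IB) := by
    ext i; simp only [hJ, Finset.mem_sdiff, Finset.mem_union]; tauto
  have hlow := hgood.lower hP hKJ z'
  have hdn := hgood.dense hP dY hKJ z'
  set Y3 := cons gd Y K x0 z' with hY3
  have hY3Y : Y3 ⊆ Y := Finset.filter_subset _ _
  have hYpos : (0 : ℝ) < Y.card := by exact_mod_cast h.neY.card_pos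
  have hcK : ∀ x ∈ X3, ∀ i ∈ K, x i = x0 i := by
    intro x hx i hi
    rw [(Finset.mem_filter.1 hx).2 i hi, (Finset.mem_filter.1 hx0).2 i hi]
  rw [hJeq] at hfd hdn
  have hdisjK : Disjoint IA K := by
    rw [Finset.disjoint_right]; intro i hi h'; exact hKI i hi (Finset.mem_union_left _ h')
  refine ⟨X3, Y3, IA ∪ K, z', ?_, hX3X, hY3Y, ?_, hfd, hdn⟩
  · refine
      { hX := hX3X.trans h.hX
        hY := hY3Y.trans h.hY
        neX := ⟨x0, hx0⟩
        neY := ?_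
        cX := ?_
        cY := fun y hy y' hy' => h.cY y (hY3Y hy) y' (hY3Y hy')
        hIA := Finset.union_subset h.hIA hKJ0
        hIB := h.hIB
        disj := ?_
        hz := ?_
        adv := ?_
        cnt := ?_ }
    · rw [← Finset.card_pos]
      by_contra hc
      have : Y3.card = 0 := by omega
      rw [this] at hlow
      simp only [Nat.cast_zero, mul_zero] at hlow
      linarith
    · intro x hx x' hx' i hi
      rcases Finset.mem_union.1 hi with hi | hi
      · exact h.cX x (hX3X hx) x' (hX3X hx') i hi
      · rw [hcK x hx i hi, hcK x' hx' i hi]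
    · rw [Finset.disjoint_union_left]
      refine ⟨h.disj, ?_⟩
      rw [Finset.disjoint_left]; intro i hi h'; exact hKI i hi (Finset.mem_union_right _ h')
    · intro x hx y hy i hi
      by_cases hiK : i ∈ K
      · rw [hcK x hx i hiK]
        exact (Finset.mem_filter.1 hy).2 i hiK
      · have hi' : i ∈ IA ∪ IB := by
          simp only [Finset.mem_union] at hi ⊢; tauto
        rw [hz' i hi']
        exact h.hz x (hX3X hx) y (hY3Y hy) i hi'
    · have : IA ∪ K ∪ IB = IA ∪ IB ∪ K := by
        ext i; simp only [Finset.mem_union]; tauto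
      rw [this]; exact hadv'
    · rw [Finset.card_union_of_disjoint hdisjK]
      have c1 : (X.card : ℝ) ≤ 4 * (X3.card * b ^ ((r + 2) * K.card)) := by linarith
      calc (𝒲.card : ℝ) ^ 2 ≤ X.card * Y.card * ((2 * b ^ (r + 2)) ^ (IA.card + IB.card) * 2 ^ e) := h.cnt
        _ ≤ (4 * (X3.card * b ^ ((r + 2) * K.card))) * (2 ^ (K.card + 1) * Y3.card) *
            ((2 * b ^ (r + 2)) ^ (IA.card + IB.card) * 2 ^ e) := by gcongr
        _ = _ := by
          rw [pow_mul]
          have : IA.card + K.card + IB.card = (IA.card + IB.card) + K.card := by ring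
          rw [this, pow_add _ (IA.card + IB.card) K.card, mul_pow 2 (b ^ (r+2)) K.card]
          ring
  · rcases hX2A with h' | h'
    · exact Or.inl ((Finset.coe_subset.2 hX32).trans h')
    · exact Or.inr ((Finset.coe_subset.2 hX32).trans h')

/-- at the end, everything is possible -/
theorem reach (hP : Par ι b N D r gd) {X Y : Finset (ι → Λ)} {J : Finset ι} (hX : X.Nonempty)
    (hY : Y.Nonempty) (dX : Dense b X J r) (dY : Dense b Y J (r + 2)) (z : ι → Bool) :
    ∃ x ∈ X, ∃ y ∈ Y, ∀ i ∈ J, gd (x i) (y i) = z i := by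
  have hpr := prune hP dX dY
  have hXpos : (0 : ℝ) < X.card := by exact_mod_cast hX.card_pos
  have hYpos : (0 : ℝ) < Y.card := by exact_mod_cast hY.card_pos
  have : (X.filter (fun x => Good b N r gd Y J x)).Nonempty := by
    rw [← Finset.card_pos]
    by_contra hc
    have : (X.filter (fun x => Good b N r gd Y J x)).card = 0 := by omega
    rw [this] at hpr; simp only [Nat.cast_zero, mul_zero] at hpr; linarith
  obtain ⟨x, hx⟩ := this
  obtain ⟨hx, hg⟩ := Finset.mem_filter.1 hx
  have hl := hg.lower hP (le_refl J) z
  have : (cons gd Y J x z).Nonempty := by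
    rw [← Finset.card_pos]
    by_contra hc
    have : (cons gd Y J x z).card = 0 := by omega
    rw [this] at hl; simp only [Nat.cast_zero, mul_zero] at hl; linarith
  obtain ⟨y, hy⟩ := this
  obtain ⟨hy, hz⟩ := Finset.mem_filter.1 hy
  exact ⟨x, hx, y, hy, hz⟩

theorem Inv.size (hb : 0 < b) (hW : ∀ K ⊆ J0, ∀ w, ((fib 𝒲 K w).card : ℝ) * b ^ ((r + 3) * K.card) ≤
      4 ^ K.card * 𝒲.card)
    {X Y : Finset (ι → Λ)} {IA IB : Finset ι} {z : ι → Bool} {e : ℕ}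
    (h : Inv b r gd 𝒲 J0 Adv X Y IA IB z e) :
    (b / 8) ^ (IA ∪ IB).card ≤ 2 ^ e := by
  rw [Finset.card_union_of_disjoint h.disj]
  have hWpos : (0 : ℝ) < 𝒲.card := by exact_mod_cast (h.neX.mono h.hX).card_pos
  have f : ∀ (Z : Finset (ι → Λ)) (I : Finset ι), Z ⊆ 𝒲 → Z.Nonempty → I ⊆ J0 →
      (∀ x ∈ Z, ∀ x' ∈ Z, ∀ i ∈ I, x i = x' i) →
      (Z.card : ℝ) * b ^ ((r + 3) * I.card) ≤ 4 ^ I.card * 𝒲.card := by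
    rintro Z I hZ ⟨x0, hx0⟩ hI hc
    refine le_trans ?_ (hW I hI x0)
    have : Z ⊆ fib 𝒲 I x0 := fun x hx => Finset.mem_filter.2 ⟨hZ hx, fun i hi => hc x hx x0 hx0 i hi⟩
    have : (Z.card : ℝ) ≤ (fib 𝒲 I x0).card := by exact_mod_cast Finset.card_le_card this
    gcongr
  have fX := f X IA h.hX h.neX h.hIA h.cX
  have fY := f Y IB h.hY h.neY h.hIB h.cY
  set k := IA.card + IB.card with hk
  have hm := mul_le_mul fX fY (by positivity) (by positivity)
  have e1 : (X.card : ℝ) * b ^ ((r + 3) * IA.card) * (Y.card * b ^ ((r + 3) * IB.card)) =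
      X.card * Y.card * (b ^ (r + 2)) ^ k * b ^ k := by
    rw [← pow_mul, mul_assoc _ (b ^ _) (b ^ k), ← pow_add, hk]
    have : (r + 2) * (IA.card + IB.card) + (IA.card + IB.card) = (r+3) * IA.card + (r+3) * IB.card := by ring
    rw [this, pow_add]; ring
  have e2 : (4 : ℝ) ^ IA.card * 𝒲.card * (4 ^ IB.card * 𝒲.card) = 4 ^ k * 𝒲.card ^ 2 := by
    rw [hk, pow_add]; ring
  rw [e1, e2] at hm
  have hXpos : (0 : ℝ) < X.card := by exact_mod_cast h.neX.card_pos
  have hYpos : (0 : ℝ) < Y.card := by exact_mod_cast h.neY.card_pos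
  have h3 : X.card * Y.card * (b ^ (r + 2)) ^ k * b ^ k ≤
      X.card * Y.card * (b ^ (r + 2)) ^ k * (8 ^ k * 2 ^ e) := by
    calc _ ≤ 4 ^ k * (𝒲.card : ℝ) ^ 2 := hm
      _ ≤ 4 ^ k * (X.card * Y.card * ((2 * b ^ (r + 2)) ^ k * 2 ^ e)) := by
        gcongr; exact h.cnt
      _ = _ := by
        have : (8 : ℝ) ^ k = 4 ^ k * 2 ^ k := by rw [← mul_pow]; norm_num
        rw [this, mul_pow]; ring
  have h4 := le_of_mul_le_mul_left h3 (by positivity)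
  rw [div_pow, div_le_iff₀ (by positivity)]
  linarith

def AdvEnd {O : Type} (rel : (ι → Λ) → (ι → Λ) → O → Prop) (gd : Λ → Λ → Bool) (𝒲 : Finset (ι → Λ))
    (J0 : Finset ι) (Adv : Finset ι → (ι → Bool) → Prop) (Q : ℕ) : Prop :=
  ∀ I z, Adv I z → I.card < Q → ∀ o, ∃ z' : ι → Bool, (∀ i ∈ I, z' i = z i) ∧
    ∀ x ∈ 𝒲, ∀ y ∈ 𝒲, (∀ i ∈ J0, gd (x i) (y i) = z' i) → ¬ rel x y o

theorem lifting_aux {O : Type} {rel : (ι → Λ) → (ι → Λ) → O → Prop} {Q : ℕ}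
    (hP : Par ι b N D r gd) (hAE : AdvExt J0 Adv) (hEnd : AdvEnd rel gd 𝒲 J0 Adv Q)
    (hW : ∀ K ⊆ J0, ∀ w, ((fib 𝒲 K w).card : ℝ) * b ^ ((r + 3) * K.card) ≤ 4 ^ K.card * 𝒲.card)
    {A B : Set (ι → Λ)} {d : ℕ} (hs : SolD rel A B d) :
    ∀ {X Y : Finset (ι → Λ)} {IA IB : Finset ι} {z : ι → Bool} {e : ℕ},
      Inv b r gd 𝒲 J0 Adv X Y IA IB z e → (X : Set (ι → Λ)) ⊆ A → (Y : Set (ι → Λ)) ⊆ B →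
      (Dense b X (J0 \ (IA ∪ IB)) r ∧ Dense b Y (J0 \ (IA ∪ IB)) (r + 2) ∨
       Dense b X (J0 \ (IA ∪ IB)) (r + 2) ∧ Dense b Y (J0 \ (IA ∪ IB)) r) →
      (b / 8) ^ Q ≤ 2 ^ (e + 6 * d) := by
  have hb1 : 1 ≤ b := by linarith [hP.hb64]
  have hb0 : 0 < b := by linarith
  -- restoring for Bob
  have restoreB : ∀ {X Y : Finset (ι → Λ)} {IA IB : Finset ι} {z : ι → Bool} {e : ℕ},
      Inv b r gd 𝒲 J0 Adv X Y IA IB z e → Dense b X (J0 \ (IA ∪ IB)) (r + 2) →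
      Dense b Y (J0 \ (IA ∪ IB)) r → ∀ B0 B1 : Set (ι → Λ), (Y : Set (ι → Λ)) ⊆ B0 ∪ B1 →
      ∃ X' Y' IB' z', Inv b r gd 𝒲 J0 Adv X' Y' IA IB' z' (e + 3) ∧ X' ⊆ X ∧ Y' ⊆ Y ∧
      ((Y' : Set (ι → Λ)) ⊆ B0 ∨ (Y' : Set (ι → Λ)) ⊆ B1) ∧
      Dense b X' (J0 \ (IA ∪ IB')) r ∧ Dense b Y' (J0 \ (IA ∪ IB')) (r + 2) := by
    intro X Y IA IB z e h dX dY B0 B1 hB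
    rw [Finset.union_comm] at dX dY
    obtain ⟨Y', X', IB', z', h1, h2, h3, h4, h5, h6⟩ := restore hP.flip hAE h.flip dY dX B0 B1 hB
    rw [Finset.union_comm] at h5 h6
    exact ⟨X', Y', IB', z', h1.flip, h3, h2, h4, h6, h5⟩
  have mono2 : ∀ e1 e2 : ℕ, e1 ≤ e2 → (b / 8) ^ Q ≤ (2:ℝ) ^ e1 → (b / 8) ^ Q ≤ (2:ℝ) ^ e2 :=
    fun e1 e2 h h' => h'.trans (pow_le_pow_right₀ (by norm_num) h)
  induction hs with
  | @empA A B k h0 =>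
    intro X Y IA IB z e h hA hB _
    obtain ⟨x, hx⟩ := h.neX
    exact absurd (hA hx) (by rw [h0]; simp)
  | @empB A B k h0 =>
    intro X Y IA IB z e h hA hB _
    obtain ⟨x, hx⟩ := h.neY
    exact absurd (hB hx) (by rw [h0]; simp)
  | @leaf A B k o ho =>
    intro X Y IA IB z e h hA hB hd
    by_cases hQ : Q ≤ (IA ∪ IB).card
    · have := h.size hb0 hW
      refine mono2 e _ (by omega) (le_trans ?_ this)
      exact pow_le_pow_right₀ (by linarith [hP.hb64]) hQ
    · exfalso
      obtain ⟨z', hz', hno⟩ := hEnd _ _ h.adv (by omega) o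
      have : ∃ x ∈ X, ∃ y ∈ Y, ∀ i ∈ J0 \ (IA ∪ IB), gd (x i) (y i) = z' i := by
        rcases hd with ⟨d1, d2⟩ | ⟨d1, d2⟩
        · exact reach hP h.neX h.neY d1 d2 z'
        · obtain ⟨y, hy, x, hx, h'⟩ := reach hP.flip h.neY h.neX d2 d1 z'
          exact ⟨x, hx, y, hy, h'⟩
      obtain ⟨x, hx, y, hy, hxy⟩ := this
      refine hno x (h.hX hx) y (h.hY hy) ?_ (ho x (hA hx) y (hB hy))
      intro i hi
      by_cases hiI : i ∈ IA ∪ IB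
      · rw [h.hz x hx y hy i hiI, hz' i hiI]
      · exact hxy i (Finset.mem_sdiff.2 ⟨hi, hiI⟩)
  | @splitA A A0 A1 B k hc _ _ ih0 ih1 =>
    have main : ∀ {X Y : Finset (ι → Λ)} {IA IB : Finset ι} {z : ι → Bool} {e : ℕ},
        Inv b r gd 𝒲 J0 Adv X Y IA IB z e → (X : Set (ι → Λ)) ⊆ A → (Y : Set (ι → Λ)) ⊆ B →
        Dense b X (J0 \ (IA ∪ IB)) r → Dense b Y (J0 \ (IA ∪ IB)) (r + 2) →
        (b / 8) ^ Q ≤ (2 : ℝ) ^ (e + 3 + 6 * k) := by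
      intro X Y IA IB z e h hA hB d1 d2
      obtain ⟨X', Y', IA', z', h1, h2, h3, h4, h5, h6⟩ := restore hP hAE h d1 d2 A0 A1 (hA.trans hc)
      have hB' : (Y' : Set (ι → Λ)) ⊆ B := (Finset.coe_subset.2 h3).trans hB
      rcases h4 with h4 | h4
      · exact ih0 h1 h4 hB' (Or.inr ⟨h5, h6⟩)
      · exact ih1 h1 h4 hB' (Or.inr ⟨h5, h6⟩)
    intro X Y IA IB z e h hA hB hd
    rcases hd with ⟨d1, d2⟩ | ⟨d1, d2⟩
    · exact mono2 _ _ (by omega) (main h hA hB d1 d2)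
    · obtain ⟨X', Y', IB', z', h1, h2, h3, -, h5, h6⟩ := restoreB h d1 d2 Set.univ ∅ (by simp)
      exact mono2 _ _ (by omega) (main h1 ((Finset.coe_subset.2 h2).trans hA)
        ((Finset.coe_subset.2 h3).trans hB) h5 h6)
  | @splitB A B B0 B1 k hc _ _ ih0 ih1 =>
    have main : ∀ {X Y : Finset (ι → Λ)} {IA IB : Finset ι} {z : ι → Bool} {e : ℕ},
        Inv b r gd 𝒲 J0 Adv X Y IA IB z e → (X : Set (ι → Λ)) ⊆ A → (Y : Set (ι → Λ)) ⊆ B →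
        Dense b X (J0 \ (IA ∪ IB)) (r + 2) → Dense b Y (J0 \ (IA ∪ IB)) r →
        (b / 8) ^ Q ≤ (2 : ℝ) ^ (e + 3 + 6 * k) := by
      intro X Y IA IB z e h hA hB d1 d2
      obtain ⟨X', Y', IB', z', h1, h2, h3, h4, h5, h6⟩ := restoreB h d1 d2 B0 B1 (hB.trans hc)
      have hA' : (X' : Set (ι → Λ)) ⊆ A := (Finset.coe_subset.2 h2).trans hA
      rcases h4 with h4 | h4
      · exact ih0 h1 hA' h4 (Or.inl ⟨h5, h6⟩)
      · exact ih1 h1 hA' h4 (Or.inl ⟨h5, h6⟩)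
    intro X Y IA IB z e h hA hB hd
    rcases hd with ⟨d1, d2⟩ | ⟨d1, d2⟩
    · obtain ⟨X', Y', IA', z', h1, h2, h3, -, h5, h6⟩ := restore hP hAE h d1 d2 Set.univ ∅ (by simp)
      exact mono2 _ _ (by omega) (main h1 ((Finset.coe_subset.2 h2).trans hA)
        ((Finset.coe_subset.2 h3).trans hB) h5 h6)
    · exact mono2 _ _ (by omega) (main h hA hB d1 d2)

theorem lifting {O : Type} {rel : (ι → Λ) → (ι → Λ) → O → Prop} {Q : ℕ}
    (hP : Par ι b N D r gd) (hAE : AdvExt J0 Adv) (hEnd : AdvEnd rel gd 𝒲 J0 Adv Q)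
    (hne : 𝒲.Nonempty) (z : ι → Bool) (hadv : Adv ∅ z)
    (hW : ∀ K ⊆ J0, ∀ w, ((fib 𝒲 K w).card : ℝ) * b ^ ((r + 3) * K.card) ≤ 4 ^ K.card * 𝒲.card)
    {A B : Set (ι → Λ)} {d : ℕ} (hs : SolD rel A B d) (hA : (𝒲 : Set (ι → Λ)) ⊆ A)
    (hB : (𝒲 : Set (ι → Λ)) ⊆ B) :
      (b / 8) ^ Q ≤ 2 ^ (6 * d) := by
  have hb1 : 1 ≤ b := by linarith [hP.hb64]
  have hb0 : 0 < b := by linarith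
  have dd : Dense b 𝒲 J0 (r + 2) := by
    intro K hK w
    have h1 := hW K hK w
    rw [show (r + 3) * K.card = (r + 2) * K.card + K.card by ring, pow_add, ← mul_assoc] at h1
    have h2 : (4 : ℝ) ^ K.card ≤ b ^ K.card := pow_le_pow_left₀ (by norm_num) (by linarith [hP.hb64]) _
    have h3 : ((fib 𝒲 K w).card : ℝ) * b ^ ((r + 2) * K.card) * b ^ K.card ≤ 𝒲.card * b ^ K.card := by
      refine h1.trans ?_
      rw [mul_comm]; gcongr
    exact le_of_mul_le_mul_right h3 (by positivity)
  have := lifting_aux hP hAE hEnd hW hs (X := 𝒲) (Y := 𝒲) (IA := ∅) (IB := ∅) (z := z) (e := 0)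
    { hX := le_refl _
      hY := le_refl _
      neX := hne
      neY := hne
      cX := by simp
      cY := by simp
      hIA := by simp
      hIB := by simp
      disj := by simp
      hz := by simp
      adv := by simpa using hadv
      cnt := by simp [sq] } hA hB (Or.inl ⟨by simpa using dd.le hb1 (by omega), by simpa using dd⟩)
  simpa using this

end
end MCT

set_option linter.unusedSectionVars false
namespace MCT

theorem SolD.comap {X Y O X' Y' : Type} {rel : X → Y → O → Prop} (φ : X' → X) (ψ : Y' → Y)
    {A : Set X} {B : Set Y} {d : ℕ} (h : SolD rel A B d) :
    SolD (fun x y o => rel (φ x) (ψ y) o) (φ ⁻¹' A) (ψ ⁻¹' B) d := by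
  induction h with
  | empA h => exact SolD.empA (by rw [h]; rfl)
  | empB h => exact SolD.empB (by rw [h]; rfl)
  | leaf o h => exact SolD.leaf o fun x hx y hy => h _ hx _ hy
  | splitA h _ _ ih1 ih2 => exact SolD.splitA (fun x hx => h hx) ih1 ih2
  | splitB h _ _ ih1 ih2 => exact SolD.splitB (fun x hx => h hx) ih1 ih2

theorem Sol.comap {X Y O X' Y' : Type} {rel : X → Y → O → Prop} (φ : X' → X) (ψ : Y' → Y)
    {A : Set X} {B : Set Y} {d : ℕ} (h : Sol rel A B d) :
    Sol (fun x y o => rel (φ x) (ψ y) o) (φ ⁻¹' A) (ψ ⁻¹' B) d := by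
  induction h with
  | empA h => exact Sol.empA (by rw [h]; rfl)
  | empB h => exact Sol.empB (by rw [h]; rfl)
  | leaf o h => exact Sol.leaf o fun x hx y hy => h _ hx _ hy
  | splitA h _ _ ih1 ih2 => exact Sol.splitA (fun x hx => h hx) ih1 ih2
  | splitB h _ _ ih1 ih2 => exact Sol.splitB (fun x hx => h hx) ih1 ih2

theorem Sol.mapOut {X Y O O' : Type} {rel : X → Y → O → Prop} {rel' : X → Y → O' → Prop} (ρ : O → O')
    (hρ : ∀ x y o, rel x y o → rel' x y (ρ o))
    {A : Set X} {B : Set Y} {d : ℕ} (h : Sol rel A B d) : Sol rel' A B d := by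
  induction h with
  | empA h => exact Sol.empA h
  | empB h => exact Sol.empB h
  | leaf o h => exact Sol.leaf (ρ o) fun x hx y hy => hρ _ _ _ (h _ hx _ hy)
  | splitA h _ _ ih1 ih2 => exact Sol.splitA h ih1 ih2
  | splitB h _ _ ih1 ih2 => exact Sol.splitB h ih1 ih2

theorem Sol.finite {X Y O : Type} [Fintype X] [Fintype Y] {rel : X → Y → O → Prop}
    (htot : ∀ x y, ∃ o, rel x y o) (A : Finset X) (B : Finset Y) :
    Sol rel (A : Set X) (B : Set Y) (A.card * B.card) := by
  induction A using Finset.induction_on with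
  | empty => exact Sol.empA (by simp)
  | insert x A hx ih =>
    have hB : Sol rel {x} (B : Set Y) B.card := by
      clear ih
      induction B using Finset.induction_on with
      | empty => exact Sol.empB (by simp)
      | insert y B hy ih =>
        rw [Finset.card_insert_of_notMem hy]
        obtain ⟨o, ho⟩ := htot x y
        refine Sol.splitB (B0 := (B : Set Y)) (B1 := {y}) (by intro z; simp) ih
          (Sol.leaf (k := 0) o ?_)
        rintro _ rfl _ rfl
        exact ho
    rw [Finset.card_insert_of_notMem hx, Nat.add_mul, one_mul]
    exact Sol.splitA (A0 := (A : Set X)) (A1 := {x}) (by intro z; simp) ih hB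

/-! ### Minimal size of rectangles -/

section
variable {m : ℕ} {f : (Fin m → Bool) → Bool}

noncomputable def mLs (f : (Fin m → Bool) → Bool) (A : Set {a // f a = true}) (B : Set {b // f b = false}) : ℕ :=
  sInf {k | Sol (mKW f) A B k}

theorem mKW_total (hf : Monotone f) (x : {a // f a = true}) (y : {b // f b = false}) :
    ∃ i, mKW f x y i := by
  by_contra hc
  push Not at hc
  have : x.1 ≤ y.1 := by
    intro i
    have := hc i
    unfold mKW at this
    cases h1 : x.1 i <;> cases h2 : y.1 i <;> simp_all
  have h := hf this
  rw [x.2, y.2] at h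
  exact absurd h (by decide)

theorem sol_card (hf : Monotone f) (A : Set {a // f a = true}) (B : Set {b // f b = false}) :
    Sol (mKW f) A B (2 ^ m * 2 ^ m) := by
  have h := Sol.finite (mKW_total hf) (Finset.univ : Finset {a // f a = true})
    (Finset.univ : Finset {b // f b = false})
  refine h.mono (by simp) (by simp) ?_
  have e : Fintype.card (Fin m → Bool) = 2 ^ m := by simp
  refine Nat.mul_le_mul ?_ ?_
  · rw [Finset.card_univ, ← e]; exact Fintype.card_subtype_le _
  · rw [Finset.card_univ, ← e]; exact Fintype.card_subtype_le _

theorem mLs_sol (hf : Monotone f) (A : Set {a // f a = true}) (B : Set {b // f b = false}) :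
    Sol (mKW f) A B (mLs f A B) := Nat.sInf_mem (s := {k | Sol (mKW f) A B k}) ⟨_, sol_card hf A B⟩

theorem mLs_le {A : Set {a // f a = true}} {B : Set {b // f b = false}} {k : ℕ}
    (h : Sol (mKW f) A B k) : mLs f A B ≤ k := Nat.sInf_le h

theorem mLs_mono (hf : Monotone f) {A A' : Set {a // f a = true}} {B B' : Set {b // f b = false}}
    (hA : A ⊆ A') (hB : B ⊆ B') : mLs f A B ≤ mLs f A' B' :=
  mLs_le ((mLs_sol hf A' B').mono hA hB le_rfl)

theorem mLs_subA (hf : Monotone f) {A A0 A1 : Set {a // f a = true}} {B : Set {b // f b = false}}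
    (h : A ⊆ A0 ∪ A1) : mLs f A B ≤ mLs f A0 B + mLs f A1 B :=
  mLs_le (Sol.splitA h (mLs_sol hf _ _) (mLs_sol hf _ _))

theorem mLs_subB (hf : Monotone f) {A : Set {a // f a = true}} {B B0 B1 : Set {b // f b = false}}
    (h : B ⊆ B0 ∪ B1) : mLs f A B ≤ mLs f A B0 + mLs f A B1 :=
  mLs_le (Sol.splitB h (mLs_sol hf _ _) (mLs_sol hf _ _))

theorem mLs_row (hf : Monotone f) (A : Set {a // f a = true}) (B : Set {b // f b = false}) (i : Fin m) :
    mLs f A B ≤ mLs f (A ∩ {a | a.1 i = false}) B + (mLs f A (B ∩ {b | b.1 i = true}) + 1) := by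
  refine mLs_le (Sol.splitA (A0 := A ∩ {a | a.1 i = false}) (A1 := A ∩ {a | a.1 i = true}) ?_
    (mLs_sol hf _ _) (Sol.splitB (B0 := B ∩ {b | b.1 i = true}) (B1 := B ∩ {b | b.1 i = false}) ?_ ?_ ?_))
  · intro a ha
    cases h : a.1 i
    · exact Or.inl ⟨ha, h⟩
    · exact Or.inr ⟨ha, h⟩
  · intro a ha
    cases h : a.1 i
    · exact Or.inr ⟨ha, h⟩
    · exact Or.inl ⟨ha, h⟩
  · exact (mLs_sol hf _ _).mono Set.inter_subset_left subset_rfl le_rfl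
  · exact Sol.leaf (k := 0) i fun a ha b hb => ⟨ha.2, hb.2⟩

theorem mLs_pos {A : Set {a // f a = true}} {B : Set {b // f b = false}} (h : 1 ≤ mLs f A B) :
    A.Nonempty ∧ B.Nonempty := by
  constructor
  · rw [Set.nonempty_iff_ne_empty]; intro hc
    have := mLs_le (Sol.empA (rel := mKW f) (B := B) (k := 0) hc); omega
  · rw [Set.nonempty_iff_ne_empty]; intro hc
    have := mLs_le (Sol.empB (rel := mKW f) (A := A) (k := 0) hc); omega

/-! ### Hard collections -/

variable {ℓ : ℕ} {Λ : Type} [Fintype Λ]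

structure HC (f : (Fin m → Bool) → Bool) (FA : (Fin m × Fin ℓ → Λ) → Set {a // f a = true})
    (FB : (Fin m × Fin ℓ → Λ) → Set {b // f b = false}) (R : Finset (Fin m))
    (𝒲 : Finset (Fin m × Fin ℓ → Λ)) (AA : (Fin m × Fin ℓ → Λ) → Set {a // f a = true})
    (BB : (Fin m × Fin ℓ → Λ) → Set {b // f b = false}) (h : ℝ) : Prop where
  sA : ∀ W, AA W ⊆ FA W
  sB : ∀ W, BB W ⊆ FB W
  big : ∀ W ∈ 𝒲, h ≤ mLs f (AA W) (BB W) + 1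
  row : ∀ i ∈ R, (∀ W ∈ 𝒲, ∀ a ∈ AA W, a.1 i = false) ∨ (∀ W ∈ 𝒲, ∀ b ∈ BB W, b.1 i = true)

theorem HC.step (hf : Monotone f) {FA : (Fin m × Fin ℓ → Λ) → Set {a // f a = true}}
    {FB : (Fin m × Fin ℓ → Λ) → Set {b // f b = false}} {R : Finset (Fin m)}
    {𝒲 : Finset (Fin m × Fin ℓ → Λ)} {AA BB} {h : ℝ} (hc : HC f FA FB R 𝒲 AA BB h) (i : Fin m) :
    ∃ 𝒲' AA' BB', HC f FA FB (insert i R) 𝒲' AA' BB' (h / 2) ∧ 𝒲' ⊆ 𝒲 ∧ 𝒲.card ≤ 2 * 𝒲'.card := by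
  set P : (Fin m × Fin ℓ → Λ) → Prop := fun W => h / 2 ≤ mLs f (AA W ∩ {a | a.1 i = false}) (BB W) + 1
    with hP
  have hs := Finset.card_filter_add_card_filter_not (s := 𝒲) P
  rcases le_total (𝒲.filter P).card (𝒲.filter (fun W => ¬ P W)).card with hl | hl
  · refine ⟨𝒲.filter (fun W => ¬ P W), AA, fun W => BB W ∩ {b | b.1 i = true}, ?_,
      Finset.filter_subset _ _, by omega⟩
    refine ⟨hc.sA, fun W => Set.inter_subset_left.trans (hc.sB W), ?_, ?_⟩
    · intro W hW
      obtain ⟨hW, hn⟩ := Finset.mem_filter.1 hW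
      simp only [hP] at hn
      push Not at hn
      have h1 := hc.big W hW
      have h2 : (mLs f (AA W) (BB W) : ℝ) ≤ mLs f (AA W ∩ {a | a.1 i = false}) (BB W) +
        (mLs f (AA W) (BB W ∩ {b | b.1 i = true}) + 1) := by exact_mod_cast mLs_row hf (AA W) (BB W) i
      linarith
    · intro j hj
      rcases Finset.mem_insert.1 hj with rfl | hj
      · exact Or.inr fun W _ b hb => hb.2
      · rcases hc.row j hj with h1 | h1
        · exact Or.inl fun W hW a ha => h1 W (Finset.mem_filter.1 hW).1 a ha
        · exact Or.inr fun W hW a ha => h1 W (Finset.mem_filter.1 hW).1 a ha.1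
  · refine ⟨𝒲.filter P, fun W => AA W ∩ {a | a.1 i = false}, BB, ?_,
      Finset.filter_subset _ _, by omega⟩
    refine ⟨fun W => Set.inter_subset_left.trans (hc.sA W), hc.sB, ?_, ?_⟩
    · intro W hW
      exact (Finset.mem_filter.1 hW).2
    · intro j hj
      rcases Finset.mem_insert.1 hj with rfl | hj
      · exact Or.inl fun W _ b hb => hb.2
      · rcases hc.row j hj with h1 | h1
        · exact Or.inl fun W hW a ha => h1 W (Finset.mem_filter.1 hW).1 a ha.1
        · exact Or.inr fun W hW a ha => h1 W (Finset.mem_filter.1 hW).1 a ha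

theorem HC.steps (hf : Monotone f) {FA : (Fin m × Fin ℓ → Λ) → Set {a // f a = true}}
    {FB : (Fin m × Fin ℓ → Λ) → Set {b // f b = false}} {R : Finset (Fin m)}
    {𝒲 : Finset (Fin m × Fin ℓ → Λ)} {AA BB} {h : ℝ} (hc : HC f FA FB R 𝒲 AA BB h)
    (I : Finset (Fin m)) :
    ∃ 𝒲' AA' BB', HC f FA FB (R ∪ I) 𝒲' AA' BB' (h / 2 ^ I.card) ∧ 𝒲' ⊆ 𝒲 ∧
      𝒲.card ≤ 2 ^ I.card * 𝒲'.card := by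
  induction I using Finset.induction_on with
  | empty => exact ⟨𝒲, AA, BB, by simpa using hc, subset_rfl, by simp⟩
  | insert i I hi ih =>
    obtain ⟨𝒲1, AA1, BB1, h1, h2, h3⟩ := ih
    obtain ⟨𝒲2, AA2, BB2, h4, h5, h6⟩ := h1.step hf i
    refine ⟨𝒲2, AA2, BB2, ?_, h5.trans h2, ?_⟩
    · rw [Finset.union_insert, Finset.card_insert_of_notMem hi, pow_succ, ← div_div]; exact h4
    · rw [Finset.card_insert_of_notMem hi, pow_succ]
      calc _ ≤ 2 ^ I.card * 𝒲1.card := h3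
        _ ≤ 2 ^ I.card * (2 * 𝒲2.card) := Nat.mul_le_mul_left _ h6
        _ = _ := by ring

theorem pigeon {ι : Type} [Fintype ι] [DecidableEq ι] [Nonempty Λ] (X : Finset (ι → Λ)) (T : Finset ι) :
    ∃ α, (X.card : ℝ) ≤ (fib X T α).card * (Fintype.card Λ : ℝ) ^ T.card := by
  have hA : (0 : ℝ) < Fintype.card Λ := by exact_mod_cast Fintype.card_pos
  have tot : ∑ w : T → Λ, ((rfib X T w).card : ℝ) = X.card := by
    rw [Finset.card_eq_sum_card_fiberwise (s := X) (f := fun y => T.restrict y) (t := Finset.univ)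
          (fun _ _ => Finset.mem_coe.2 (Finset.mem_univ _))]
    push_cast
    rfl
  have : ∃ w ∈ (Finset.univ : Finset (T → Λ)),
      (X.card : ℝ) / (Fintype.card Λ : ℝ) ^ T.card ≤ (rfib X T w).card := by
    refine Finset.exists_le_of_sum_le Finset.univ_nonempty (le_of_eq ?_)
    rw [tot, Finset.sum_const, Finset.card_univ, Fintype.card_fun, Fintype.card_coe, nsmul_eq_mul]
    push_cast
    field_simp
  obtain ⟨w, -, hw⟩ := this
  refine ⟨fun i => if h : i ∈ T then w ⟨i, h⟩ else Classical.arbitrary Λ, ?_⟩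
  rw [← div_le_iff₀ (by positivity), ← rfib_restrict]
  have e : (T.restrict fun i => if h : i ∈ T then w ⟨i, h⟩ else Classical.arbitrary Λ) = w := by
    funext ⟨i, hi⟩
    simp [Finset.restrict, hi]
  rw [e]
  exact hw

theorem const_card {ι : Type} [Fintype ι] [DecidableEq ι] (X : Finset (ι → Λ)) (J : Finset ι)
    (h : ∀ x ∈ X, ∀ x' ∈ X, ∀ i, i ∉ J → x i = x' i) : X.card ≤ Fintype.card Λ ^ J.card := by
  have : X.card ≤ (Finset.univ : Finset (J → Λ)).card := by
    refine Finset.card_le_card_of_injOn (fun x => J.restrict x) (fun _ _ => by simp) ?_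
    intro x hx x' hx' he
    funext i
    by_cases hi : i ∈ J
    · exact congrFun he ⟨i, hi⟩
    · exact h x hx x' hx' i hi
  simpa [Finset.card_univ, Fintype.card_fun] using this

def rowsOf (R : Finset (Fin m)) : Finset (Fin m × Fin ℓ) := R ×ˢ Finset.univ

theorem hard_collection [Nonempty Λ] (hf : Monotone f)
    (FA : (Fin m × Fin ℓ → Λ) → Set {a // f a = true})
    (FB : (Fin m × Fin ℓ → Λ) → Set {b // f b = false}) (h : ℝ) (h0 : 0 < h)
    (hbig : 2 * (Fintype.card Λ : ℝ) ^ (m * ℓ) ≤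
      (Finset.univ.filter (fun W => h ≤ mLs f (FA W) (FB W) + 1)).card * h) :
    ∃ (R : Finset (Fin m)) (𝒲 : Finset (Fin m × Fin ℓ → Λ))
      (a : (Fin m × Fin ℓ → Λ) → {a // f a = true}) (b : (Fin m × Fin ℓ → Λ) → {b // f b = false}),
      𝒲.Nonempty ∧ (∀ W ∈ 𝒲, a W ∈ FA W ∧ b W ∈ FB W) ∧
      (∀ i ∈ R, ∀ W ∈ 𝒲, ∀ W' ∈ 𝒲, ¬ ((a W).1 i = true ∧ (b W').1 i = false)) ∧
      (∀ K ⊆ rowsOf Rᶜ, ∀ w, ((fib 𝒲 K w).card : ℝ) * (Fintype.card Λ : ℝ) ^ K.card ≤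
        4 ^ K.card * 𝒲.card) := by
  have hA : (0 : ℝ) < Fintype.card Λ := by exact_mod_cast Fintype.card_pos
  set A := (Fintype.card Λ : ℝ) with hAdef
  set P : Finset (Fin m) → Prop := fun R => ∃ (𝒲 : Finset (Fin m × Fin ℓ → Λ)) (AA : (Fin m × Fin ℓ → Λ) → Set {a // f a = true})
    (BB : (Fin m × Fin ℓ → Λ) → Set {b // f b = false}) (h : ℝ), 0 < h ∧ HC f FA FB R 𝒲 AA BB h ∧
    (∀ x ∈ 𝒲, ∀ x' ∈ 𝒲, ∀ p, p.1 ∈ R → x p = x' p) ∧ 2 * A ^ (Rᶜ.card * ℓ) ≤ 𝒲.card * h with hP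
  have hP0 : P ∅ := by
    refine ⟨Finset.univ.filter (fun W => h ≤ mLs f (FA W) (FB W) + 1), FA, FB, h, h0,
      ⟨fun W => subset_rfl, fun W => subset_rfl, ?_, by simp⟩, by simp, ?_⟩
    · intro W hW; exact (Finset.mem_filter.1 hW).2
    · simpa using hbig
  obtain ⟨R, hR, hmax⟩ := Finset.exists_max_image (Finset.univ.filter P) Finset.card
    ⟨∅, Finset.mem_filter.2 ⟨Finset.mem_univ _, hP0⟩⟩
  obtain ⟨𝒲, AA, BB, h, h0, hc, hconst, hcnt⟩ := (Finset.mem_filter.1 hR).2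
  have hcr : ∀ Q : Finset (Fin m), (rowsOf Q : Finset (Fin m × Fin ℓ)).card = Q.card * ℓ := by
    intro Q; simp [rowsOf]
  have hWle : (𝒲.card : ℝ) ≤ A ^ (Rᶜ.card * ℓ) := by
    have := const_card 𝒲 (rowsOf Rᶜ) (by
      intro x hx x' hx' p hp
      refine hconst x hx x' hx' p ?_
      by_contra hc
      exact hp (by simp [rowsOf, hc]))
    rw [hcr] at this
    rw [hAdef]; exact_mod_cast this
  have hWpos : (0 : ℝ) < 𝒲.card := by
    by_contra hcon
    have : (𝒲.card : ℝ) = 0 := le_antisymm (not_lt.1 hcon) (by positivity)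
    rw [this, zero_mul] at hcnt
    have : 0 < 2 * A ^ (Rᶜ.card * ℓ) := by positivity
    linarith
  have hne : 𝒲.Nonempty := Finset.card_pos.1 (by exact_mod_cast hWpos)
  have h2 : 2 ≤ h := by
    have h3 : 2 * (𝒲.card : ℝ) ≤ h * 𝒲.card := by rw [mul_comm h]; linarith
    exact le_of_mul_le_mul_right h3 hWpos
  have hex : ∀ W ∈ 𝒲, (AA W).Nonempty ∧ (BB W).Nonempty := by
    intro W hW
    apply mLs_pos
    have := hc.big W hW
    have : (1 : ℝ) ≤ mLs f (AA W) (BB W) := by linarith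
    exact_mod_cast this
  obtain ⟨W0, hW0⟩ := hne
  obtain ⟨⟨a0, ha0⟩, ⟨b0, hb0⟩⟩ := hex W0 hW0
  refine ⟨R, 𝒲, fun W => if hh : W ∈ 𝒲 then (hex W hh).1.some else a0,
    fun W => if hh : W ∈ 𝒲 then (hex W hh).2.some else b0, ⟨W0, hW0⟩, ?_, ?_, ?_⟩
  · intro W hW
    simp only [hW, dif_pos]
    exact ⟨hc.sA W (hex W hW).1.some_mem, hc.sB W (hex W hW).2.some_mem⟩
  · intro i hi W hW W' hW'
    simp only [hW, hW', dif_pos]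
    rintro ⟨h3, h4⟩
    rcases hc.row i hi with h5 | h5
    · rw [h5 W hW _ (hex W hW).1.some_mem] at h3; exact absurd h3 (by decide)
    · rw [h5 W' hW' _ (hex W' hW').2.some_mem] at h4; exact absurd h4 (by decide)
  · intro K hK w
    by_contra hviol
    push Not at hviol
    have hKne : K.Nonempty := by
      rw [Finset.nonempty_iff_ne_empty]; rintro rfl
      rw [fib_empty] at hviol; simp at hviol
    set I := K.image Prod.fst with hI
    have hIne : 0 < I.card := (hKne.image _).card_pos
    have hIK : I.card ≤ K.card := Finset.card_image_le
    have hIR : Disjoint R I := by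
      rw [Finset.disjoint_right]
      intro i hi
      obtain ⟨p, hp, rfl⟩ := Finset.mem_image.1 hi
      have := hK hp
      simp only [rowsOf, Finset.mem_product, Finset.mem_compl] at this
      exact this.1
    have hKI : K ⊆ rowsOf I := by
      intro p hp
      simp only [rowsOf, Finset.mem_product, Finset.mem_univ, and_true]
      exact Finset.mem_image_of_mem _ hp
    set T : Finset (Fin m × Fin ℓ) := rowsOf I \ K with hT
    have hTc : T.card + K.card = I.card * ℓ := by
      rw [hT, Finset.card_sdiff_add_card_eq_card hKI, hcr]
    obtain ⟨α, hα⟩ := pigeon (fib 𝒲 K w) T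
    set 𝒲1 := fib (fib 𝒲 K w) T α with h𝒲1
    have hsub1 : 𝒲1 ⊆ 𝒲 := (Finset.filter_subset _ _).trans (Finset.filter_subset _ _)
    have hc1 : HC f FA FB R 𝒲1 AA BB h := by
      refine ⟨hc.sA, hc.sB, fun W hW => hc.big W (hsub1 hW), fun i hi => ?_⟩
      rcases hc.row i hi with h5 | h5
      · exact Or.inl fun W hW => h5 W (hsub1 hW)
      · exact Or.inr fun W hW => h5 W (hsub1 hW)
    obtain ⟨𝒲2, AA2, BB2, hc2, hsub2, hcard2⟩ := hc1.steps hf I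
    have hcard2' : (𝒲1.card : ℝ) ≤ 2 ^ I.card * 𝒲2.card := by exact_mod_cast hcard2
    have hPR : P (R ∪ I) := by
      refine ⟨𝒲2, AA2, BB2, h / 2 ^ I.card, by positivity, hc2, ?_, ?_⟩
      · intro x hx x' hx' p hp
        have hx1 := hsub2 hx
        have hx1' := hsub2 hx'
        simp only [h𝒲1, fib, Finset.mem_filter] at hx1 hx1'
        rcases Finset.mem_union.1 hp with hp | hp
        · exact hconst x hx1.1.1 x' hx1'.1.1 p hp
        · by_cases hpK : p ∈ K
          · rw [hx1.1.2 p hpK, hx1'.1.2 p hpK]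
          · have : p ∈ T := by simp [hT, rowsOf, hp, hpK]
            rw [hx1.2 p this, hx1'.2 p this]
      · have hcc : Rᶜ.card = (R ∪ I)ᶜ.card + I.card := by
          have h5 := Finset.card_union_of_disjoint hIR
          have h6 := Finset.card_compl_add_card (R ∪ I)
          have h7 := Finset.card_compl_add_card R
          omega
        rw [hcc, add_mul, pow_add] at hcnt
        have h44 : (4 : ℝ) ^ I.card ≤ 4 ^ K.card := pow_le_pow_right₀ (by norm_num) hIK
        have big : 4 ^ I.card * (𝒲.card : ℝ) ≤ 2 ^ I.card * 𝒲2.card * A ^ (I.card * ℓ) := by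
          calc _ ≤ 4 ^ K.card * (𝒲.card : ℝ) := by gcongr
            _ ≤ (fib 𝒲 K w).card * A ^ K.card := hviol.le
            _ ≤ (𝒲1.card * A ^ T.card) * A ^ K.card := by gcongr
            _ = 𝒲1.card * A ^ (I.card * ℓ) := by rw [← hTc, pow_add]; ring
            _ ≤ _ := by gcongr
        have e4 : (4 : ℝ) ^ I.card = 2 ^ I.card * 2 ^ I.card := by rw [← mul_pow]; norm_num
        have big2 : 2 ^ I.card * (𝒲.card : ℝ) ≤ 𝒲2.card * A ^ (I.card * ℓ) := by
          refine le_of_mul_le_mul_left ?_ (by positivity : (0 : ℝ) < 2 ^ I.card)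
          rw [e4] at big; linarith
        have : 2 * A ^ ((R ∪ I)ᶜ.card * ℓ) * A ^ (I.card * ℓ) ≤
            𝒲2.card * (h / 2 ^ I.card) * A ^ (I.card * ℓ) := by
          calc _ ≤ (𝒲.card : ℝ) * h := by linarith
            _ = (2 ^ I.card * 𝒲.card) * (h / 2 ^ I.card) := by field_simp
            _ ≤ (𝒲2.card * A ^ (I.card * ℓ)) * (h / 2 ^ I.card) := by gcongr
            _ = _ := by ring
        exact le_of_mul_le_mul_right this (by positivity)
    have := hmax (R ∪ I) (Finset.mem_filter.2 ⟨Finset.mem_univ _, hPR⟩)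
    rw [Finset.card_union_of_disjoint hIR] at this
    omega

end
end MCT

set_option linter.unusedSectionVars false
namespace MCT

section
variable {m ℓ : ℕ} {Λ O : Type} [Fintype Λ]

def srel (f : (Fin m → Bool) → Bool) (S : (Fin ℓ → Bool) → O → Prop) (gd : Λ → Λ → Bool) :
    ((Fin m × Fin ℓ → Λ) × {a // f a = true}) → ((Fin m × Fin ℓ → Λ) × {b // f b = false}) →
    (Fin m × O) → Prop :=
  fun x y o => x.2.1 o.1 = true ∧ y.2.1 o.1 = false ∧
    S (fun j => gd (x.1 (o.1, j)) (y.1 (o.1, j))) o.2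

def SAdv (S : (Fin ℓ → Bool) → O → Prop) (Q : ℕ) (I : Finset (Fin m × Fin ℓ))
    (z : Fin m × Fin ℓ → Bool) : Prop :=
  ∀ i, ¬ ∃ T : DTree (Fin ℓ) O, T.depth + (I.filter (fun p => p.1 = i)).card < Q ∧
    ∀ z', (∀ j, (i, j) ∈ I → z' j = z (i, j)) → S z' (T.run z')

theorem SAdv.ext (S : (Fin ℓ → Bool) → O → Prop) (Q : ℕ) (J0 : Finset (Fin m × Fin ℓ)) :
    AdvExt J0 (SAdv S Q) := by
  rintro I z ha ⟨i, j⟩ - hj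
  by_contra hcon
  push Not at hcon
  have key : ∀ v : Bool, ∃ T : DTree (Fin ℓ) O,
      T.depth + (I.filter (fun p => p.1 = i)).card + 1 < Q ∧
      ∀ z', (∀ j, (i, j) ∈ I → z' j = z (i, j)) → z' j = v → S z' (T.run z') := by
    intro v
    have h1 := hcon (Function.update z (i, j) v) (by
      intro p hp
      rw [Function.update_of_ne]
      rintro rfl; exact hj hp)
    unfold SAdv at h1
    push Not at h1
    obtain ⟨i', T, hT, hz⟩ := h1
    have hii : i' = i := by
      by_contra hne
      refine ha i' ⟨T, ?_, ?_⟩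
      · rw [Finset.filter_insert, if_neg (by simpa using fun h => hne h.symm)] at hT
        exact hT
      · intro z' hz'
        refine hz z' ?_
        intro j' hj'
        rw [Finset.mem_insert] at hj'
        rcases hj' with h | h
        · exact absurd (Prod.ext_iff.1 h).1 hne
        · rw [hz' j' h, Function.update_of_ne]
          intro h; exact absurd (Prod.ext_iff.1 h).1 hne
    subst hii
    refine ⟨T, ?_, ?_⟩
    · rw [Finset.filter_insert, if_pos rfl, Finset.card_insert_of_notMem (by simp [hj])] at hT
      omega
    · intro z' hz' hv
      refine hz z' ?_
      intro j' hj'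
      by_cases hjj : j' = j
      · subst hjj; simp [hv]
      · rw [Finset.mem_insert] at hj'
        rw [Function.update_of_ne (by simpa using hjj)]
        rcases hj' with h | h
        · exact absurd (Prod.ext_iff.1 h).2 hjj
        · exact hz' j' h
  obtain ⟨T0, h0, h0'⟩ := key false
  obtain ⟨T1, h1, h1'⟩ := key true
  refine ha i ⟨DTree.node j T0 T1, ?_, ?_⟩
  · simp only [DTree.depth]; omega
  · intro z' hz'
    simp only [DTree.run]
    cases hv : z' j
    · simpa using h0' z' hz' hv
    · simpa using h1' z' hz' hv

theorem SAdv.final (f : (Fin m → Bool) → Bool) (S : (Fin ℓ → Bool) → O → Prop) (gd : Λ → Λ → Bool)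
    (Q : ℕ) (R : Finset (Fin m)) (𝒲 : Finset (Fin m × Fin ℓ → Λ))
    (a : (Fin m × Fin ℓ → Λ) → {a // f a = true}) (b : (Fin m × Fin ℓ → Λ) → {b // f b = false})
    (hR : ∀ i ∈ R, ∀ W ∈ 𝒲, ∀ W' ∈ 𝒲, ¬ ((a W).1 i = true ∧ (b W').1 i = false)) :
    AdvEnd (fun x y o => srel f S gd (x, a x) (y, b y) o) gd 𝒲 (rowsOf Rᶜ) (SAdv S Q) Q := by
  rintro I z ha hI ⟨i, o⟩
  by_cases hi : i ∈ R
  · refine ⟨z, fun _ _ => rfl, fun x hx y hy _ hs => ?_⟩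
    exact hR i hi x hx y hy ⟨hs.1, hs.2.1⟩
  · have h1 := ha i
    push Not at h1
    obtain ⟨zr, hzr, hS⟩ := h1 (DTree.leaf o) (by
      simp only [DTree.depth]
      have := Finset.card_filter_le I (fun p => p.1 = i)
      omega)
    refine ⟨fun p => if p.1 = i then zr p.2 else z p, ?_, ?_⟩
    · rintro ⟨i', j⟩ hp
      by_cases h : i' = i
      · subst h; simp [hzr j hp]
      · simp [h]
    · intro x hx y hy hz hs
      apply hS
      have : (fun j => gd (x (i, j)) (y (i, j))) = zr := by
        funext j
        have := hz (i, j) (by simp [rowsOf, hi])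
        simpa using this
      have h3 := hs.2.2
      simp only [this] at h3
      exact h3

theorem SAdv.start {S : (Fin ℓ → Bool) → O → Prop} {Q : ℕ}
    (hQ : ∀ T : DTree (Fin ℓ) O, DSolves T S → Q ≤ T.depth) (z : Fin m × Fin ℓ → Bool) :
    SAdv S Q ∅ z := by
  rintro i ⟨T, hT, hz⟩
  have := hQ T (fun z' => hz z' (by simp))
  simp at hT
  omega

theorem base_bound [Nonempty Λ] {f : (Fin m → Bool) → Bool} (hf : Monotone f)
    {S : (Fin ℓ → Bool) → O → Prop} {gd : Λ → Λ → Bool} {Q : ℕ}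
    (hQ : ∀ T : DTree (Fin ℓ) O, DSolves T S → Q ≤ T.depth)
    {b N D : ℝ} {r : ℕ} (hP : Par (Fin m × Fin ℓ) b N D r gd) (hcard : (Fintype.card Λ : ℝ) = b ^ (r + 3))
    {A : Set ((Fin m × Fin ℓ → Λ) × {a // f a = true})}
    {B : Set ((Fin m × Fin ℓ → Λ) × {b // f b = false})} (h : ℝ) (h0 : 0 < h)
    (hbig : 2 * (Fintype.card Λ : ℝ) ^ (m * ℓ) ≤
      (Finset.univ.filter (fun W => h ≤ mLs f {a | (W, a) ∈ A} {b | (W, b) ∈ B} + 1)).card * h)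
    {k : ℕ} (hs : Sol (srel f S gd) A B k) : 1 ≤ k ∧ (b / 8) ^ Q ≤ ((2 * k : ℕ) : ℝ) ^ 24 := by
  obtain ⟨R, 𝒲, a, b', hne, hmem, hR, hfib⟩ := hard_collection hf _ _ h h0 hbig
  have hk : 1 ≤ k := by
    by_contra hk
    have hk0 : k = 0 := by omega
    subst hk0
    obtain ⟨W, hW⟩ := hne
    rcases hs.zero rfl with h1 | h1
    · have := (hmem W hW).1
      simp [h1] at this
    · have := (hmem W hW).2
      simp [h1] at this
  refine ⟨hk, ?_⟩
  obtain ⟨j, hj⟩ : ∃ j, k * 2 ^ j ≤ 3 ^ j ∧ 2 ^ j ≤ (2 * k) ^ 2 := by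
    have h1 : k ≤ 2 ^ Nat.clog 2 k := Nat.le_pow_clog (by norm_num) k
    have h2 : 2 ^ Nat.clog 2 k ≤ 2 * k := by
      by_cases hk1 : k = 1
      · subst hk1; simp
      · have h3 := Nat.pow_pred_clog_lt_self (b := 2) (by norm_num) (x := k) (by omega)
        have h4 : 0 < Nat.clog 2 k := Nat.clog_pos (by norm_num) (by omega)
        obtain ⟨c, hc⟩ : ∃ c, Nat.clog 2 k = c + 1 := ⟨Nat.clog 2 k - 1, by omega⟩
        rw [hc] at h3 ⊢
        simp at h3
        rw [pow_succ]; omega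
    set c := Nat.clog 2 k
    refine ⟨2 * c, ?_, ?_⟩
    · calc k * 2 ^ (2 * c) ≤ 2 ^ c * 2 ^ (2 * c) := Nat.mul_le_mul_right _ h1
        _ = 8 ^ c := by rw [pow_mul, ← mul_pow]; norm_num
        _ ≤ 9 ^ c := Nat.pow_le_pow_left (by norm_num) c
        _ = 3 ^ (2 * c) := by rw [pow_mul]; norm_num
    · rw [mul_comm 2 c, pow_mul]
      exact Nat.pow_le_pow_left h2 2
  have hd := (hs.balance j hj.1).comap (fun W => (W, a W)) (fun W => (W, b' W))
  have := lifting hP (SAdv.ext S Q (rowsOf Rᶜ)) (SAdv.final f S gd Q R 𝒲 a b' hR) hne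
    (fun _ => false) (SAdv.start hQ _) (by
      intro K hK w
      have := hfib K hK w
      rw [hcard, ← pow_mul] at this
      exact this) hd (fun W hW => (hmem W hW).1) (fun W hW => (hmem W hW).2)
  refine this.trans ?_
  calc (2 : ℝ) ^ (6 * (2 * j)) = (((2 ^ j : ℕ) : ℝ)) ^ 12 := by push_cast; rw [← pow_mul]; congr 1; ring
    _ ≤ (((2 * k) ^ 2 : ℕ) : ℝ) ^ 12 := pow_le_pow_left₀ (by positivity) (by exact_mod_cast hj.2) 12
    _ = _ := by push_cast; rw [← pow_mul]

end
end MCT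

set_option linter.unusedSectionVars false
namespace MCT

section
variable {m ℓ : ℕ} {Λ O : Type} [Fintype Λ]

theorem harmonic_arg {α : Type} [Fintype α] [Nonempty α] (v : α → ℕ) (hm : 1 ≤ m)
    (hv : ∀ w, v w ≤ 2 ^ m * 2 ^ m)
    (hsum : 6 * (m : ℝ) * Fintype.card α ≤ ∑ w, (v w : ℝ)) :
    ∃ h : ℝ, 0 < h ∧ 2 * (Fintype.card α : ℝ) ≤ (Finset.univ.filter (fun w => h ≤ v w + 1)).card * h := by
  by_contra hcon
  push Not at hcon
  set M := 2 ^ m * 2 ^ m with hM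
  set T := (Fintype.card α : ℝ) with hT
  have hT0 : 0 < T := by rw [hT]; exact_mod_cast Fintype.card_pos
  have h1 : ∑ w, (v w : ℝ) = ∑ i ∈ Finset.range M, ((Finset.univ.filter (fun w => i + 1 ≤ v w)).card : ℝ) := by
    have : ∀ w, (v w : ℝ) = ∑ i ∈ Finset.range M, if i + 1 ≤ v w then (1 : ℝ) else 0 := by
      intro w
      rw [← Finset.sum_filter, Finset.sum_const, nsmul_eq_mul, mul_one]
      have : (Finset.range M).filter (fun i => i + 1 ≤ v w) = Finset.range (v w) := by
        ext i
        have := hv w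
        simp only [Finset.mem_filter, Finset.mem_range]
        omega
      rw [this, Finset.card_range]
    rw [Finset.sum_congr rfl fun w _ => this w, Finset.sum_comm]
    refine Finset.sum_congr rfl fun i _ => ?_
    rw [← Finset.sum_filter, Finset.sum_const, nsmul_eq_mul, mul_one]
  have h2 : ∀ i ∈ Finset.range M, ((Finset.univ.filter (fun w => i + 1 ≤ v w)).card : ℝ) ≤
      2 * T * (((i + 1 : ℕ) : ℝ) + 1)⁻¹ := by
    intro i _
    have h3 := hcon (((i + 1 : ℕ) : ℝ) + 1) (by positivity)
    rw [← div_eq_mul_inv, le_div_iff₀ (by positivity)]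
    refine le_trans ?_ h3.le
    gcongr with w
    intro h
    exact_mod_cast Nat.succ_le_succ h
  have h4 : ∑ i ∈ Finset.range M, (((i + 1 : ℕ) : ℝ) + 1)⁻¹ ≤ Real.log ((M + 1 : ℕ) : ℝ) := by
    have h5 := harmonic_le_one_add_log (M + 1)
    have h6 : ((harmonic (M + 1) : ℚ) : ℝ) = ∑ i ∈ Finset.range M, (((i + 1 : ℕ) : ℝ) + 1)⁻¹ + 1 := by
      rw [harmonic, Finset.sum_range_succ']
      push_cast
      simp
    linarith
  have h7 : Real.log ((M + 1 : ℕ) : ℝ) ≤ 3 * m * Real.log 2 := by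
    have : ((M + 1 : ℕ) : ℝ) ≤ 2 ^ (3 * m) := by
      have : M + 1 ≤ 2 ^ (3 * m) := by
        have e : 2 ^ (3 * m) = M * 2 ^ m := by rw [hM]; ring
        have h8 : 2 ≤ 2 ^ m := by calc 2 = 2 ^ 1 := rfl
                                    _ ≤ 2 ^ m := Nat.pow_le_pow_right (by norm_num) hm
        have h9 : 1 ≤ M := Nat.one_le_iff_ne_zero.2 (by positivity)
        rw [e]
        nlinarith
      exact_mod_cast this
    calc _ ≤ Real.log (2 ^ (3 * m)) := Real.log_le_log (by positivity) this
      _ = _ := by rw [Real.log_pow]; push_cast; ring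
  have h10 : Real.log 2 < 1 := by have := Real.log_two_lt_d9; linarith
  have h11 := Finset.sum_le_sum h2
  rw [← h1, ← Finset.mul_sum] at h11
  have hm' : (1 : ℝ) ≤ m := by exact_mod_cast hm
  have h12 : ∑ i ∈ Finset.range M, (((i + 1 : ℕ) : ℝ) + 1)⁻¹ < 3 * m := by nlinarith
  nlinarith

noncomputable def gam (f : (Fin m → Bool) → Bool) (A : Set ((Fin m × Fin ℓ → Λ) × {a // f a = true}))
    (B : Set ((Fin m × Fin ℓ → Λ) × {b // f b = false})) : ℝ :=
  (∑ W : Fin m × Fin ℓ → Λ, (mLs f {a | (W, a) ∈ A} {b | (W, b) ∈ B} : ℝ)) /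
    Fintype.card (Fin m × Fin ℓ → Λ)

theorem main_bound [Nonempty Λ] {f : (Fin m → Bool) → Bool} (hf : Monotone f) (hm : 1 ≤ m)
    {S : (Fin ℓ → Bool) → O → Prop} {gd : Λ → Λ → Bool} {Q : ℕ}
    (hQ : ∀ T : DTree (Fin ℓ) O, DSolves T S → Q ≤ T.depth)
    {b N D : ℝ} {r : ℕ} (hP : Par (Fin m × Fin ℓ) b N D r gd) (hcard : (Fintype.card Λ : ℝ) = b ^ (r + 3))
    {K : ℝ} (hK : 0 < K) (hKb : (2 * K) ^ 24 ≤ (b / 8) ^ Q)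
    (hL : 1 ≤ mLs f Set.univ Set.univ)
    {k : ℕ} (hs : Sol (srel f S gd) Set.univ Set.univ k) :
    K * mLs f Set.univ Set.univ ≤ 36 * m * k := by
  have hm' : (1 : ℝ) ≤ m := by exact_mod_cast hm
  have hT0 : (0 : ℝ) < Fintype.card (Fin m × Fin ℓ → Λ) := by exact_mod_cast Fintype.card_pos
  have hTe : (Fintype.card (Fin m × Fin ℓ → Λ) : ℝ) = (Fintype.card Λ : ℝ) ^ (m * ℓ) := by
    simp
  have hkk : ∀ k : ℕ, (b / 8) ^ Q ≤ ((2 * k : ℕ) : ℝ) ^ 24 → K ≤ k := by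
    intro k h
    have h1 := hKb.trans h
    have h2 := le_of_pow_le_pow_left₀ (by norm_num) (by positivity) h1
    push_cast at h2
    linarith
  have gbase : ∀ A B k, Sol (srel f S gd) A B k → 6 * (m : ℝ) ≤ gam f A B → K ≤ k := by
    intro A B k hs hg
    unfold gam at hg
    rw [le_div_iff₀ hT0] at hg
    obtain ⟨h, h0, hb⟩ := harmonic_arg (fun W => mLs f {a | (W, a) ∈ A} {b | (W, b) ∈ B}) hm
      (fun W => mLs_le (sol_card hf _ _)) hg
    rw [hTe] at hb
    exact hkk k (base_bound hf hQ hP hcard h h0 hb hs).2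
  by_cases hc : 6 * (m : ℝ) ≤ mLs f Set.univ Set.univ
  · have hgu : gam f (Set.univ : Set ((Fin m × Fin ℓ → Λ) × {a // f a = true})) Set.univ =
        mLs f Set.univ Set.univ := by
      unfold gam
      rw [div_eq_iff hT0.ne']
      simp [mul_comm]
    have := Sol.caterpillar (rel := srel f S gd) (gam f) (6 * m) K (by linarith) hK ?_ ?_ ?_ ?_ gbase k _ _ hs
      (by rw [hgu]; exact hc)
    · rw [hgu] at this
      nlinarith
    · intro A A' B h
      unfold gam
      gcongr with W
      exact_mod_cast mLs_mono hf (fun a ha => h ha) subset_rfl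
    · intro A A0 A1 B h
      unfold gam
      rw [← add_div, ← Finset.sum_add_distrib]
      gcongr with W
      exact_mod_cast mLs_subA hf (fun a ha => h ha)
    · intro A B B0 B1 h
      unfold gam
      rw [← add_div, ← Finset.sum_add_distrib]
      gcongr with W
      exact_mod_cast mLs_subB hf (fun a ha => h ha)
    · intro A B h
      unfold gam
      rw [div_le_one hT0]
      have : ∀ W : Fin m × Fin ℓ → Λ, (mLs f {a | (W, a) ∈ A} {b | (W, b) ∈ B} : ℝ) ≤ 1 := by
        intro W
        have : mLs f {a | (W, a) ∈ A} {b | (W, b) ∈ B} ≤ 1 := by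
          apply mLs_le
          rcases h with h | h | ⟨o, h⟩
          · exact Sol.empA (by simp [h])
          · exact Sol.empB (by simp [h])
          · exact Sol.leaf (k := 0) o.1 fun a ha b hb => ⟨(h _ ha _ hb).1, (h _ ha _ hb).2.1⟩
        exact_mod_cast this
      calc _ ≤ ∑ W : Fin m × Fin ℓ → Λ, (1 : ℝ) := Finset.sum_le_sum fun W _ => this W
        _ = _ := by simp
  · push Not at hc
    have h1 : K ≤ k := by
      refine hkk k (base_bound hf hQ hP hcard 2 (by norm_num) ?_ hs).2
      have : (Finset.univ.filter (fun W : Fin m × Fin ℓ → Λ => (2 : ℝ) ≤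
        mLs f {a | (W, a) ∈ (Set.univ : Set ((Fin m × Fin ℓ → Λ) × {a // f a = true}))}
          {b | (W, b) ∈ (Set.univ : Set ((Fin m × Fin ℓ → Λ) × {b // f b = false}))} + 1)) = Finset.univ := by
        rw [Finset.filter_true_of_mem]
        intro W _
        have : (1 : ℝ) ≤ mLs f Set.univ Set.univ := by exact_mod_cast hL
        simp only [Set.mem_univ, Set.ofPred_true]
        linarith
      rw [this, Finset.card_univ, hTe]
      linarith
    have h2 : (0 : ℝ) ≤ mLs f Set.univ Set.univ := by positivity
    nlinarith

end
end MCT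

set_option linter.unusedSectionVars false
namespace MCT

section
variable {X Y O : Type} {rel : X → Y → O → Prop}

theorem Sol.of_protocol (p : Protocol X Y O) : ∀ (A : Set X) (B : Set Y),
    (∀ x ∈ A, ∀ y ∈ B, rel x y (p.run x y)) → Sol rel A B p.leaves := by
  induction p with
  | leaf o => intro A B h; exact Sol.leaf (k := 0) o h
  | nodeA q p0 p1 ih0 ih1 =>
    intro A B h
    refine Sol.splitA (A0 := A ∩ {x | q x = false}) (A1 := A ∩ {x | q x = true}) ?_
      (ih0 _ _ ?_) (ih1 _ _ ?_)
    · intro x hx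
      cases hq : q x
      · exact Or.inl ⟨hx, hq⟩
      · exact Or.inr ⟨hx, hq⟩
    · rintro x ⟨hx, hq⟩ y hy
      have := h x hx y hy
      simp only [Set.mem_ofPred_eq] at hq
      simpa [Protocol.run, hq] using this
    · rintro x ⟨hx, hq⟩ y hy
      have := h x hx y hy
      simp only [Set.mem_ofPred_eq] at hq
      simpa [Protocol.run, hq] using this
  | nodeB q p0 p1 ih0 ih1 =>
    intro A B h
    refine Sol.splitB (B0 := B ∩ {x | q x = false}) (B1 := B ∩ {x | q x = true}) ?_
      (ih0 _ _ ?_) (ih1 _ _ ?_)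
    · intro x hx
      cases hq : q x
      · exact Or.inl ⟨hx, hq⟩
      · exact Or.inr ⟨hx, hq⟩
    · rintro x hx y ⟨hy, hq⟩
      have := h x hx y hy
      simp only [Set.mem_ofPred_eq] at hq
      simpa [Protocol.run, hq] using this
    · rintro x hx y ⟨hy, hq⟩
      have := h x hx y hy
      simp only [Set.mem_ofPred_eq] at hq
      simpa [Protocol.run, hq] using this

theorem Sol.to_protocol {A : Set X} {B : Set Y} {k : ℕ} (h : Sol rel A B k) :
    A = ∅ ∨ B = ∅ ∨ ∃ p : Protocol X Y O, p.leaves ≤ k ∧ ∀ x ∈ A, ∀ y ∈ B, rel x y (p.run x y) := by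
  induction h with
  | empA h => exact Or.inl h
  | empB h => exact Or.inr (Or.inl h)
  | leaf o h => exact Or.inr (Or.inr ⟨Protocol.leaf o, by simp [Protocol.leaves], h⟩)
  | @splitA A A0 A1 B k l hc _ _ ih0 ih1 =>
    rcases ih0 with h | h | ⟨p0, h0, h0'⟩
    · subst h
      rw [Set.empty_union] at hc
      rcases ih1 with h | h | ⟨p1, h1, h1'⟩
      · exact Or.inl (Set.subset_eq_empty hc h)
      · exact Or.inr (Or.inl h)
      · exact Or.inr (Or.inr ⟨p1, by omega, fun x hx => h1' x (hc hx)⟩)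
    · exact Or.inr (Or.inl h)
    · rcases ih1 with h | h | ⟨p1, h1, h1'⟩
      · subst h
        rw [Set.union_empty] at hc
        exact Or.inr (Or.inr ⟨p0, by omega, fun x hx => h0' x (hc hx)⟩)
      · exact Or.inr (Or.inl h)
      · refine Or.inr (Or.inr ⟨Protocol.nodeA (fun x => decide (x ∈ A1)) p0 p1, ?_, ?_⟩)
        · simp only [Protocol.leaves]; omega
        · intro x hx y hy
          simp only [Protocol.run]
          by_cases hx1 : x ∈ A1
          · simpa [hx1] using h1' x hx1 y hy
          · simpa [hx1] using h0' x ((hc hx).resolve_right hx1) y hy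
  | @splitB A B B0 B1 k l hc _ _ ih0 ih1 =>
    rcases ih0 with h | h | ⟨p0, h0, h0'⟩
    · exact Or.inl h
    · subst h
      rw [Set.empty_union] at hc
      rcases ih1 with h | h | ⟨p1, h1, h1'⟩
      · exact Or.inl h
      · exact Or.inr (Or.inl (Set.subset_eq_empty hc h))
      · exact Or.inr (Or.inr ⟨p1, by omega, fun x hx y hy => h1' x hx y (hc hy)⟩)
    · rcases ih1 with h | h | ⟨p1, h1, h1'⟩
      · exact Or.inl h
      · subst h
        rw [Set.union_empty] at hc
        exact Or.inr (Or.inr ⟨p0, by omega, fun x hx y hy => h0' x hx y (hc hy)⟩)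
      · refine Or.inr (Or.inr ⟨Protocol.nodeB (fun x => decide (x ∈ B1)) p0 p1, ?_, ?_⟩)
        · simp only [Protocol.leaves]; omega
        · intro x hx y hy
          simp only [Protocol.run]
          by_cases hx1 : y ∈ B1
          · simpa [hx1] using h1' x hx y hx1
          · simpa [hx1] using h0' x hx y ((hc hy).resolve_right hx1)

theorem Lsize_le [Nonempty X] [Nonempty Y] {k : ℕ} (h : Sol rel Set.univ Set.univ k) :
    Lsize rel ≤ k := by
  rcases h.to_protocol with h | h | ⟨p, hp, h⟩
  · exact absurd h (by simp)
  · exact absurd h (by simp)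
  · refine le_trans ?_ hp
    unfold Lsize
    exact Nat.sInf_le ⟨p, fun x y => h x trivial y trivial, rfl⟩

theorem Lsize_sol [Nonempty X] [Nonempty Y] [Fintype X] [Fintype Y] (htot : ∀ x y, ∃ o, rel x y o) :
    Sol rel Set.univ Set.univ (Lsize rel) := by
  have h := Sol.finite htot Finset.univ Finset.univ
  rw [Finset.coe_univ, Finset.coe_univ] at h
  rcases h.to_protocol with h | h | ⟨p, hp, h⟩
  · exact absurd h (by simp)
  · exact absurd h (by simp)
  · obtain ⟨q, hq, hq'⟩ := Nat.sInf_mem (s := {k | ∃ p : Protocol X Y O, Solves p rel ∧ p.leaves = k})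
      ⟨_, p, fun x y => h x trivial y trivial, rfl⟩
    have := Sol.of_protocol (rel := rel) q Set.univ Set.univ (fun x _ y _ => hq x y)
    rw [hq'] at this
    exact this

theorem Sol.pos [Nonempty X] [Nonempty Y] {k : ℕ} (h : Sol rel Set.univ Set.univ k) : 1 ≤ k := by
  by_contra hk
  have : k = 0 := by omega
  rcases h.zero this with h | h
  · exact absurd h (by simp)
  · exact absurd h (by simp)

end

section
variable {m n ℓ : ℕ} {Λ O : Type} {f : (Fin m → Bool) → Bool} {g : (Fin n → Bool) → Bool}

theorem mono_const (hg : Monotone g) (h1 : ∃ x, g x = true) (h0 : ∃ x, g x = false) (v : Bool) :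
    g (fun _ => v) = v := by
  cases v
  · obtain ⟨x, hx⟩ := h0
    have : g (fun _ => false) ≤ g x := hg (fun i => Bool.false_le _)
    rw [hx] at this
    exact Bool.eq_false_of_le_false this
  · obtain ⟨x, hx⟩ := h1
    have : g x ≤ g (fun _ => true) := hg (fun i => Bool.le_true _)
    rw [hx] at this
    exact Bool.eq_true_of_true_le this

theorem diamond_total (hf : Monotone f) (hg : Monotone g)
    (X : {X : Fin m → Fin n → Bool // f (fun i => g (X i)) = true})
    (Y : {Y : Fin m → Fin n → Bool // f (fun i => g (Y i)) = false}) :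
    ∃ o, diamondKW f g X Y o := by
  obtain ⟨i, hi⟩ := mKW_total hf ⟨_, X.2⟩ ⟨_, Y.2⟩
  obtain ⟨j, hj⟩ := mKW_total hg ⟨X.1 i, hi.1⟩ ⟨Y.1 i, hi.2⟩
  exact ⟨(i, j), hj⟩

theorem diamond_to_f (hg : Monotone g) (h1 : ∃ x, g x = true) (h0 : ∃ x, g x = false) {k : ℕ}
    (h : Sol (diamondKW f g) Set.univ Set.univ k) : Sol (mKW f) Set.univ Set.univ k := by
  have hc := mono_const hg h1 h0
  have := h.comap (X' := {a // f a = true}) (Y' := {b // f b = false})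
    (fun a => ⟨fun i _ => a.1 i, by simp only [hc]; exact a.2⟩)
    (fun a => ⟨fun i _ => a.1 i, by simp only [hc]; exact a.2⟩)
  exact this.mapOut (rel' := mKW f) (fun o : Fin m × Fin n => o.1) (fun x y o h => h)

theorem diamond_to_srel (hg : Monotone g) (h1 : ∃ x, g x = true) (h0 : ∃ x, g x = false)
    {S : (Fin ℓ → Bool) → O → Prop} {gd : Λ → Λ → Bool} (hr : Reduces (liftSP S gd) (mKW g)) {k : ℕ}
    (h : Sol (diamondKW f g) Set.univ Set.univ k) : Sol (srel f S gd) Set.univ Set.univ k := by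
  have hc := mono_const hg h1 h0
  obtain ⟨RA, RB, Rout, hR⟩ := hr
  have := h.comap (X' := (Fin m × Fin ℓ → Λ) × {a // f a = true})
    (Y' := (Fin m × Fin ℓ → Λ) × {b // f b = false})
    (fun x => ⟨fun i => if x.2.1 i = true then (RA (fun j => x.1 (i, j))).1 else fun _ => false, by
      refine Eq.trans (congrArg f ?_) x.2.2
      funext i
      beta_reduce
      by_cases hx : x.2.1 i = true
      · rw [if_pos hx, hx]; exact (RA _).2
      · rw [if_neg hx, hc]; simpa using hx⟩)
    (fun x => ⟨fun i => if x.2.1 i = false then (RB (fun j => x.1 (i, j))).1 else fun _ => true, by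
      refine Eq.trans (congrArg f ?_) x.2.2
      funext i
      beta_reduce
      by_cases hx : x.2.1 i = false
      · rw [if_pos hx, hx]; exact (RB _).2
      · rw [if_neg hx, hc]; simpa using hx⟩)
  refine this.mapOut (rel' := srel f S gd) (fun o => (o.1, Rout o.2)) ?_
  rintro x y ⟨i, j⟩ ⟨hx, hy⟩
  simp only at hx hy
  by_cases hxi : x.2.1 i = true
  · by_cases hyi : y.2.1 i = false
    · rw [if_pos hxi] at hx
      rw [if_pos hyi] at hy
      exact ⟨hxi, hyi, hR _ _ j ⟨hx, hy⟩⟩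
    · rw [if_neg hyi] at hy; exact absurd hy (by decide)
  · rw [if_neg hxi] at hx; exact absurd hx (by decide)

end

section
variable {t : ℕ}

theorem disc_cut (gd : (Fin t → Bool) → (Fin t → Bool) → Bool) : Cut gd (disc gd * (2 ^ t * 2 ^ t)) := by
  intro P Q
  have e : ∑ u ∈ P, ∑ v ∈ Q, sg (gd u v) = ((((P ×ˢ Q).filter fun uv => gd uv.1 uv.2 = false).card : ℝ) -
          (((P ×ˢ Q).filter fun uv => gd uv.1 uv.2 = true).card : ℝ)) := by
    rw [← Finset.sum_product', Finset.card_filter, Finset.card_filter]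
    push_cast
    rw [← Finset.sum_sub_distrib]
    refine Finset.sum_congr rfl fun p _ => ?_
    cases gd p.1 p.2 <;> simp [sg]
  rw [← div_le_iff₀ (by positivity)]
  unfold disc
  refine le_csSup ⟨1, ?_⟩ ⟨P, Q, by rw [e]⟩
  rintro _ ⟨A, B, rfl⟩
  rw [div_le_one (by positivity)]
  have hA : ∀ A : Finset (Fin t → Bool), (A.card : ℝ) ≤ 2 ^ t := by
    intro A
    have := Finset.card_le_univ A
    simp at this
    exact_mod_cast this
  have h1 : ∀ v, (((A ×ˢ B).filter fun uv => gd uv.1 uv.2 = v).card : ℝ) ≤ 2 ^ t * 2 ^ t := by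
    intro v
    calc _ ≤ ((A ×ˢ B).card : ℝ) := by exact_mod_cast Finset.card_filter_le _ _
      _ = A.card * B.card := by rw [Finset.card_product]; push_cast; rfl
      _ ≤ _ := mul_le_mul (hA A) (hA B) (by positivity) (by positivity)
  rw [abs_le]
  have h3 := h1 true
  have h4 := h1 false
  constructor
  · have : (0 : ℝ) ≤ (((A ×ˢ B).filter fun uv => gd uv.1 uv.2 = false).card : ℝ) := by positivity
    linarith
  · have : (0 : ℝ) ≤ (((A ×ˢ B).filter fun uv => gd uv.1 uv.2 = true).card : ℝ) := by positivity
    linarith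

theorem disc_nonconst {gd : (Fin t → Bool) → (Fin t → Bool) → Bool} (h : disc gd < 1) (v : Bool) :
    ∃ x y, gd x y = v := by
  by_contra hcon
  push Not at hcon
  have h1 := disc_cut gd Finset.univ Finset.univ
  have h2 : ∀ x y, gd x y = !v := by
    intro x y
    have := hcon x y
    cases h : gd x y <;> cases v <;> simp_all
  simp only [h2, Finset.sum_const, Finset.card_univ, Fintype.card_fun, Fintype.card_bool,
    Fintype.card_fin, nsmul_eq_mul] at h1
  have h3 : |sg (!v)| = 1 := by cases v <;> simp [sg]
  rw [abs_mul, abs_mul, h3] at h1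
  push_cast at h1
  rw [abs_of_nonneg (by positivity), mul_one] at h1
  have : (0 : ℝ) < 2 ^ t * 2 ^ t := by positivity
  nlinarith

end
end MCT

set_option linter.unusedSectionVars false
namespace MCT

theorem mk_par {η : ℝ} {m ℓ t r : ℕ} {gd : (Fin t → Bool) → (Fin t → Bool) → Bool}
    (hs : 16 ≤ η * ((r + 3 : ℕ) : ℝ)) (hn : 1 ≤ m * ℓ)
    (hd : disc gd ≤ (2 : ℝ) ^ (-(η * (t : ℝ)))) {u : ℝ}
    (hu : u = (2 : ℝ) ^ ((t : ℝ) / (4 * ((r + 3 : ℕ) : ℝ))))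
    (hbig : (72 * (m * ℓ : ℕ) : ℝ) ^ (24 + (r + 3)) ≤ u) :
    Par (Fin m × Fin ℓ) (u ^ 4) (4 * (m * ℓ : ℕ)) (2 * ((u ^ 4) ^ r) ^ 2 / (u ^ 4) ^ 2) r gd ∧
      (Fintype.card (Fin t → Bool) : ℝ) = (u ^ 4) ^ (r + 3) := by
  have hn' : (1 : ℝ) ≤ (m * ℓ : ℕ) := by exact_mod_cast hn
  set n : ℝ := ((m * ℓ : ℕ) : ℝ) with hnd
  have hu72 : 72 ≤ u := by
    have : (72 : ℝ) * n ≤ (72 * n) ^ (24 + (r + 3)) := le_self_pow₀ (by linarith) (by omega)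
    linarith
  have hu0 : 0 < u := by linarith
  have hub : u ≤ u ^ 4 := le_self_pow₀ (by linarith) (by omega)
  have hcard : (2 : ℝ) ^ t = (u ^ 4) ^ (r + 3) := by
    rw [hu, ← Real.rpow_natCast, ← Real.rpow_natCast, ← Real.rpow_natCast, ← Real.rpow_mul (by positivity),
      ← Real.rpow_mul (by positivity)]
    congr 1
    have : ((r + 3 : ℕ) : ℝ) ≠ 0 := by positivity
    field_simp
    norm_num
  have hcard' : (Fintype.card (Fin t → Bool) : ℝ) = (u ^ 4) ^ (r + 3) := by
    rw [← hcard]; simp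
  have hd2 : disc gd * (u ^ 4) ^ 16 ≤ 1 := by
    have h1 : (u ^ 4) ^ 16 = (2 : ℝ) ^ ((16 : ℝ) * t / ((r + 3 : ℕ) : ℝ)) := by
      rw [hu, ← Real.rpow_natCast, ← Real.rpow_natCast, ← Real.rpow_mul (by positivity),
        ← Real.rpow_mul (by positivity)]
      congr 1
      have : ((r + 3 : ℕ) : ℝ) ≠ 0 := by positivity
      field_simp
      norm_num
    have h2 : (2 : ℝ) ^ (-(η * (t : ℝ))) ≤ (2 : ℝ) ^ (-((16 : ℝ) * t / ((r + 3 : ℕ) : ℝ))) := by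
      apply Real.rpow_le_rpow_of_exponent_le (by norm_num)
      rw [neg_le_neg_iff, div_le_iff₀ (by positivity)]
      have : (0 : ℝ) ≤ t := by positivity
      nlinarith
    calc _ ≤ (2 : ℝ) ^ (-((16 : ℝ) * t / ((r + 3 : ℕ) : ℝ))) * (u ^ 4) ^ 16 := by
          gcongr; exact hd.trans h2
      _ = 1 := by rw [h1, ← Real.rpow_add (by norm_num)]; simp
  have hbox : ∀ gd' : (Fin t → Bool) → (Fin t → Bool) → Bool, Cut gd' (disc gd * (2 ^ t * 2 ^ t)) →
      Box gd' ≤ (2 * ((u ^ 4) ^ r) ^ 2 / (u ^ 4) ^ 2) ^ 2 := by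
    intro gd' h
    refine h.box.trans ?_
    rw [hcard', hcard]
    set b := u ^ 4
    have hb0 : 0 < b := by positivity
    rw [div_pow, le_div_iff₀ (by positivity)]
    calc _ = 4 * (b ^ r) ^ 4 * (disc gd * b ^ 16) := by ring
      _ ≤ 4 * (b ^ r) ^ 4 * 1 := by gcongr
      _ = _ := by ring
  refine ⟨⟨?_, by linarith, ?_, by linarith, by positivity, ?_, hbox _ (disc_cut gd),
    hbox _ (disc_cut gd).flip⟩, hcard'⟩
  · simp [hnd]
  · refine le_trans ?_ (hbig.trans hub)
    calc 2 * (4 * n) ^ (r + 4) ≤ 2 ^ (r + 4) * (4 * n) ^ (r + 4) := by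
          gcongr
          exact le_self_pow₀ (by norm_num) (by omega)
      _ = (8 * n) ^ (r + 4) := by rw [← mul_pow]; ring
      _ ≤ (72 * n) ^ (r + 4) := by gcongr; norm_num
      _ ≤ (72 * n) ^ (24 + (r + 3)) := pow_le_pow_right₀ (by linarith) (by omega)
  · rw [div_mul_cancel₀ _ (by positivity)]

theorem mct_main {η : ℝ} {m n ℓ t r c : ℕ} {O : Type}
    {f : (Fin m → Bool) → Bool} {g : (Fin n → Bool) → Bool}
    {S : (Fin ℓ → Bool) → O → Prop}
    {gd : (Fin t → Bool) → (Fin t → Bool) → Bool}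
    (hs : 16 ≤ η * ((r + 3 : ℕ) : ℝ)) (hη : 0 < η) (hc : c = 32 * (r + 3) * (24 + (r + 3)))
    (hf : Monotone f) (hf1 : ∃ x, f x = true) (hf0 : ∃ x, f x = false)
    (hg : Monotone g) (hg1 : ∃ x, g x = true) (hg0 : ∃ x, g x = false)
    (hS : ∀ z, ∃ o, S z o)
    (ht : (c : ℝ) * Real.logb 2 ((m : ℝ) * (ℓ : ℝ)) ≤ (t : ℝ))
    (hd : disc gd ≤ (2 : ℝ) ^ (-(η * (t : ℝ))))
    (hr : Reduces (liftSP S gd) (mKW g)) :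
    Real.logb 2 ((Lsize (mKW f) : ℝ)) + (1 / (c : ℝ)) * (Qcomplexity S : ℝ) * (t : ℝ) ≤
          Real.logb 2 ((Lsize (diamondKW f g) : ℝ)) := by
  have hc0 : (0 : ℝ) < c := by rw [hc]; positivity
  have hgc := mono_const hg hg1 hg0
  have : Nonempty {a // f a = true} := let ⟨x, hx⟩ := hf1; ⟨⟨x, hx⟩⟩
  have : Nonempty {a // f a = false} := let ⟨x, hx⟩ := hf0; ⟨⟨x, hx⟩⟩
  have : Nonempty {X : Fin m → Fin n → Bool // f (fun i => g (X i)) = true} :=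
    let ⟨x, hx⟩ := hf1; ⟨⟨fun i _ => x i, by simp only [hgc]; exact hx⟩⟩
  have : Nonempty {X : Fin m → Fin n → Bool // f (fun i => g (X i)) = false} :=
    let ⟨x, hx⟩ := hf0; ⟨⟨fun i _ => x i, by simp only [hgc]; exact hx⟩⟩
  have solD := Lsize_sol (diamond_total hf hg)
  have solF := Lsize_sol (mKW_total hf)
  have posD := solD.pos
  have posF := solF.pos
  have leF := Lsize_le (mLs_sol hf Set.univ Set.univ)
  have solS := diamond_to_srel hg hg1 hg0 hr solD
  set LD := Lsize (diamondKW f g)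
  set LF := Lsize (mKW f)
  set Q := Qcomplexity S with hQdef
  have hQ : ∀ T : DTree (Fin ℓ) O, DSolves T S → Q ≤ T.depth :=
    fun T hT => Nat.sInf_le ⟨T, hT, rfl⟩
  have posD' : (1 : ℝ) ≤ LD := by exact_mod_cast posD
  have posF' : (1 : ℝ) ≤ LF := by exact_mod_cast posF
  by_cases hQt : Q = 0 ∨ t = 0
  · have : (1 / (c : ℝ)) * (Q : ℝ) * (t : ℝ) = 0 := by rcases hQt with h | h <;> simp [h]
    rw [this, add_zero]
    apply Real.logb_le_logb_of_le (by norm_num) (by linarith)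
    exact_mod_cast Lsize_le (diamond_to_f hg hg1 hg0 solD)
  push Not at hQt
  obtain ⟨hQ0, ht0⟩ := hQt
  have hm : 1 ≤ m := by
    by_contra hm
    have : m = 0 := by omega
    subst this
    obtain ⟨x, hx⟩ := hf1
    obtain ⟨y, hy⟩ := hf0
    rw [Subsingleton.elim x y, hy] at hx
    exact absurd hx (by decide)
  have hnoleaf : ∀ o, ∃ z, ¬ S z o := by
    intro o
    by_contra hcon
    push Not at hcon
    have := hQ (DTree.leaf o) hcon
    simp [DTree.depth] at this
    omega
  have hℓ : 1 ≤ ℓ := by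
    by_contra hm
    have : ℓ = 0 := by omega
    subst this
    obtain ⟨o, ho⟩ := hS (fun _ => false)
    obtain ⟨z, hz⟩ := hnoleaf o
    rw [Subsingleton.elim z (fun _ => false)] at hz
    exact hz ho
  have hn : 1 ≤ m * ℓ := Nat.mul_pos hm hℓ
  have hcast : (m : ℝ) * (ℓ : ℝ) = ((m * ℓ : ℕ) : ℝ) := by push_cast; rfl
  rw [hcast] at ht
  have ht0' : (0 : ℝ) < t := by exact_mod_cast Nat.pos_of_ne_zero ht0
  by_cases htc : (c : ℝ) ≤ t
  · -- main case
    have hlog : (c : ℝ) * Real.logb 2 (72 * ((m * ℓ : ℕ) : ℝ)) ≤ 8 * t := by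
      by_cases h1 : m * ℓ = 1
      · rw [h1]
        have : Real.logb 2 (72 * ((1 : ℕ) : ℝ)) ≤ 8 := by
          rw [Real.logb_le_iff_le_rpow (by norm_num) (by norm_num)]
          norm_num
        nlinarith
      · have h2 : (2 : ℝ) ≤ ((m * ℓ : ℕ) : ℝ) := by
          have : 2 ≤ m * ℓ := by omega
          exact_mod_cast this
        set N := ((m * ℓ : ℕ) : ℝ)
        have : Real.logb 2 (72 * N) ≤ 8 * Real.logb 2 N := by
          rw [← Real.logb_rpow_eq_mul_logb_of_pos (by linarith)]
          apply Real.logb_le_logb_of_le (by norm_num) (by linarith)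
          have h3 : (2 : ℝ) ^ 7 ≤ N ^ 7 := by gcongr
          have e : N ^ (8 : ℝ) = N ^ 7 * N := by
            rw [← pow_succ]; exact_mod_cast Real.rpow_natCast N 8
          rw [e]
          nlinarith
        nlinarith
    set u : ℝ := (2 : ℝ) ^ ((t : ℝ) / (4 * ((r + 3 : ℕ) : ℝ))) with hu
    have hn' : (1 : ℝ) ≤ (m * ℓ : ℕ) := by exact_mod_cast hn
    have hbig : (72 * (m * ℓ : ℕ) : ℝ) ^ (24 + (r + 3)) ≤ u := by
      have e : (72 * (m * ℓ : ℕ) : ℝ) = (2 : ℝ) ^ Real.logb 2 (72 * ((m * ℓ : ℕ) : ℝ)) := by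
        rw [Real.rpow_logb (by norm_num) (by norm_num) (by linarith)]
      rw [e, ← Real.rpow_natCast, ← Real.rpow_mul (by positivity), hu]
      apply Real.rpow_le_rpow_of_exponent_le (by norm_num)
      rw [le_div_iff₀ (by positivity)]
      rw [hc] at hlog
      push_cast at hlog ⊢
      nlinarith
    obtain ⟨hP, hcard⟩ := mk_par hs hn hd hu hbig
    set κ := 1 / (c : ℝ) with hκ
    set E : ℝ := (2 : ℝ) ^ (κ * Q * t) with hE
    have hE0 : 0 < E := by positivity
    have hm' : (1 : ℝ) ≤ m := by exact_mod_cast hm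
    have hu72 : 72 ≤ u := by
      have : (72 : ℝ) * (m * ℓ : ℕ) ≤ (72 * (m * ℓ : ℕ) : ℝ) ^ (24 + (r + 3)) :=
        le_self_pow₀ (by linarith) (by omega)
      linarith
    have hE24 : E ^ 24 ≤ u ^ Q := by
      rw [hE, hu, ← Real.rpow_natCast, ← Real.rpow_natCast, ← Real.rpow_mul (by positivity),
        ← Real.rpow_mul (by positivity)]
      apply Real.rpow_le_rpow_of_exponent_le (by norm_num)
      have : κ * 24 ≤ 1 / (4 * ((r + 3 : ℕ) : ℝ)) := by
        rw [hκ, hc, div_mul_eq_mul_div, div_le_div_iff₀ (by positivity) (by positivity)]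
        push_cast
        nlinarith
      calc κ * Q * t * (24 : ℕ) = (κ * 24) * (Q * t) := by push_cast; ring
        _ ≤ (1 / (4 * ((r + 3 : ℕ) : ℝ))) * (Q * t) := by gcongr
        _ = _ := by ring
    have h72 : (72 * (m : ℝ)) ^ 24 ≤ u ^ Q := by
      calc (72 * (m : ℝ)) ^ 24 ≤ (72 * (m * ℓ : ℕ) : ℝ) ^ 24 := by
            gcongr
            have : m ≤ m * ℓ := Nat.le_mul_of_pos_right _ hℓ
            exact_mod_cast this
        _ ≤ (72 * (m * ℓ : ℕ) : ℝ) ^ (24 + (r + 3)) := pow_le_pow_right₀ (by linarith) (by omega)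
        _ ≤ u := hbig
        _ ≤ u ^ Q := le_self_pow₀ (by linarith) hQ0
    have hKb : (2 * (36 * m * E)) ^ 24 ≤ (u ^ 4 / 8) ^ Q := by
      calc (2 * (36 * m * E)) ^ 24 = (72 * (m : ℝ)) ^ 24 * E ^ 24 := by rw [← mul_pow]; ring
        _ ≤ u ^ Q * u ^ Q := by gcongr
        _ = (u * u) ^ Q := by rw [mul_pow]
        _ ≤ _ := by
            gcongr
            rw [le_div_iff₀ (by norm_num)]
            have : 8 ≤ u * u := by nlinarith
            nlinarith
    have := main_bound hf hm hQ hP hcard (K := 36 * m * E) (by positivity) hKb (posF.trans leF) solS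
    have leF' : (LF : ℝ) ≤ mLs f Set.univ Set.univ := by exact_mod_cast leF
    have hfin : E * LF ≤ LD := by
      have h3 : E * mLs f Set.univ Set.univ ≤ LD := by
        refine le_of_mul_le_mul_left ?_ (by positivity : (0 : ℝ) < 36 * m)
        linarith
      exact (mul_le_mul_of_nonneg_left leF' hE0.le).trans h3
    have h4 := Real.logb_le_logb_of_le (b := 2) (by norm_num) (by positivity) hfin
    rw [Real.logb_mul hE0.ne' (by linarith), hE, Real.logb_rpow (by norm_num) (by norm_num)] at h4
    linarith
  · push Not at htc
    have h1 : m * ℓ = 1 := by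
      by_contra h1
      have h2 : (2 : ℝ) ≤ ((m * ℓ : ℕ) : ℝ) := by
        have : 2 ≤ m * ℓ := by omega
        exact_mod_cast this
      have : 1 ≤ Real.logb 2 ((m * ℓ : ℕ) : ℝ) := by
        rw [Real.le_logb_iff_rpow_le (by norm_num) (by linarith)]
        simpa using h2
      nlinarith
    have hm1 : m = 1 := Nat.eq_one_of_dvd_one ⟨ℓ, h1.symm⟩
    have hl1 : ℓ = 1 := Nat.eq_one_of_dvd_one ⟨m, by rw [mul_comm]; exact h1.symm⟩
    subst hm1 hl1
    have hLF : LF ≤ 1 := by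
      apply Lsize_le
      refine Sol.leaf (k := 0) 0 fun x _ y _ => ?_
      obtain ⟨i, hi⟩ := mKW_total hf x y
      rw [Subsingleton.elim i 0] at hi
      exact hi
    have hQ1 : Q ≤ 1 := by
      obtain ⟨o0, h0⟩ := hS (fun _ => false)
      obtain ⟨o1, h1⟩ := hS (fun _ => true)
      have := hQ (DTree.node 0 (DTree.leaf o0) (DTree.leaf o1)) (by
        intro z
        simp only [DTree.run]
        cases hz : z 0
        · have : z = fun _ => false := by funext i; rw [Subsingleton.elim i 0, hz]
          rw [this]; simpa using h0
        · have : z = fun _ => true := by funext i; rw [Subsingleton.elim i 0, hz]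
          rw [this]; simpa using h1)
      simpa [DTree.depth] using this
    have hdisc : disc gd < 1 := by
      refine hd.trans_lt ?_
      apply Real.rpow_lt_one_of_one_lt_of_neg (by norm_num)
      have := mul_pos hη ht0'
      linarith
    have hLD : 2 ≤ LD := by
      by_contra hcon
      rcases solS.one (by omega) with h | h | ⟨o, h⟩
      · exact absurd h (by simp)
      · exact absurd h (by simp)
      · obtain ⟨z, hz⟩ := hnoleaf o.2
        choose x y hxy using disc_nonconst hdisc
        obtain ⟨a⟩ := ‹Nonempty {a // f a = true}›
        obtain ⟨b⟩ := ‹Nonempty {a // f a = false}›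
        have := (h (fun p => x (z p.2), a) trivial (fun p => y (z p.2), b) trivial).2.2
        simp only [hxy] at this
        exact hz this
    have hLF1 : LF = 1 := by omega
    rw [hLF1]
    have h3 : 1 ≤ Real.logb 2 (LD : ℝ) := by
      rw [Real.le_logb_iff_rpow_le (by norm_num) (by linarith)]
      have : (2 : ℝ) ≤ LD := by exact_mod_cast hLD
      simpa using this
    have h4 : 1 / (c : ℝ) * (Q : ℝ) * t ≤ 1 := by
      have : (Q : ℝ) ≤ 1 := by exact_mod_cast hQ1
      calc 1 / (c : ℝ) * (Q : ℝ) * t ≤ 1 / (c : ℝ) * 1 * c := by gcongr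
        _ = 1 := by field_simp
    simp only [Nat.cast_one, Real.logb_one, zero_add]
    linarith

end MCT

theorem monotone_composition_theorem (η : ℝ) (hη : 0 < η) :
    ∃ (c : ℕ) (κ : ℝ), 0 < κ ∧
      ∀ (m n ℓ t : ℕ) (O : Type)
        (f : (Fin m → Bool) → Bool) (g : (Fin n → Bool) → Bool)
        (S : (Fin ℓ → Bool) → O → Prop)
        (gd : (Fin t → Bool) → (Fin t → Bool) → Bool),
        Monotone f → (∃ x, f x = true) → (∃ x, f x = false) →
        Monotone g → (∃ x, g x = true) → (∃ x, g x = false) →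
        (∀ z, ∃ o, S z o) →
        (c : ℝ) * Real.logb 2 ((m : ℝ) * (ℓ : ℝ)) ≤ (t : ℝ) →
        disc gd ≤ (2 : ℝ) ^ (-(η * (t : ℝ))) →
        Reduces (liftSP S gd) (mKW g) →
        Real.logb 2 ((Lsize (mKW f) : ℝ)) + κ * (Qcomplexity S : ℝ) * (t : ℝ) ≤
          Real.logb 2 ((Lsize (diamondKW f g) : ℝ)) := by
  obtain ⟨r, hr⟩ := exists_nat_ge (16 / η)
  refine ⟨32 * (r + 3) * (24 + (r + 3)), 1 / ((32 * (r + 3) * (24 + (r + 3)) : ℕ) : ℝ), by positivity, ?_⟩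
  intro m n ℓ t O f g S gd hf hf1 hf0 hg hg1 hg0 hS ht hd hred
  refine MCT.mct_main (r := r) ?_ hη rfl hf hf1 hf0 hg hg1 hg0 hS ht hd hred
  rw [div_le_iff₀ hη] at hr
  push_cast
  nlinarith
end

section
/- For all non-constant monotone functions f : {0,1}^m → {0,1} and g : {0,1}^n → {0,1}, the communication problem mKW_f ⊛ mKW_g reduces to mKW_f ◇ mKW_g; that is, there exist maps R_A, R_B on the two players' inputs and R_out on outputs forming a reduction. -/
open Classical

/-- For all non-constant monotone `f`, `g`, the communication
problem `mKW_f ⊛ mKW_g` reduces to `mKW_f ◇ mKW_g`. -/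
theorem starKW_reduces_to_diamondKW (m n : ℕ)
    (f : (Fin m → Bool) → Bool) (g : (Fin n → Bool) → Bool)
    (hf : Monotone f) (hf1 : ∃ x, f x = true) (hf0 : ∃ x, f x = false)
    (hg : Monotone g) (hg1 : ∃ x, g x = true) (hg0 : ∃ x, g x = false) :
    Reduces (starKW f g) (diamondKW f g) := by
  have g0 : g (fun _ => false) = false := by
    obtain ⟨x, hx⟩ := hg0
    have h : g (fun _ => false) ≤ g x := hg (fun _ => Bool.false_le _)
    rw [hx] at h
    exact Bool.eq_false_of_le_false h
  have g1 : g (fun _ => true) = true := by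
    obtain ⟨x, hx⟩ := hg1
    have h : g x ≤ g (fun _ => true) := hg (fun _ => Bool.le_true _)
    rw [hx] at h
    exact Bool.eq_true_of_true_le h
  -- Alice zeroes the rows with `a_i = 0`; Bob fills with ones the rows with `b_i = 1`.
  refine ⟨fun X => ⟨fun i j => g (X.val i) && X.val i j, ?_⟩,
    fun Y => ⟨fun i j => g (Y.val i) || Y.val i j, ?_⟩, id, ?_⟩
  · have h : (fun i => g (fun j => g (X.val i) && X.val i j)) = fun i => g (X.val i) := by
      funext i
      cases hi : g (X.val i)
      · simpa using g0
      · simpa using hi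
    rw [h]
    exact X.property
  · have h : (fun i => g (fun j => g (Y.val i) || Y.val i j)) = fun i => g (Y.val i) := by
      funext i
      cases hi : g (Y.val i)
      · simpa using hi
      · simpa using g1
    rw [h]
    exact Y.property
  · rintro X Y e ⟨h1, h2⟩
    simp only [Bool.and_eq_true, Bool.or_eq_false_iff] at h1 h2
    exact ⟨h1.1, h2.1, h1.2, h2.2⟩
end
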